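/- arXiv:0805.4126 — 3 statements merged into one kernel-verified Lean document; each statement's English description precedes it below -/
import Mathlib

section
/- Let r ≥ 2, let 1 ≤ n₁ ≤ n₂ ≤ ⋯ ≤ n_r be integers, set n = n₁ + ⋯ + n_r, and let s ≥ 0. Suppose that either (s ≤ n₁ + 3 and 1 < n₁ < n₂) or (s ≤ n₂ + 2 and (n₁ = 1 or n₁ = n₂)). Then for a generic configuration in ℙⁿ(ℂ) consisting of s points P₁,…,P_s and r linear subspaces Λ₁,…,Λ_r of dimensions n₁−1,…,n_r−1 respectively, there exists a rational normal curve passing through P₁,…,P_s and meeting each Λᵢ in exactly nᵢ distinct points. -/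
noncomputable section

/-- Projective space `ℙⁿ(ℂ)`, the projectivization of `ℂ^{n+1}`. -/
abbrev PP (k : ℕ) := Projectivization ℂ (Fin (k + 1) → ℂ)

/-- The vector of the monomials `s^k t^(n-k)`, used to parametrize rational normal curves. -/
def veron (n : ℕ) (v : Fin 2 → ℂ) : Fin (n + 1) → ℂ :=
  fun k => v 0 ^ (k : ℕ) * v 1 ^ (n - (k : ℕ))

/-- `C ⊆ ℙⁿ` is a rational normal curve if it is the image of `[s:t] ↦ [F₀(s,t):⋯:Fₙ(s,t)]`
for a basis `F₀,…,Fₙ` of the degree-`n` binary forms; such a basis is encoded by an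
invertible matrix of coefficients applied to the monomial vector `veron`. -/
def IsRNC (n : ℕ) (C : Set (PP n)) : Prop :=
  ∃ M : Matrix (Fin (n + 1)) (Fin (n + 1)) ℂ, IsUnit M.det ∧
    C = {P : PP n | ∃ v : Fin 2 → ℂ, v ≠ 0 ∧ ∃ c : ℂ, c ≠ 0 ∧
      P.rep = c • M.mulVec (veron n v)}

/-- The linear subspace of `ℙⁿ` given as the projectivization of the column span of a matrix. -/
def projSet {n m : ℕ} (A : Matrix (Fin (n + 1)) (Fin m) ℂ) : Set (PP n) :=
  {P : PP n | P.rep ∈ Submodule.span ℂ (Set.range fun j => fun r => A r j)}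

/-- A property `Q` of configurations of `s` points (rank-one `(n+1)×1` matrices) and `r`
linear subspaces of dimensions `nv j - 1` (rank-`(nv j)` matrices of size `(n+1)×(nv j)`)
holds generically: there is a nonzero polynomial in the matrix entries such that `Q`
holds at every full-rank tuple where the polynomial does not vanish. -/
def GenHoldsPtsSpaces (n s r : ℕ) (nv : Fin r → ℕ)
    (Q : (Fin s → Matrix (Fin (n + 1)) (Fin 1) ℂ) →
         ((j : Fin r) → Matrix (Fin (n + 1)) (Fin (nv j)) ℂ) → Prop) : Prop :=
  ∃ F : MvPolynomial
      ((Fin s × Fin (n + 1) × Fin 1) ⊕ ((j : Fin r) × (Fin (n + 1) × Fin (nv j)))) ℂ,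
    F ≠ 0 ∧ ∀ P B, (∀ i, (P i).rank = 1) → (∀ j, (B j).rank = nv j) →
      MvPolynomial.eval
        (Sum.elim (fun q => P q.1 q.2.1 q.2.2) (fun q => B q.1 q.2.1 q.2.2)) F ≠ 0 →
      Q P B

/-!
Choose coordinates on `ℙⁿ`, indexed by `Option (Σ j, Fin nⱼ)`, in which `Λⱼ` is spanned by the
coordinate points of the block `j`, so that one coordinate `none` is left over. A curve
`[1 : Nⱼₐ / Dⱼ]`, with denominators cleared, meets `Λⱼ` exactly at the `nⱼ` roots of `Dⱼ`, and it
passes through `Pᵢ` at the parameter `tᵢ` as soon as each of its projections `[Dⱼ : Nⱼₐ]` to `ℙ^nⱼ`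
passes through the projection of `Pᵢ` at `tᵢ`. A curve of degree `m` in `ℙᵐ` can be made to pass
through `m + 2` points at prescribed parameters. Hence one block `j₀` may be used to determine the
parameters, through `nⱼ₀ + 3` points, or arbitrarily many if `nⱼ₀ = 1`, while each of the other
blocks needs at most `nⱼ + 2` points.

All constructions are rational in the entries of the configuration, and the nondegeneracy conditions
are open. They hold for the curve `[1 : 1 / (X - ρ z)]` with distinct poles `ρ z` and points on it.
-/

open Finset Lagrange Matrix Polynomial

section ZariskiGerms

variable {K σ : Type*} [Field K]

/-- The Zariski neighbourhoods of a point of affine space: the sets containing a basic open set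
`{x | q x ≠ 0}` through the point. -/
def zariskiNhds (x₀ : σ → K) : Filter (σ → K) where
  sets := {S | ∃ q : MvPolynomial σ K, MvPolynomial.eval x₀ q ≠ 0 ∧
    ∀ x, MvPolynomial.eval x q ≠ 0 → x ∈ S}
  univ_sets := ⟨1, by simp, by simp⟩
  sets_of_superset := fun ⟨q, hq, hS⟩ hST ↦ ⟨q, hq, fun x hx ↦ hST (hS x hx)⟩
  inter_sets := by
    rintro S T ⟨p, hp, hS⟩ ⟨q, hq, hT⟩
    refine ⟨p * q, by simp [hp, hq], fun x hx ↦ ?_⟩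
    rw [map_mul] at hx
    exact ⟨hS x (left_ne_zero_of_mul hx), hT x (right_ne_zero_of_mul hx)⟩

variable {x₀ : σ → K} {f : (σ → K) → K}

theorem eventually_zariskiNhds_iff {Q : (σ → K) → Prop} :
    (∀ᶠ x in zariskiNhds x₀, Q x) ↔ ∃ q : MvPolynomial σ K,
      MvPolynomial.eval x₀ q ≠ 0 ∧ ∀ x, MvPolynomial.eval x q ≠ 0 → Q x :=
  Iff.rfl

theorem eventually_eval_ne_zero {q : MvPolynomial σ K} (hq : MvPolynomial.eval x₀ q ≠ 0) :
    ∀ᶠ x in zariskiNhds x₀, MvPolynomial.eval x q ≠ 0 :=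
  ⟨q, hq, fun _ hx ↦ hx⟩

theorem pure_le_zariskiNhds : pure x₀ ≤ zariskiNhds x₀ :=
  fun _ ⟨_, hq, hS⟩ ↦ hS x₀ hq

/-- The functions regular at `x₀`, i.e. equal to a quotient of polynomials near `x₀`. Its elements
are globally defined functions rather than germs, so that they can be evaluated at every point. -/
def regularAt (x₀ : σ → K) : Subalgebra K ((σ → K) → K) where
  carrier := {f | ∃ p q : MvPolynomial σ K, MvPolynomial.eval x₀ q ≠ 0 ∧
    ∀ᶠ x in zariskiNhds x₀, f x * MvPolynomial.eval x q = MvPolynomial.eval x p}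
  add_mem' := by
    rintro f g ⟨p, q, hq, hf⟩ ⟨p', q', hq', hg⟩
    refine ⟨p * q' + p' * q, q * q', by simp [hq, hq'], ?_⟩
    filter_upwards [hf, hg] with x hfx hgx
    simp only [Pi.add_apply, map_add, map_mul, ← hfx, ← hgx]
    ring
  mul_mem' := by
    rintro f g ⟨p, q, hq, hf⟩ ⟨p', q', hq', hg⟩
    refine ⟨p * p', q * q', by simp [hq, hq'], ?_⟩
    filter_upwards [hf, hg] with x hfx hgx
    simp only [Pi.mul_apply, map_mul, ← hfx, ← hgx]
    ring
  algebraMap_mem' c := ⟨MvPolynomial.C c, 1, by simp, .of_forall fun x ↦ by simp⟩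

theorem const_mem_regularAt (c : K) : (fun _ ↦ c) ∈ regularAt x₀ :=
  (regularAt x₀).algebraMap_mem c

theorem apply_mem_regularAt (i : σ) : (fun x ↦ x i) ∈ regularAt x₀ :=
  ⟨MvPolynomial.X i, 1, by simp, .of_forall fun x ↦ by simp⟩

theorem eventually_ne_zero_of_mem_regularAt (hf : f ∈ regularAt x₀) (h₀ : f x₀ ≠ 0) :
    ∀ᶠ x in zariskiNhds x₀, f x ≠ 0 := by
  obtain ⟨p, q, hq, hf⟩ := hf
  have hp : MvPolynomial.eval x₀ p ≠ 0 := pure_le_zariskiNhds hf ▸ mul_ne_zero h₀ hq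
  filter_upwards [hf, eventually_eval_ne_zero hp] with x hfx hpx
  exact left_ne_zero_of_mul (hfx ▸ hpx)

theorem inv_mem_regularAt (hf : f ∈ regularAt x₀) (h₀ : f x₀ ≠ 0) :
    (fun x ↦ (f x)⁻¹) ∈ regularAt x₀ := by
  have hne := eventually_ne_zero_of_mem_regularAt hf h₀
  obtain ⟨p, q, hq, hf⟩ := hf
  refine ⟨q, p, pure_le_zariskiNhds hf ▸ mul_ne_zero h₀ hq, ?_⟩
  filter_upwards [hf, hne] with x hfx hx
  rw [← hfx, inv_mul_cancel_left₀ hx]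

theorem sum_mem_regularAt {ι : Type*} {s : Finset ι} {f : ι → (σ → K) → K}
    (h : ∀ i ∈ s, f i ∈ regularAt x₀) : (fun x ↦ ∑ i ∈ s, f i x) ∈ regularAt x₀ := by
  rw [← Finset.sum_fn]
  exact sum_mem h

theorem det_mem_regularAt {ι : Type*} [Fintype ι] [DecidableEq ι] {A : (σ → K) → Matrix ι ι K}
    (hA : ∀ i j, (fun x ↦ A x i j) ∈ regularAt x₀) : (fun x ↦ (A x).det) ∈ regularAt x₀ := by
  simp only [det_apply']
  refine sum_mem_regularAt fun π _ ↦ mul_mem (const_mem_regularAt _) ?_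
  rw [← Finset.prod_fn]
  exact prod_mem fun i _ ↦ hA _ _

theorem matrixInv_mem_regularAt {ι : Type*} [Fintype ι] [DecidableEq ι]
    {A : (σ → K) → Matrix ι ι K} (hA : ∀ i j, (fun x ↦ A x i j) ∈ regularAt x₀)
    (h₀ : (A x₀).det ≠ 0) (i j : ι) : (fun x ↦ (A x)⁻¹ i j) ∈ regularAt x₀ := by
  simp only [Matrix.inv_def, Matrix.smul_apply, Ring.inverse_eq_inv', smul_eq_mul,
    Matrix.adjugate_apply]
  refine mul_mem (inv_mem_regularAt (det_mem_regularAt hA) h₀) (det_mem_regularAt fun k l ↦ ?_)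
  by_cases hk : k = j
  · subst hk
    simpa using const_mem_regularAt _
  · simpa [Matrix.updateRow_ne hk] using hA k l

theorem mulVec_mem_regularAt {ι κ : Type*} [Fintype κ] {A : (σ → K) → Matrix ι κ K}
    {v : (σ → K) → κ → K} (hA : ∀ i j, (fun x ↦ A x i j) ∈ regularAt x₀)
    (hv : ∀ j, (fun x ↦ v x j) ∈ regularAt x₀) (i : ι) :
    (fun x ↦ (A x *ᵥ v x) i) ∈ regularAt x₀ :=
  sum_mem_regularAt fun j _ ↦ mul_mem (hA i j) (hv j)

/-- The polynomial-valued functions whose coefficients are regular at `x₀`. -/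
def regularPolyAt (x₀ : σ → K) : Subalgebra K ((σ → K) → K[X]) where
  carrier := {P | ∀ e, (fun x ↦ (P x).coeff e) ∈ regularAt x₀}
  add_mem' hP hQ e := by
    simp only [Pi.add_apply, coeff_add]
    exact add_mem (hP e) (hQ e)
  mul_mem' hP hQ e := by
    simp only [Pi.mul_apply, coeff_mul]
    exact sum_mem_regularAt fun i _ ↦ mul_mem (hP _) (hQ _)
  algebraMap_mem' _ _ := const_mem_regularAt _

variable {P : (σ → K) → K[X]}

theorem const_mem_regularPolyAt (p : K[X]) : (fun _ ↦ p) ∈ regularPolyAt x₀ :=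
  fun _ ↦ const_mem_regularAt _

theorem C_mem_regularPolyAt (hf : f ∈ regularAt x₀) : (fun x ↦ C (f x)) ∈ regularPolyAt x₀ := by
  intro e
  by_cases he : e = 0
  · simpa [he] using hf
  · simpa [coeff_C, he] using const_mem_regularAt 0

theorem nodal_mem_regularPolyAt {ι : Type*} (s : Finset ι) {t : ι → (σ → K) → K}
    (ht : ∀ i, t i ∈ regularAt x₀) : (fun x ↦ nodal s (t · x)) ∈ regularPolyAt x₀ := by
  simp only [nodal_eq]
  rw [← Finset.prod_fn]
  exact prod_mem fun i _ ↦ sub_mem (const_mem_regularPolyAt X) (C_mem_regularPolyAt (ht i))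

theorem eval_mem_regularAt {n : ℕ} (hP : P ∈ regularPolyAt x₀) (hn : ∀ x, (P x).natDegree ≤ n)
    (hf : f ∈ regularAt x₀) : (fun x ↦ (P x).eval (f x)) ∈ regularAt x₀ := by
  simp only [fun x ↦ eval_eq_sum_range' (Nat.lt_succ_of_le (hn x)) (f x)]
  exact sum_mem_regularAt fun e _ ↦ mul_mem (hP e) (pow_mem hf e)

theorem resultant_mem_regularAt {Q : (σ → K) → K[X]} (hP : P ∈ regularPolyAt x₀)
    (hQ : Q ∈ regularPolyAt x₀) (m n : ℕ) :
    (fun x ↦ resultant (P x) (Q x) m n) ∈ regularAt x₀ := by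
  refine det_mem_regularAt fun i j ↦ ?_
  simp only [sylvester, of_apply]
  refine Fin.addCases (fun j ↦ ?_) (fun j ↦ ?_) j <;>
    simp only [Fin.addCases_left, Fin.addCases_right] <;> split_ifs
  exacts [hQ _, const_mem_regularAt 0, hP _, const_mem_regularAt 0]

theorem derivative_mem_regularPolyAt (hP : P ∈ regularPolyAt x₀) :
    (fun x ↦ derivative (P x)) ∈ regularPolyAt x₀ := by
  intro e
  simp only [coeff_derivative]
  exact mul_mem (hP _) (const_mem_regularAt _)

theorem separable_of_resultant_ne_zero {p : K[X]} {n : ℕ} (hn : 1 ≤ n) (hp : p.natDegree ≤ n)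
    (h : resultant p (derivative p) n (n - 1) ≠ 0) : p.Separable := by
  have hp' : (derivative p).natDegree ≤ n - 1 :=
    (natDegree_derivative_le p).trans (Nat.sub_le_sub_right hp 1)
  obtain ⟨a, b, -, -, hab⟩ := exists_mul_add_mul_eq_C_resultant p (derivative p) hp hp' (by omega)
  set c := resultant p (derivative p) n (n - 1)
  refine ⟨C c⁻¹ * a, C c⁻¹ * b, ?_⟩
  calc C c⁻¹ * a * p + C c⁻¹ * b * derivative p = C c⁻¹ * (p * a + derivative p * b) := by ring
    _ = 1 := by rw [hab, ← C_mul, inv_mul_cancel₀ h, C_1]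

theorem eventually_separable [CharZero K] {n : ℕ} (hn : 1 ≤ n) (hP : P ∈ regularPolyAt x₀)
    (hdeg : ∀ x, (P x).natDegree ≤ n) (h₀ : (P x₀).natDegree = n) (hsep : (P x₀).Separable) :
    ∀ᶠ x in zariskiNhds x₀, (P x).Separable := by
  have hres : resultant (P x₀) (derivative (P x₀)) n (n - 1) ≠ 0 := by
    simpa only [natDegree_derivative, h₀] using resultant_ne_zero _ _ hsep
  have hreg := resultant_mem_regularAt hP (derivative_mem_regularPolyAt hP) n (n - 1)
  filter_upwards [eventually_ne_zero_of_mem_regularAt hreg hres] with x hx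
  exact separable_of_resultant_ne_zero hn (hdeg x) hx

end ZariskiGerms

section Barycentric

variable {ι K : Type*} [Fintype ι] [DecidableEq ι] [Field K]

/-- The polynomial `∑ k, w k * ∏ l ≠ k, (X - t l)`: the numerator of the partial fraction
`∑ k, w k / (X - t k)`. -/
def barycentric (t w : ι → K) : K[X] := ∑ k, C (w k) * nodal (univ.erase k) t

theorem eval_barycentric_node (t w : ι → K) (k : ι) :
    (barycentric t w).eval (t k) = w k * (nodal (univ.erase k) t).eval (t k) := by
  rw [barycentric, eval_finsetSum, Finset.sum_eq_single k]
  · rw [eval_mul, eval_C]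
  · intro l _ hl
    rw [eval_mul, eval_nodal_at_node (mem_erase.2 ⟨hl.symm, mem_univ k⟩), mul_zero]
  · simp

theorem eval_barycentric_of_weights {t w c : ι → K} {z : K} (hw : ∀ k, w k = c k * (z - t k)) :
    (barycentric t w).eval z = (∑ k, c k) * (nodal univ t).eval z := by
  rw [barycentric, eval_finsetSum, sum_mul]
  refine sum_congr rfl fun k _ ↦ ?_
  rw [nodal_eq_mul_nodal_erase (mem_univ k), hw]
  simp only [eval_mul, eval_C, eval_sub, eval_X]
  ring

theorem natDegree_barycentric_le (t w : ι → K) :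
    (barycentric t w).natDegree ≤ Fintype.card ι - 1 := by
  refine natDegree_sum_le_of_forall_le _ _ fun k _ ↦ (natDegree_C_mul_le _ _).trans ?_
  rw [natDegree_nodal, card_erase_of_mem (mem_univ k), card_univ]

theorem barycentric_nodalWeight {t : ι → K} (ht : Function.Injective t) {f : K[X]}
    (hf : f.degree < Fintype.card ι) :
    barycentric t (fun k ↦ nodalWeight univ t k * f.eval (t k)) = f := by
  conv_rhs => rw [eq_interpolate (s := univ) (f := f) ht.injOn (by rwa [card_univ]),
    interpolate_eq_nodalWeight_mul_nodal_div_X_sub_C]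
  refine sum_congr rfl fun k _ ↦ ?_
  rw [nodal_erase_eq_nodal_div (mem_univ k), C_mul]
  ring

/-- The curve `[1 : 1 / (X - ρ a)]` with simple poles `ρ a`, with denominators cleared. -/
def poleCurve (ρ : ι → K) : Option ι → K[X]
  | none => nodal univ ρ
  | some a => nodal (univ.erase a) ρ

theorem natDegree_poleCurve_le (ρ : ι → K) (o : Option ι) :
    (poleCurve ρ o).natDegree ≤ Fintype.card ι := by
  cases o with
  | none => simp [poleCurve, natDegree_nodal]
  | some a => simp [poleCurve, natDegree_nodal, card_erase_of_mem]

theorem linearIndependent_poleCurve {ρ : ι → K} (hρ : Function.Injective ρ) :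
    LinearIndependent K (poleCurve ρ) := by
  rw [Fintype.linearIndependent_iff]
  intro c hc
  have hsome (a : ι) : c (some a) = 0 := by
    have h := congrArg (eval (ρ a)) hc
    rw [Fintype.sum_option, eval_add, eval_finsetSum, Finset.sum_eq_single a] at h
    · have hne : eval (ρ a) (nodal (univ.erase a) ρ) ≠ 0 :=
        eval_nodal_not_at_node fun b hb ↦ hρ.ne (ne_of_mem_erase hb).symm
      simpa [poleCurve, eval_nodal_at_node, hne] using h
    · intro b _ hb
      simp [poleCurve, eval_nodal_at_node, hb.symm]
    · simp
  refine Option.rec ?_ hsome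
  simpa [Fintype.sum_option, hsome, poleCurve, (nodal_monic (v := ρ)).ne_zero] using hc

end Barycentric

section Frames

variable {K : Type*} [Field K] {m : ℕ}

/-- The matrix whose columns are the first `m + 1` points of a sequence in `ℙᵐ`. Homogeneous
coordinates are indexed by `Option (Fin m)`, with `none` the coordinate shared by all blocks. -/
def pointMatrix (p : ℕ → Option (Fin m) → K) : Matrix (Fin (m + 1)) (Fin (m + 1)) K :=
  of fun l k ↦ p k (finSuccEquiv m l)

/-- The coordinates of the `i`-th point in the basis formed by the first `m + 1` points. -/
def frameCoord (p : ℕ → Option (Fin m) → K) (i : ℕ) : Fin (m + 1) → K :=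
  (pointMatrix p)⁻¹ *ᵥ fun l ↦ p i (finSuccEquiv m l)

variable {p : ℕ → Option (Fin m) → K}

theorem sum_frameCoord_mul (hp : (pointMatrix p).det ≠ 0) (i : ℕ) (o : Option (Fin m)) :
    ∑ k : Fin (m + 1), frameCoord p i k * p k o = p i o := by
  have h : pointMatrix p *ᵥ frameCoord p i = fun l ↦ p i (finSuccEquiv m l) := by
    rw [frameCoord, mulVec_mulVec, mul_nonsing_inv _ hp.isUnit, one_mulVec]
  simpa [pointMatrix, mulVec, dotProduct, mul_comm] using congrFun h ((finSuccEquiv m).symm o)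

theorem frameCoord_eq_of_sum_mul (hp : (pointMatrix p).det ≠ 0) {i : ℕ} {c : Fin (m + 1) → K}
    (hc : ∀ o, ∑ k : Fin (m + 1), c k * p k o = p i o) : frameCoord p i = c := by
  have h : pointMatrix p *ᵥ c = fun l ↦ p i (finSuccEquiv m l) := by
    ext l
    simp only [← hc, pointMatrix, mulVec, dotProduct, of_apply, mul_comm]
  rw [frameCoord, ← h, mulVec_mulVec, nonsing_inv_mul _ hp.isUnit, one_mulVec]

/-- The degree `m` curve in `ℙᵐ` passing through the first `m + 1` points `p k` at the parameters
`t k`; such curves depend on the weights `w`. -/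
def frameCurve (t : ℕ → K) (p : ℕ → Option (Fin m) → K) (w : Fin (m + 1) → K) :
    Option (Fin m) → K[X] :=
  fun o ↦ barycentric (fun k : Fin (m + 1) ↦ t k) fun k ↦ w k * p k o

theorem natDegree_frameCurve_le (t : ℕ → K) (p : ℕ → Option (Fin m) → K) (w : Fin (m + 1) → K)
    (o : Option (Fin m)) : (frameCurve t p w o).natDegree ≤ m := by
  simpa [frameCurve] using
    natDegree_barycentric_le (fun k : Fin (m + 1) ↦ t k) fun k ↦ w k * p k o

theorem eval_frameCurve_node (t : ℕ → K) (p : ℕ → Option (Fin m) → K) (w : Fin (m + 1) → K)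
    (k : Fin (m + 1)) (o : Option (Fin m)) :
    (frameCurve t p w o).eval (t k) =
      w k * (nodal (univ.erase k) fun l : Fin (m + 1) ↦ t l).eval (t k) * p k o := by
  rw [frameCurve, eval_barycentric_node (fun k : Fin (m + 1) ↦ t k), mul_right_comm]

theorem eval_frameCurve_of_weights {t : ℕ → K} {w : Fin (m + 1) → K} {i : ℕ} {μ : K}
    (hp : (pointMatrix p).det ≠ 0) (hw : ∀ k, w k = μ * (frameCoord p i k * (t i - t k)))
    (o : Option (Fin m)) :
    (frameCurve t p w o).eval (t i) =
      μ * (nodal univ fun l : Fin (m + 1) ↦ t l).eval (t i) * p i o := by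
  rw [frameCurve, eval_barycentric_of_weights (c := fun k ↦ μ * (frameCoord p i k * p k o))
    fun k ↦ by rw [hw]; ring, ← mul_sum, sum_frameCoord_mul hp, mul_right_comm]

/-- The points `p i` lie on the nondegenerate curve `E` of degree at most `m` in `ℙᵐ`, with
parameters `τ i`; `lam i` is the factor between `p i` and the coordinates of `E` at `τ i`. -/
structure IsSample (E : Option (Fin m) → K[X]) (τ lam : ℕ → K) (p : ℕ → Option (Fin m) → K) :
    Prop where
  linearIndependent : LinearIndependent K E
  natDegree_le : ∀ o, (E o).natDegree ≤ m
  injective : Function.Injective τ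
  ne_zero : ∀ i, lam i ≠ 0
  apply_eq : ∀ i o, p i o = lam i * (E o).eval (τ i)

namespace IsSample

variable {E : Option (Fin m) → K[X]} {τ lam : ℕ → K} (h : IsSample E τ lam p)

include h

theorem injective_nodes : Function.Injective fun k : Fin (m + 1) ↦ τ k :=
  h.injective.comp Fin.val_injective

theorem degree_lt (o : Option (Fin m)) : (E o).degree < Fintype.card (Fin (m + 1)) := by
  rw [Fintype.card_fin]
  exact (natDegree_le_iff_degree_le.1 (h.natDegree_le o)).trans_lt
    (by exact_mod_cast m.lt_succ_self)

theorem det_pointMatrix_ne_zero : (pointMatrix p).det ≠ 0 := by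
  intro hdet
  obtain ⟨v, hv, hvM⟩ := exists_vecMul_eq_zero_iff.2 hdet
  set f : K[X] := ∑ o, C (v ((finSuccEquiv m).symm o)) * E o
  have hroot (k : Fin (m + 1)) : f.eval (τ k) = 0 := by
    refine (mul_eq_zero.1 (?_ : lam k * f.eval (τ k) = 0)).resolve_left (h.ne_zero k)
    rw [← Pi.zero_apply (M := fun _ ↦ K) k, ← hvM, vecMul, dotProduct,
      ← (finSuccEquiv m).symm.sum_comp, eval_finsetSum, mul_sum]
    refine sum_congr rfl fun o _ ↦ ?_
    simp only [pointMatrix, of_apply, Equiv.apply_symm_apply, h.apply_eq, eval_mul, eval_C]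
    ring
  have hf : f = 0 := by
    refine eq_zero_of_natDegree_lt_card_of_eval_eq_zero f h.injective_nodes hroot ?_
    rw [Fintype.card_fin, Nat.lt_succ_iff]
    exact natDegree_sum_le_of_forall_le _ _ fun o _ ↦
      (natDegree_C_mul_le _ _).trans (h.natDegree_le o)
  have hcoeff := Fintype.linearIndependent_iff.1 h.linearIndependent
    (fun o ↦ v ((finSuccEquiv m).symm o)) (by simpa [f, smul_eq_C_mul] using hf)
  exact hv (funext fun l ↦ by simpa using hcoeff (finSuccEquiv m l))

theorem frameCoord_eq (i : ℕ) (k : Fin (m + 1)) : frameCoord p i k =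
    lam i / lam k * (Lagrange.basis univ (fun l : Fin (m + 1) ↦ τ l) k).eval (τ i) := by
  refine congrFun (frameCoord_eq_of_sum_mul (c := fun k : Fin (m + 1) ↦ lam i / lam k *
    (Lagrange.basis univ (fun l : Fin (m + 1) ↦ τ l) k).eval (τ i))
    h.det_pointMatrix_ne_zero fun o ↦ ?_) k
  rw [h.apply_eq i o, eq_interpolate (s := univ) (f := E o) h.injective_nodes.injOn
    (by simpa using h.degree_lt o), interpolate_apply, eval_finsetSum, mul_sum]
  refine sum_congr rfl fun k _ ↦ ?_
  rw [h.apply_eq, eval_mul, eval_C]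
  field_simp [h.ne_zero k]

/-- The factor by which the weights of the interpolation formula differ from the products
`frameCoord p i k * (τ i - τ k)`. -/
def scale (m : ℕ) (τ lam : ℕ → K) (i : ℕ) : K :=
  lam i * (nodal univ fun l : Fin (m + 1) ↦ τ l).eval (τ i)

theorem frameCoord_mul_sub {i : ℕ} (hi : m < i) (k : Fin (m + 1)) :
    frameCoord p i k * (τ i - τ k) =
      scale m τ lam i * (nodalWeight univ (fun l : Fin (m + 1) ↦ τ l) k / lam k) := by
  have hne (l : Fin (m + 1)) : τ i ≠ τ l := h.injective.ne (by omega)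
  rw [h.frameCoord_eq, eval_basis_not_at_node (mem_univ k) (hne k), scale]
  field_simp [sub_ne_zero.2 (hne k)]

theorem scale_ne_zero {i : ℕ} (hi : m < i) : scale m τ lam i ≠ 0 :=
  mul_ne_zero (h.ne_zero i) (eval_nodal_not_at_node fun l _ ↦ h.injective.ne (by omega))

theorem frameCurve_eq :
    frameCurve τ p (fun k ↦ nodalWeight univ (fun l : Fin (m + 1) ↦ τ l) k / lam k) = E := by
  ext1 o
  conv_rhs => rw [← barycentric_nodalWeight h.injective_nodes (h.degree_lt o)]
  refine congrArg (barycentric _) (funext fun k ↦ ?_)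
  rw [h.apply_eq, ← mul_assoc, div_mul_cancel₀ _ (h.ne_zero k)]

end IsSample

end Frames

section CurveFamilies

variable {K σ : Type*} [Field K] {x₀ : σ → K} {m s : ℕ} {E : Option (Fin m) → K[X]}
  {p : (σ → K) → ℕ → Option (Fin m) → K} {t : (σ → K) → ℕ → K} {τ lam : ℕ → K}

/-- `V x` is a family of curves of degree at most `m` in `ℙᵐ`, regular at `x₀` and specializing
to `E` there, which for `x` near `x₀` passes through `p x i` at the parameter `t x i` for all
`i < s`. The scalar `c` may vanish, in which case all coordinates of the curve vanish as well. -/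
structure IsInterpolatingFamily (x₀ : σ → K) (E : Option (Fin m) → K[X]) (s : ℕ)
    (t : (σ → K) → ℕ → K) (p : (σ → K) → ℕ → Option (Fin m) → K)
    (V : (σ → K) → Option (Fin m) → K[X]) : Prop where
  regular : ∀ o, (V · o) ∈ regularPolyAt x₀
  apply_base : V x₀ = E
  natDegree_le : ∀ x o, (V x o).natDegree ≤ m
  interpolates : ∀ᶠ x in zariskiNhds x₀, ∀ i < s, ∃ c, ∀ o, (V x o).eval (t x i) = c * p x i o

theorem pointMatrix_mem_regularAt (hp : ∀ i o, (p · i o) ∈ regularAt x₀) (l k : Fin (m + 1)) :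
    (fun x ↦ pointMatrix (p x) l k) ∈ regularAt x₀ :=
  hp k (finSuccEquiv m l)

theorem frameCoord_mem_regularAt (hp : ∀ i o, (p · i o) ∈ regularAt x₀)
    (hdet : (pointMatrix (p x₀)).det ≠ 0) (i : ℕ) (k : Fin (m + 1)) :
    (fun x ↦ frameCoord (p x) i k) ∈ regularAt x₀ :=
  mulVec_mem_regularAt (matrixInv_mem_regularAt (pointMatrix_mem_regularAt hp) hdet)
    (fun l ↦ hp i (finSuccEquiv m l)) k

theorem frameCurve_mem_regularPolyAt {w : (σ → K) → Fin (m + 1) → K}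
    (hp : ∀ i o, (p · i o) ∈ regularAt x₀) (ht : ∀ i, (t · i) ∈ regularAt x₀)
    (hw : ∀ k, (w · k) ∈ regularAt x₀) (o : Option (Fin m)) :
    (fun x ↦ frameCurve (t x) (p x) (w x) o) ∈ regularPolyAt x₀ := by
  simp only [frameCurve, barycentric]
  rw [← Finset.sum_fn]
  refine sum_mem fun k _ ↦ mul_mem (C_mem_regularPolyAt (mul_mem (hw k) (hp k o))) ?_
  exact nodal_mem_regularPolyAt (univ.erase k) (t := fun l x ↦ t x l) fun l ↦ ht l

/-- The weights are read off from the point of index `m + 1`; the curve passes through a further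
point exactly when that point yields proportional weights. -/
theorem exists_isInterpolatingFamily_of_proportional (h : IsSample E (t x₀) lam (p x₀))
    (hp : ∀ i o, (p · i o) ∈ regularAt x₀) (ht : ∀ i, (t · i) ∈ regularAt x₀)
    (hprop : ∀ᶠ x in zariskiNhds x₀, ∀ i < s, m < i → ∃ μ, ∀ k : Fin (m + 1),
      frameCoord (p x) (m + 1) k * (t x (m + 1) - t x k) =
        μ * (frameCoord (p x) i k * (t x i - t x k))) :
    ∃ V, IsInterpolatingFamily x₀ E s t p V := by
  have hdet := h.det_pointMatrix_ne_zero
  set η := IsSample.scale m (t x₀) lam (m + 1)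
  have hη : η ≠ 0 := h.scale_ne_zero m.lt_succ_self
  set w : (σ → K) → Fin (m + 1) → K := fun x k ↦
    η⁻¹ * (frameCoord (p x) (m + 1) k * (t x (m + 1) - t x k))
  have hw (k : Fin (m + 1)) : (w · k) ∈ regularAt x₀ :=
    mul_mem (const_mem_regularAt _) (mul_mem (frameCoord_mem_regularAt hp hdet _ _)
      (sub_mem (ht _) (ht _)))
  refine ⟨fun x ↦ frameCurve (t x) (p x) (w x), frameCurve_mem_regularPolyAt hp ht hw, ?_,
    fun x ↦ natDegree_frameCurve_le _ _ _, ?_⟩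
  · rw [← h.frameCurve_eq]
    refine congrArg (frameCurve _ _) (funext fun k ↦ ?_)
    rw [← inv_mul_cancel_left₀ hη (_ / _), ← h.frameCoord_mul_sub m.lt_succ_self]
  have hdet' := eventually_ne_zero_of_mem_regularAt
    (det_mem_regularAt (pointMatrix_mem_regularAt hp)) hdet
  filter_upwards [hprop, hdet'] with x hx hdx i hi
  rcases lt_or_ge m i with hmi | him
  · obtain ⟨μ, hμ⟩ := hx i hi hmi
    exact ⟨_, eval_frameCurve_of_weights hdx (μ := η⁻¹ * μ) fun k ↦ by
      rw [mul_assoc, ← hμ k]⟩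
  · lift i to Fin (m + 1) using Nat.lt_succ_of_le him
    exact ⟨_, eval_frameCurve_node _ _ _ i⟩

theorem exists_isInterpolatingFamily (h : IsSample E (t x₀) lam (p x₀))
    (hp : ∀ i o, (p · i o) ∈ regularAt x₀) (ht : ∀ i, (t · i) ∈ regularAt x₀)
    (hs : s ≤ m + 2) : ∃ V, IsInterpolatingFamily x₀ E s t p V := by
  refine exists_isInterpolatingFamily_of_proportional h hp ht
    (.of_forall fun x i hi hmi ↦ ⟨1, fun k ↦ ?_⟩)
  obtain rfl : i = m + 1 := by omega
  rw [one_mul]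

/-- The parameters at which the first `m + 1` of `m + 3` points must be taken so that the last two
yield proportional weights, the parameters `τ (m + 1)` and `τ (m + 2)` of the latter being given:
`t k` solves `a k * (τ (m + 1) - t k) = μ * (b k * (τ (m + 2) - t k))`, where `a` and `b` are the
frame coordinates of the last two points. The division gives `0` when there is no solution. -/
def balancedParam (τ : ℕ → K) (μ : K) (p : ℕ → Option (Fin m) → K) (i : ℕ) : K :=
  if h : i < m + 1 then
    (μ * frameCoord p (m + 2) ⟨i, h⟩ * τ (m + 2) - frameCoord p (m + 1) ⟨i, h⟩ * τ (m + 1)) /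
      (μ * frameCoord p (m + 2) ⟨i, h⟩ - frameCoord p (m + 1) ⟨i, h⟩)
  else τ i

theorem balancedParam_of_lt (τ : ℕ → K) (μ : K) (p : ℕ → Option (Fin m) → K) {i : ℕ} (hi : m < i) :
    balancedParam τ μ p i = τ i :=
  dif_neg (by omega)

theorem frameCoord_mul_sub_balancedParam {μ : K} {p : ℕ → Option (Fin m) → K} {k : Fin (m + 1)}
    (hk : μ * frameCoord p (m + 2) k - frameCoord p (m + 1) k ≠ 0) :
    frameCoord p (m + 1) k * (τ (m + 1) - balancedParam τ μ p k) =
      μ * (frameCoord p (m + 2) k * (τ (m + 2) - balancedParam τ μ p k)) := by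
  rw [balancedParam, dif_pos k.is_lt, Fin.eta]
  field_simp
  ring

theorem balancedParam_eq {μ t : K} {p : ℕ → Option (Fin m) → K} {k : Fin (m + 1)}
    (hk : μ * frameCoord p (m + 2) k - frameCoord p (m + 1) k ≠ 0)
    (ht : frameCoord p (m + 1) k * (τ (m + 1) - t) =
      μ * (frameCoord p (m + 2) k * (τ (m + 2) - t))) :
    balancedParam τ μ p k = t := by
  rw [balancedParam, dif_pos k.is_lt, Fin.eta, div_eq_iff hk]
  linear_combination -ht

namespace IsSample

/-- The ratio `μ` for which the parameters of a sample are balanced. -/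
def balance (m : ℕ) (τ lam : ℕ → K) : K := scale m τ lam (m + 1) / scale m τ lam (m + 2)

variable {p : ℕ → Option (Fin m) → K}

theorem frameCoord_mul_sub_eq_balance_mul (h : IsSample E τ lam p) (k : Fin (m + 1)) :
    frameCoord p (m + 1) k * (τ (m + 1) - τ k) =
      balance m τ lam * (frameCoord p (m + 2) k * (τ (m + 2) - τ k)) := by
  rw [h.frameCoord_mul_sub (by omega), h.frameCoord_mul_sub (by omega), ← mul_assoc, balance,
    div_mul_cancel₀ _ (h.scale_ne_zero (by omega))]

theorem balance_mul_sub_ne_zero (h : IsSample E τ lam p) (k : Fin (m + 1)) :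
    balance m τ lam * frameCoord p (m + 2) k - frameCoord p (m + 1) k ≠ 0 := by
  have hcoord : frameCoord p (m + 1) k ≠ 0 := by
    refine left_ne_zero_of_mul (b := τ (m + 1) - τ k) ?_
    rw [h.frameCoord_mul_sub (by omega)]
    exact mul_ne_zero (h.scale_ne_zero (by omega)) (div_ne_zero
      (nodalWeight_ne_zero h.injective_nodes.injOn (mem_univ k)) (h.ne_zero k))
  intro hzero
  refine mul_ne_zero hcoord (sub_ne_zero.2 (h.injective.ne (by omega : m + 1 ≠ m + 2))) ?_
  linear_combination h.frameCoord_mul_sub_eq_balance_mul k + (τ (m + 2) - τ k) * hzero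

theorem balancedParam_balance (h : IsSample E τ lam p) :
    balancedParam τ (balance m τ lam) p = τ := by
  ext1 i
  rcases lt_or_ge m i with hi | hi
  · exact balancedParam_of_lt _ _ _ hi
  · lift i to Fin (m + 1) using Nat.lt_succ_of_le hi
    exact balancedParam_eq (h.balance_mul_sub_ne_zero i) (h.frameCoord_mul_sub_eq_balance_mul i)

end IsSample

theorem balancedParam_mem_regularAt {μ : K} (hp : ∀ i o, (p · i o) ∈ regularAt x₀)
    (hdet : (pointMatrix (p x₀)).det ≠ 0)
    (hμ : ∀ k, μ * frameCoord (p x₀) (m + 2) k - frameCoord (p x₀) (m + 1) k ≠ 0) (i : ℕ) :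
    (fun x ↦ balancedParam τ μ (p x) i) ∈ regularAt x₀ := by
  by_cases hi : i < m + 1
  · have ha := frameCoord_mem_regularAt hp hdet (m + 1) ⟨i, hi⟩
    have hb := mul_mem (const_mem_regularAt μ) (frameCoord_mem_regularAt hp hdet (m + 2) ⟨i, hi⟩)
    simp only [balancedParam, dif_pos hi, div_eq_mul_inv]
    exact mul_mem
      (sub_mem (mul_mem hb (const_mem_regularAt _)) (mul_mem ha (const_mem_regularAt _)))
      (inv_mem_regularAt (sub_mem hb ha) (hμ _))
  · simpa only [balancedParam, dif_neg hi] using const_mem_regularAt _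

theorem exists_params_isInterpolatingFamily_of_le (h : IsSample E τ lam (p x₀))
    (hp : ∀ i o, (p · i o) ∈ regularAt x₀) (hs : s ≤ m + 3) :
    ∃ t : (σ → K) → ℕ → K, (∀ i, (t · i) ∈ regularAt x₀) ∧ t x₀ = τ ∧
      ∃ V, IsInterpolatingFamily x₀ E s t p V := by
  have hdet := h.det_pointMatrix_ne_zero
  set μ := IsSample.balance m τ lam
  have ht := balancedParam_mem_regularAt (τ := τ) hp hdet h.balance_mul_sub_ne_zero
  refine ⟨fun x ↦ balancedParam τ μ (p x), ht, h.balancedParam_balance, ?_⟩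
  have hμ : ∀ᶠ x in zariskiNhds x₀, ∀ k,
      μ * frameCoord (p x) (m + 2) k - frameCoord (p x) (m + 1) k ≠ 0 :=
    Filter.eventually_all.2 fun k ↦ eventually_ne_zero_of_mem_regularAt
      (sub_mem (mul_mem (const_mem_regularAt μ) (frameCoord_mem_regularAt hp hdet _ k))
        (frameCoord_mem_regularAt hp hdet _ k)) (h.balance_mul_sub_ne_zero k)
  refine exists_isInterpolatingFamily_of_proportional (lam := lam)
    (by rwa [h.balancedParam_balance]) hp ht ?_
  filter_upwards [hμ] with x hx i hi hmi
  obtain rfl | rfl : i = m + 1 ∨ i = m + 2 := by omega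
  · exact ⟨1, fun k ↦ (one_mul _).symm⟩
  · refine ⟨μ, fun k ↦ ?_⟩
    simp only [balancedParam_of_lt τ μ (p x) hmi, balancedParam_of_lt τ μ (p x) m.lt_succ_self]
    exact frameCoord_mul_sub_balancedParam (hx k)

section Line

variable {E : Option (Fin 1) → K[X]} {p : (σ → K) → ℕ → Option (Fin 1) → K}

/-- The determinant of a parametrized line `E` and a constant point `q` in `ℙ¹`; it vanishes when
`q` is the point at infinity of `E`. -/
def lineDenom (E : Option (Fin 1) → K[X]) (q : Option (Fin 1) → K) : K :=
  (E (some 0)).coeff 1 * q none - (E none).coeff 1 * q (some 0)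

/-- The parameter at which the parametrized line `E` in `ℙ¹` takes the value `[q none : q 0]`,
or `0` if it takes this value at infinity. -/
def lineParam (E : Option (Fin 1) → K[X]) (q : Option (Fin 1) → K) : K :=
  ((E none).coeff 0 * q (some 0) - (E (some 0)).coeff 0 * q none) / lineDenom E q

/-- The coefficient determinant of a parametrized line in `ℙ¹`. -/
def lineDet (E : Option (Fin 1) → K[X]) : K :=
  (E none).coeff 0 * (E (some 0)).coeff 1 - (E (some 0)).coeff 0 * (E none).coeff 1

theorem eval_of_natDegree_le_one {f : K[X]} (hf : f.natDegree ≤ 1) (z : K) :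
    f.eval z = f.coeff 0 + f.coeff 1 * z := by
  rw [eval_eq_sum_range' (Nat.lt_succ_of_le hf), sum_range_succ, sum_range_one, pow_zero, mul_one,
    pow_one]

theorem eval_lineParam (hE : ∀ o, (E o).natDegree ≤ 1) {q : Option (Fin 1) → K}
    (hq : lineDenom E q ≠ 0) (o : Option (Fin 1)) :
    (E o).eval (lineParam E q) = lineDet E / lineDenom E q * q o := by
  rw [eval_of_natDegree_le_one (hE o), lineParam]
  field_simp
  rw [lineDenom, lineDet]
  rcases o with _ | a
  · ring
  · rw [Subsingleton.elim a 0]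
    ring

namespace IsSample

variable {p : ℕ → Option (Fin 1) → K} (h : IsSample E τ lam p)

include h

theorem lineDet_ne_zero : lineDet E ≠ 0 := by
  intro hE
  refine h.det_pointMatrix_ne_zero ((det_fin_two (pointMatrix p)).trans ?_)
  change p 0 none * p 1 (some 0) - p 1 none * p 0 (some 0) = 0
  rw [lineDet] at hE
  simp only [h.apply_eq, eval_of_natDegree_le_one (h.natDegree_le _)]
  linear_combination lam 0 * lam 1 * (τ 1 - τ 0) * hE

theorem lineDenom_ne_zero (i : ℕ) : lineDenom E (p i) ≠ 0 := by
  have hden : lineDenom E (p i) = lam i * lineDet E := by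
    simp only [lineDenom, lineDet, h.apply_eq, eval_of_natDegree_le_one (h.natDegree_le _)]
    ring
  rw [hden]
  exact mul_ne_zero (h.ne_zero i) h.lineDet_ne_zero

theorem lineParam_eq (i : ℕ) : lineParam E (p i) = τ i := by
  rw [lineParam, div_eq_iff (h.lineDenom_ne_zero i)]
  simp only [lineDenom, h.apply_eq, eval_of_natDegree_le_one (h.natDegree_le _)]
  ring

end IsSample

theorem exists_params_isInterpolatingFamily_line (h : IsSample E τ lam (p x₀))
    (hp : ∀ i o, (p · i o) ∈ regularAt x₀) (s : ℕ) :
    ∃ t : (σ → K) → ℕ → K, (∀ i, (t · i) ∈ regularAt x₀) ∧ t x₀ = τ ∧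
      ∃ V, IsInterpolatingFamily x₀ E s t p V := by
  have hden (i : ℕ) : (fun x ↦ lineDenom E (p x i)) ∈ regularAt x₀ :=
    sub_mem (mul_mem (const_mem_regularAt _) (hp i _)) (mul_mem (const_mem_regularAt _) (hp i _))
  refine ⟨fun x i ↦ lineParam E (p x i), fun i ↦ ?_, funext h.lineParam_eq, fun _ ↦ E,
    fun o ↦ const_mem_regularPolyAt _, rfl, fun _ ↦ h.natDegree_le, ?_⟩
  · simp only [lineParam, div_eq_mul_inv]
    exact mul_mem (sub_mem (mul_mem (const_mem_regularAt _) (hp i _))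
      (mul_mem (const_mem_regularAt _) (hp i _)))
      (inv_mem_regularAt (hden i) (h.lineDenom_ne_zero i))
  · refine (Filter.eventually_all_finite (Set.finite_lt_nat s)).2 fun i _ ↦ ?_
    filter_upwards [eventually_ne_zero_of_mem_regularAt (hden i) (h.lineDenom_ne_zero i)]
      with x hx
    exact ⟨_, eval_lineParam h.natDegree_le hx⟩

end Line

theorem exists_params_isInterpolatingFamily (hs : s ≤ m + 3 ∨ m = 1)
    (h : IsSample E τ lam (p x₀)) (hp : ∀ i o, (p · i o) ∈ regularAt x₀) :
    ∃ t : (σ → K) → ℕ → K, (∀ i, (t · i) ∈ regularAt x₀) ∧ t x₀ = τ ∧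
      ∃ V, IsInterpolatingFamily x₀ E s t p V := by
  rcases hs with hs | rfl
  exacts [exists_params_isInterpolatingFamily_of_le h hp hs,
    exists_params_isInterpolatingFamily_line h hp s]

theorem exists_common_params_isInterpolatingFamily {J : Type*} {d : J → ℕ} (j₀ : J)
    (h₀ : s ≤ d j₀ + 3 ∨ d j₀ = 1) (hs : ∀ j ≠ j₀, s ≤ d j + 2)
    {E : ∀ j, Option (Fin (d j)) → K[X]} {lam : J → ℕ → K}
    {p : ∀ j, (σ → K) → ℕ → Option (Fin (d j)) → K}
    (hE : ∀ j, IsSample (E j) τ (lam j) (p j x₀))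
    (hp : ∀ j i o, (fun x ↦ p j x i o) ∈ regularAt x₀) :
    ∃ t : (σ → K) → ℕ → K, (∀ i, (t · i) ∈ regularAt x₀) ∧ t x₀ = τ ∧
      ∀ j, ∃ V, IsInterpolatingFamily x₀ (E j) s t (p j) V := by
  obtain ⟨t, ht, rfl, hV⟩ := exists_params_isInterpolatingFamily h₀ (hE j₀) (hp j₀)
  refine ⟨t, ht, rfl, fun j ↦ ?_⟩
  rcases eq_or_ne j j₀ with rfl | hj
  · exact hV
  · exact exists_isInterpolatingFamily (hE j) (hp j) ht (hs j hj)

end CurveFamilies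

section Gluing

variable {K J : Type*} [Field K] [Fintype J] [DecidableEq J] {α : J → Type*}

/-- The curve in the join of the spaces `ℙ^{α j}`, glued along their common coordinate `none`, that
projects to the curve `V j` in each of them: `[1 : V j a / V j none]` with denominators cleared. -/
def glue (V : ∀ j, Option (α j) → K[X]) : Option (Σ j, α j) → K[X]
  | none => ∏ j, V j none
  | some ⟨j, a⟩ => V j (some a) * ∏ i ∈ univ.erase j, V i none

variable {V : ∀ j, Option (α j) → K[X]}

theorem glue_map_mk (V : ∀ j, Option (α j) → K[X]) (j : J) (o : Option (α j)) :
    glue V (o.map (Sigma.mk j)) = V j o * ∏ i ∈ univ.erase j, V i none := by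
  cases o with
  | none => exact (mul_prod_erase univ (V · none) (mem_univ j)).symm
  | some a => rfl

theorem natDegree_glue_le {d : J → ℕ} (hV : ∀ j o, (V j o).natDegree ≤ d j)
    (o : Option (Σ j, α j)) : (glue V o).natDegree ≤ ∑ j, d j := by
  have hprod (s : Finset J) : (∏ i ∈ s, V i none).natDegree ≤ ∑ i ∈ s, d i :=
    (natDegree_prod_le _ _).trans (sum_le_sum fun i _ ↦ hV i none)
  rcases o with _ | ⟨j, a⟩
  · exact hprod univ
  · rw [← add_sum_erase univ d (mem_univ j)]
    exact natDegree_mul_le.trans (add_le_add (hV j _) (hprod _))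

theorem dvd_glue_some {i j : J} (hij : i ≠ j) (a : α j) : V i none ∣ glue V (some ⟨j, a⟩) :=
  (dvd_prod_of_mem (V · none) (mem_erase.2 ⟨hij, mem_univ i⟩)).mul_left _

theorem eval_glue_eq_zero_of_eval_eq_zero {j : J} {z : K} (hz : (V j none).eval z = 0)
    {o : Option (Σ j, α j)} (ho : ∀ a, o ≠ some ⟨j, a⟩) : (glue V o).eval z = 0 := by
  refine eval_eq_zero_of_dvd_of_eval_eq_zero ?_ hz
  rcases o with _ | ⟨i, a⟩
  · exact dvd_prod_of_mem (V · none) (mem_univ j)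
  · exact dvd_glue_some (by rintro rfl; exact ho a rfl) a

theorem eval_glue_eq_zero_off_block_iff {z : K} (hne : ∃ o, (glue V o).eval z ≠ 0) (j : J) :
    (∀ o, (∀ a, o ≠ some ⟨j, a⟩) → (glue V o).eval z = 0) ↔ (V j none).eval z = 0 := by
  refine ⟨fun h ↦ ?_, fun h o ho ↦ eval_glue_eq_zero_of_eval_eq_zero h ho⟩
  obtain ⟨i, -, hi⟩ : ∃ i ∈ univ, (V i none).eval z = 0 := by
    rw [← prod_eq_zero_iff, ← eval_prod]
    exact h none fun a ↦ (Option.some_ne_none _).symm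
  by_contra hj
  obtain ⟨o, ho⟩ := hne
  refine ho ?_
  by_cases hoj : ∀ a, o ≠ some ⟨j, a⟩
  · exact h o hoj
  · push Not at hoj
    obtain ⟨a, rfl⟩ := hoj
    exact eval_eq_zero_of_dvd_of_eval_eq_zero (dvd_glue_some (by rintro rfl; exact hj hi) a) hi

theorem eval_glue_mul_none {y : Option (Σ j, α j) → K} {z : K} {c : J → K}
    (h : ∀ j o, (V j o).eval z = c j * y (o.map (Sigma.mk j))) (o : Option (Σ j, α j)) :
    (glue V o).eval z * y none = (glue V none).eval z * y o := by
  rcases o with _ | ⟨j, a⟩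
  · rfl
  · rw [show glue V none = _ from glue_map_mk V j none,
      show glue V (some ⟨j, a⟩) = _ from glue_map_mk V j (some a), eval_mul, eval_mul, h, h,
      Option.map_none, Option.map_some]
    ring

theorem glue_mem_regularPolyAt {σ : Type*} {x₀ : σ → K}
    {V : (σ → K) → ∀ j, Option (α j) → K[X]}
    (hV : ∀ j o, (fun x ↦ V x j o) ∈ regularPolyAt x₀) (o : Option (Σ j, α j)) :
    (fun x ↦ glue (V x) o) ∈ regularPolyAt x₀ := by
  have hprod (s : Finset J) : (fun x ↦ ∏ i ∈ s, V x i none) ∈ regularPolyAt x₀ := by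
    rw [← Finset.prod_fn]
    exact prod_mem fun i _ ↦ hV i none
  rcases o with _ | ⟨j, a⟩
  exacts [hprod univ, mul_mem (hV j _) (hprod _)]

section PoleCurve

variable [∀ j, Fintype (α j)] [∀ j, DecidableEq (α j)] (ρ : (Σ j, α j) → K)

theorem glue_poleCurve : glue (fun j ↦ poleCurve fun a : α j ↦ ρ ⟨j, a⟩) = poleCurve ρ := by
  have hnone : (∏ j, nodal univ fun a : α j ↦ ρ ⟨j, a⟩) = nodal univ ρ := by
    simp only [nodal_eq, Fintype.prod_sigma]
  ext1 o
  rcases o with _ | ⟨j, a⟩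
  · exact hnone
  · refine mul_left_cancel₀ (X_sub_C_ne_zero (ρ ⟨j, a⟩)) ?_
    simp only [glue, poleCurve]
    rw [← nodal_eq_mul_nodal_erase (mem_univ (⟨j, a⟩ : Σ j, α j)), ← hnone, ← mul_assoc,
      ← nodal_eq_mul_nodal_erase (v := fun a : α j ↦ ρ ⟨j, a⟩) (mem_univ a)]
    exact mul_prod_erase univ (fun j ↦ nodal univ fun a : α j ↦ ρ ⟨j, a⟩) (mem_univ j)

end PoleCurve

theorem isSample_poleCurve {d : J → ℕ} {ρ : (Σ j, Fin (d j)) → K} {τ : ℕ → K}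
    (hρ : Function.Injective ρ) (hτ : Function.Injective τ) (hτρ : ∀ i z, τ i ≠ ρ z) (j : J) :
    IsSample (poleCurve fun a ↦ ρ ⟨j, a⟩) τ
      (fun i ↦ (∏ l ∈ univ.erase j, nodal univ fun a ↦ ρ ⟨l, a⟩).eval (τ i))
      (fun i o ↦ (poleCurve ρ (o.map (Sigma.mk j))).eval (τ i)) where
  linearIndependent := linearIndependent_poleCurve (hρ.comp sigma_mk_injective)
  natDegree_le o := by simpa using natDegree_poleCurve_le (fun a ↦ ρ ⟨j, a⟩) o
  injective := hτ
  ne_zero i := by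
    rw [eval_prod]
    exact prod_ne_zero_iff.2 fun l _ ↦ eval_nodal_not_at_node fun a _ ↦ hτρ i _
  apply_eq i o := by
    rw [← glue_poleCurve, glue_map_mk, eval_mul, mul_comm]
    rfl

end Gluing

section CoordinateSubspaces

variable {n : ℕ} {ι : Type*} {d : ι → ℕ} {K : Type*} [Field K]

/-- The coordinate system in which the block `j` of the coordinate vectors consists of the columns
of `B j`, completed by the standard basis vector of index `ε none`. -/
def frame (ε : Option (Σ j, Fin (d j)) ≃ Fin (n + 1))
    (B : ∀ j, Matrix (Fin (n + 1)) (Fin (d j)) K) : Matrix (Fin (n + 1)) (Fin (n + 1)) K :=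
  of fun k l ↦ (ε.symm l).elim (if k = l then 1 else 0) fun z ↦ B z.1 k z.2

/-- The coordinates of a vector in the coordinate system `frame ε B`. -/
def frameCoords (ε : Option (Σ j, Fin (d j)) ≃ Fin (n + 1))
    (B : ∀ j, Matrix (Fin (n + 1)) (Fin (d j)) K) (v : Fin (n + 1) → K) :
    Option (Σ j, Fin (d j)) → K :=
  ((frame ε B)⁻¹ *ᵥ v) ∘ ε

variable {ε : Option (Σ j, Fin (d j)) ≃ Fin (n + 1)} {B : ∀ j, Matrix (Fin (n + 1)) (Fin (d j)) K}

theorem frame_mulVec_single (j : ι) (a : Fin (d j)) :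
    frame ε B *ᵥ Pi.single (ε (some ⟨j, a⟩)) 1 = fun k ↦ B j k a := by
  ext k
  simp [frame]

theorem frame_mulVec_frameCoords (hB : (frame ε B).det ≠ 0) (v : Fin (n + 1) → K) :
    frame ε B *ᵥ (frameCoords ε B v ∘ ε.symm) = v := by
  rw [frameCoords, Function.comp_assoc, ε.self_comp_symm, Function.comp_id, mulVec_mulVec,
    mul_nonsing_inv _ hB.isUnit, one_mulVec]

theorem frame_mulVec_mem_span_iff (hB : (frame ε B).det ≠ 0) (j : ι) (u : Fin (n + 1) → K) :
    frame ε B *ᵥ u ∈ Submodule.span K (Set.range fun a k ↦ B j k a) ↔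
      ∀ o, (∀ a, o ≠ some ⟨j, a⟩) → u (ε o) = 0 := by
  set S : Set (Fin (n + 1)) := Set.range fun a ↦ ε (some ⟨j, a⟩)
  have hcol : (fun a k ↦ B j k a) = fun a ↦ frame ε B *ᵥ Pi.single (ε (some ⟨j, a⟩)) 1 :=
    funext fun a ↦ (frame_mulVec_single j a).symm
  have hspan : Submodule.span K (Set.range fun a k ↦ B j k a) =
      (Submodule.span K (Pi.basisFun K _ '' S)).map (frame ε B).mulVecLin := by
    rw [hcol, Submodule.map_span, ← Set.range_comp, ← Set.range_comp]
    congr 2 with a : 1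
    simp
  rw [hspan, ← mulVecLin_apply, ← Submodule.mem_comap,
    Submodule.comap_map_eq_of_injective (mulVec_injective_of_det_ne_zero hB),
    Module.Basis.mem_span_image, Set.subset_def, ε.surjective.forall]
  refine forall_congr' fun o ↦ ?_
  rw [← not_imp_not]
  simp [S, eq_comm]

end CoordinateSubspaces

section RationalNormalCurves

variable {n : ℕ}

theorem veron_eq_smul_affine (n : ℕ) {v : Fin 2 → ℂ} (hv : v 1 ≠ 0) :
    veron n v = v 1 ^ n • veron n ![v 0 / v 1, 1] := by
  ext k
  have hk : v 1 ^ n = v 1 ^ (k : ℕ) * v 1 ^ (n - (k : ℕ)) := by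
    rw [← pow_add, Nat.add_sub_cancel' k.is_le]
  simp only [veron, Pi.smul_apply, smul_eq_mul, cons_val_zero, cons_val_one, one_pow, mul_one,
    div_pow, hk]
  field_simp

theorem veron_eq_smul_single_last (n : ℕ) {v : Fin 2 → ℂ} (hv : v 1 = 0) :
    veron n v = v 0 ^ n • Pi.single (Fin.last n) 1 := by
  ext k
  rcases eq_or_ne k (Fin.last n) with rfl | hk
  · simp [veron]
  · have : n - (k : ℕ) ≠ 0 := Nat.sub_ne_zero_of_lt (Fin.val_lt_last hk)
    simp [veron, hv, this, hk]

theorem veron_affine (n : ℕ) (t : ℂ) : veron n ![t, 1] = fun e : Fin (n + 1) ↦ t ^ (e : ℕ) := by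
  ext e
  simp [veron]

theorem veron_affine_ne_zero (n : ℕ) (t : ℂ) : veron n ![t, 1] ≠ 0 :=
  fun h ↦ by simpa [veron] using congrFun h 0

theorem eq_of_veron_affine_eq_smul (hn : 1 ≤ n) {t t' c : ℂ}
    (h : veron n ![t, 1] = c • veron n ![t', 1]) : t = t' := by
  have hc : 1 = c := by simpa [veron] using congrFun h 0
  simpa [veron, ← hc] using congrFun h ⟨1, by omega⟩

variable {M : Matrix (Fin (n + 1)) (Fin (n + 1)) ℂ}

/-- The rational normal curve `[s:t] ↦ M · veron n (s, t)`. -/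
def rnc (M : Matrix (Fin (n + 1)) (Fin (n + 1)) ℂ) : Set (PP n) :=
  {P | ∃ v : Fin 2 → ℂ, v ≠ 0 ∧ ∃ c : ℂ, c ≠ 0 ∧ P.rep = c • M *ᵥ veron n v}

theorem projSet_subset_rnc {A : Matrix (Fin (n + 1)) (Fin 1) ℂ} {c t : ℂ}
    (hA : (fun k ↦ A k 0) = c • M *ᵥ veron n ![t, 1]) : projSet A ⊆ rnc M := by
  intro P hP
  obtain ⟨l, hl⟩ : ∃ l : ℂ, l • (fun k ↦ A k 0) = P.rep := by
    simpa [projSet, Set.range_unique, Submodule.mem_span_singleton] using hP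
  rw [hA, smul_smul] at hl
  refine ⟨![t, 1], fun h ↦ by simpa using congrFun h 1, l * c, fun h ↦ P.rep_nonzero ?_, hl.symm⟩
  rw [← hl, h, zero_smul]

theorem mulVec_veron_affine_ne_zero (hM : M.det ≠ 0) (t : ℂ) : M *ᵥ veron n ![t, 1] ≠ 0 :=
  fun h ↦ veron_affine_ne_zero n t (mulVec_injective_of_det_ne_zero hM (by rw [h, mulVec_zero]))

theorem ncard_rnc_inter (hn : 1 ≤ n) (hM : M.det ≠ 0) {W : Submodule ℂ (Fin (n + 1) → ℂ)}
    (hinf : M *ᵥ Pi.single (Fin.last n) 1 ∉ W) :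
    (rnc M ∩ {P | P.rep ∈ W}).ncard = {t | M *ᵥ veron n ![t, 1] ∈ W}.ncard := by
  set γ : ℂ → PP n := fun t ↦ .mk ℂ _ (mulVec_veron_affine_ne_zero hM t)
  have hγ : Function.Injective γ := by
    intro t t' h
    obtain ⟨c, hc⟩ := (Projectivization.mk_eq_mk_iff' _ _ _ _ _).1 h
    rw [← mulVec_smul] at hc
    exact eq_of_veron_affine_eq_smul hn (mulVec_injective_of_det_ne_zero hM hc.symm)
  rw [← Set.ncard_image_of_injective _ hγ]
  congr 1 with P
  constructor
  · rintro ⟨⟨v, hv, c, hc, hP⟩, hPW : P.rep ∈ W⟩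
    rw [hP, Submodule.smul_mem_iff _ hc] at hPW
    have hv₁ : v 1 ≠ 0 := by
      intro hv₁
      have hv₀ : v 0 ≠ 0 := fun hv₀ ↦ hv (by ext i; fin_cases i <;> assumption)
      rw [veron_eq_smul_single_last n hv₁, mulVec_smul,
        Submodule.smul_mem_iff _ (pow_ne_zero n hv₀)] at hPW
      exact hinf hPW
    have hvn : v 1 ^ n ≠ 0 := pow_ne_zero n hv₁
    rw [veron_eq_smul_affine n hv₁, mulVec_smul] at hP hPW
    refine ⟨v 0 / v 1, (Submodule.smul_mem_iff _ hvn).1 hPW, ?_⟩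
    rw [← P.mk_rep, eq_comm, Projectivization.mk_eq_mk_iff']
    exact ⟨c * v 1 ^ n, by rw [hP, smul_smul]⟩
  · rintro ⟨t, ht, rfl⟩
    obtain ⟨c, hc⟩ := Projectivization.exists_smul_eq_mk_rep ℂ _ (mulVec_veron_affine_ne_zero hM t)
    refine ⟨⟨![t, 1], fun h ↦ by simpa using congrFun h 1, c, c.ne_zero, hc.symm⟩, ?_⟩
    change (γ t).rep ∈ W
    rw [← hc]
    exact W.smul_mem _ ht

end RationalNormalCurves

section CoefficientMatrices

variable {K : Type*} [Field K] {n : ℕ} {F : Fin (n + 1) → K[X]}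

/-- The coefficients of `n + 1` polynomials of degree at most `n`. -/
def coeffMatrix (F : Fin (n + 1) → K[X]) : Matrix (Fin (n + 1)) (Fin (n + 1)) K :=
  of fun k e ↦ (F k).coeff e

theorem coeffMatrix_mulVec_pow (hF : ∀ k, (F k).natDegree ≤ n) (t : K) :
    (coeffMatrix F *ᵥ fun e ↦ t ^ (e : ℕ)) = fun k ↦ (F k).eval t := by
  ext k
  rw [eval_eq_sum_range' (Nat.lt_succ_of_le (hF k)), ← Fin.sum_univ_eq_sum_range
    fun e ↦ (F k).coeff e * t ^ e]
  rfl

theorem det_coeffMatrix_ne_zero (hF : ∀ k, (F k).natDegree ≤ n) (h : LinearIndependent K F) :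
    (coeffMatrix F).det ≠ 0 := by
  intro hdet
  obtain ⟨v, hv, hvF⟩ := exists_vecMul_eq_zero_iff.2 hdet
  refine hv (funext (Fintype.linearIndependent_iff.1 h v ?_))
  ext e
  rcases lt_or_ge n e with he | he
  · rw [finsetSum_coeff, coeff_zero]
    exact sum_eq_zero fun k _ ↦ by
      rw [coeff_smul, coeff_eq_zero_of_natDegree_lt ((hF k).trans_lt he), smul_zero]
  · simpa [finsetSum_coeff, coeffMatrix, vecMul, dotProduct] using
      congrFun hvF ⟨e, Nat.lt_succ_of_le he⟩

end CoefficientMatrices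

section SegreCurves

variable {K J : Type*} [Field K] [Fintype J] {d : J → ℕ} {n : ℕ}

theorem ncard_setOf_eval_eq_zero [IsAlgClosed K] {f : K[X]} (hf : f.Separable) :
    {z | f.eval z = 0}.ncard = f.natDegree := by
  classical
  have hroots : {z | f.eval z = 0} = f.roots.toFinset := by
    ext z
    simp [hf.ne_zero]
  rw [hroots, Set.ncard_coe_finset, Multiset.toFinset_card_of_nodup (nodup_roots hf),
    (IsAlgClosed.splits f).natDegree_eq_card_roots]

theorem natDegree_eq_of_sum_le_natDegree_prod {f : J → K[X]} (hf : ∀ j, (f j).natDegree ≤ d j)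
    (h : ∑ j, d j ≤ (∏ j, f j).natDegree) (j : J) : (f j).natDegree = d j :=
  (sum_eq_sum_iff_of_le fun j _ ↦ hf j).1
    ((sum_le_sum fun j _ ↦ hf j).antisymm (h.trans (natDegree_prod_le _ _))) j (mem_univ j)

theorem sum_eq_of_equiv_fin (ε : Option (Σ j, Fin (d j)) ≃ Fin (n + 1)) : ∑ j, d j = n := by
  simpa using Fintype.card_congr ε

variable [DecidableEq J]

/-- The curves `V j` in `ℙ^{d j}` glue to a rational normal curve in `ℙⁿ` which meets the
hyperplane where the common coordinate vanishes in `n` distinct finite points. -/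
structure IsNondegenerate (ε : Option (Σ j, Fin (d j)) ≃ Fin (n + 1))
    (V : ∀ j, Option (Fin (d j)) → K[X]) : Prop where
  natDegree_le : ∀ j o, (V j o).natDegree ≤ d j
  det_ne_zero : (coeffMatrix (glue V ∘ ε.symm)).det ≠ 0
  coeff_ne_zero : (glue V none).coeff n ≠ 0
  separable : (glue V none).Separable

namespace IsNondegenerate

variable {ε : Option (Σ j, Fin (d j)) ≃ Fin (n + 1)} {V : ∀ j, Option (Fin (d j)) → K[X]}
  (h : IsNondegenerate ε V)

include h

theorem glue_natDegree_le (o : Option (Σ j, Fin (d j))) : (glue V o).natDegree ≤ n :=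
  (natDegree_glue_le h.natDegree_le o).trans (sum_eq_of_equiv_fin ε).le

theorem coeffMatrix_glue_mulVec_pow (z : K) (o : Option (Σ j, Fin (d j))) :
    (coeffMatrix (glue V ∘ ε.symm) *ᵥ fun e ↦ z ^ (e : ℕ)) (ε o) = (glue V o).eval z := by
  simp [coeffMatrix_mulVec_pow (F := glue V ∘ ε.symm) fun _ ↦ h.glue_natDegree_le _]

theorem exists_eval_glue_ne_zero (z : K) : ∃ o, (glue V o).eval z ≠ 0 := by
  by_contra! hz
  have hzero : (coeffMatrix (glue V ∘ ε.symm) *ᵥ fun e ↦ z ^ (e : ℕ)) = 0 := by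
    ext k
    rw [← ε.apply_symm_apply k, h.coeffMatrix_glue_mulVec_pow, hz, Pi.zero_apply]
  simpa using congrFun (eq_zero_of_mulVec_eq_zero h.det_ne_zero hzero) 0

theorem ncard_zeros [IsAlgClosed K] (j : J) :
    {z | (V j none).eval z = 0}.ncard = d j := by
  rw [ncard_setOf_eval_eq_zero
    (h.separable.of_dvd (dvd_prod_of_mem (V · none) (mem_univ j)))]
  refine natDegree_eq_of_sum_le_natDegree_prod (f := (V · none)) (h.natDegree_le · none) ?_ j
  rw [sum_eq_of_equiv_fin ε]
  exact le_natDegree_of_ne_zero h.coeff_ne_zero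

end IsNondegenerate

theorem isNondegenerate_poleCurve (ε : Option (Σ j, Fin (d j)) ≃ Fin (n + 1))
    {ρ : (Σ j, Fin (d j)) → K} (hρ : Function.Injective ρ) :
    IsNondegenerate ε fun j ↦ poleCurve fun a ↦ ρ ⟨j, a⟩ := by
  have hcard : Fintype.card (Σ j, Fin (d j)) = n := by simpa using sum_eq_of_equiv_fin ε
  refine ⟨fun j o ↦ ?_, ?_, ?_, ?_⟩
  · simpa using natDegree_poleCurve_le (fun a ↦ ρ ⟨j, a⟩) o
  all_goals rw [glue_poleCurve]
  · refine det_coeffMatrix_ne_zero (fun k ↦ ?_)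
      ((linearIndependent_poleCurve hρ).comp _ ε.symm.injective)
    exact hcard ▸ natDegree_poleCurve_le ρ (ε.symm k)
  · have hdeg : (nodal univ ρ).natDegree = n := by rw [natDegree_nodal, card_univ, hcard]
    rw [poleCurve, ← hdeg, coeff_natDegree, nodal_monic.leadingCoeff]
    exact one_ne_zero
  · exact separable_prod_X_sub_C_iff.2 hρ

theorem eventually_isNondegenerate [CharZero K] {σ : Type*} {x₀ : σ → K} (hn : 1 ≤ n)
    {ε : Option (Σ j, Fin (d j)) ≃ Fin (n + 1)} {V : (σ → K) → ∀ j, Option (Fin (d j)) → K[X]}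
    (hV : ∀ j o, (fun x ↦ V x j o) ∈ regularPolyAt x₀)
    (hdeg : ∀ x j o, (V x j o).natDegree ≤ d j) (h₀ : IsNondegenerate ε (V x₀)) :
    ∀ᶠ x in zariskiNhds x₀, IsNondegenerate ε (V x) := by
  have hglue := glue_mem_regularPolyAt hV
  have hle (x : σ → K) : (glue (V x) none).natDegree ≤ n :=
    (natDegree_glue_le (hdeg x) none).trans (sum_eq_of_equiv_fin ε).le
  have hdet := eventually_ne_zero_of_mem_regularAt
    (det_mem_regularAt (A := fun x ↦ coeffMatrix (glue (V x) ∘ ε.symm)) fun k e ↦ hglue _ e)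
    h₀.det_ne_zero
  have hcoeff := eventually_ne_zero_of_mem_regularAt (hglue none n) h₀.coeff_ne_zero
  have hsep := eventually_separable hn (hglue none) hle
    ((hle x₀).antisymm (le_natDegree_of_ne_zero h₀.coeff_ne_zero)) h₀.separable
  filter_upwards [hdet, hcoeff, hsep] with x h₁ h₂ h₃ using ⟨hdeg x, h₁, h₂, h₃⟩

end SegreCurves

section SegreRationalNormalCurves

variable {J : Type*} [Fintype J] [DecidableEq J] {d : J → ℕ} {n : ℕ}

/-- The matrix of the curve which in the coordinate system `frame ε B` is glued from the
curves `V j`. -/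
def segreMatrix (ε : Option (Σ j, Fin (d j)) ≃ Fin (n + 1))
    (B : ∀ j, Matrix (Fin (n + 1)) (Fin (d j)) ℂ) (V : ∀ j, Option (Fin (d j)) → ℂ[X]) :
    Matrix (Fin (n + 1)) (Fin (n + 1)) ℂ :=
  frame ε B * coeffMatrix (glue V ∘ ε.symm)

variable {ε : Option (Σ j, Fin (d j)) ≃ Fin (n + 1)}
  {B : ∀ j, Matrix (Fin (n + 1)) (Fin (d j)) ℂ} {V : ∀ j, Option (Fin (d j)) → ℂ[X]}

theorem det_segreMatrix_ne_zero (hB : (frame ε B).det ≠ 0) (h : IsNondegenerate ε V) :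
    (segreMatrix ε B V).det ≠ 0 := by
  rw [segreMatrix, det_mul]
  exact mul_ne_zero hB h.det_ne_zero

theorem ncard_rnc_segreMatrix_inter (hn : 1 ≤ n) (hB : (frame ε B).det ≠ 0)
    (h : IsNondegenerate ε V) (j : J) :
    (rnc (segreMatrix ε B V) ∩ projSet (B j)).ncard = d j := by
  refine Eq.trans ?_ (h.ncard_zeros j)
  refine (ncard_rnc_inter hn (det_segreMatrix_ne_zero hB h) fun hinf ↦ ?_).trans ?_
  · rw [segreMatrix, ← mulVec_mulVec, frame_mulVec_mem_span_iff hB] at hinf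
    refine h.coeff_ne_zero ?_
    simpa [coeffMatrix] using hinf none (by simp)
  · congr 1 with z
    rw [Set.mem_ofPred_eq, segreMatrix, ← mulVec_mulVec, frame_mulVec_mem_span_iff hB, veron_affine,
      Set.mem_ofPred_eq, ← eval_glue_eq_zero_off_block_iff (h.exists_eval_glue_ne_zero z)]
    simp only [h.coeffMatrix_glue_mulVec_pow]

theorem projSet_subset_rnc_segreMatrix {A : Matrix (Fin (n + 1)) (Fin 1) ℂ}
    (hB : (frame ε B).det ≠ 0) (h : IsNondegenerate ε V) {z : ℂ}
    (hz : (glue V none).eval z ≠ 0)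
    (hA : ∀ j, ∃ c, ∀ o, (V j o).eval z = c * frameCoords ε B (A.col 0) (o.map (Sigma.mk j))) :
    projSet A ⊆ rnc (segreMatrix ε B V) := by
  choose c hc using hA
  set y := frameCoords ε B (A.col 0)
  refine projSet_subset_rnc (c := y none / (glue V none).eval z) (t := z) ?_
  change A.col 0 = _
  rw [← frame_mulVec_frameCoords hB (A.col 0), segreMatrix, ← mulVec_mulVec, ← mulVec_smul,
    veron_affine]
  congr 1 with k
  obtain ⟨o, rfl⟩ := ε.surjective k
  rw [Pi.smul_apply, h.coeffMatrix_glue_mulVec_pow, smul_eq_mul, div_mul_eq_mul_div, eq_div_iff hz,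
    Function.comp_apply, ε.symm_apply_apply, mul_comm, ← eval_glue_mul_none hc, mul_comm]

theorem exists_isRNC_of_isNondegenerate {s : ℕ} {P : Fin s → Matrix (Fin (n + 1)) (Fin 1) ℂ}
    (hn : 1 ≤ n) (hB : (frame ε B).det ≠ 0) (h : IsNondegenerate ε V) {t : Fin s → ℂ}
    (ht : ∀ i, (glue V none).eval (t i) ≠ 0)
    (hP : ∀ i j, ∃ c, ∀ o,
      (V j o).eval (t i) = c * frameCoords ε B ((P i).col 0) (o.map (Sigma.mk j))) :
    ∃ C : Set (PP n), IsRNC n C ∧ (∀ i, projSet (P i) ⊆ C) ∧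
      ∀ j, (C ∩ projSet (B j)).ncard = d j :=
  ⟨rnc (segreMatrix ε B V), ⟨_, (det_segreMatrix_ne_zero hB h).isUnit, rfl⟩,
    fun i ↦ projSet_subset_rnc_segreMatrix hB h (ht i) (hP i), ncard_rnc_segreMatrix_inter hn hB h⟩

end SegreRationalNormalCurves

section Configurations

variable {K J : Type*} {d : J → ℕ} {n s : ℕ}

/-- The index type of the matrix entries of a configuration of `s` points and of linear subspaces
of dimensions `d j - 1` in `ℙⁿ`, so that configurations are functions `ConfigIndex s n d → K`. -/
abbrev ConfigIndex (s n : ℕ) (d : J → ℕ) : Type _ :=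
  (Fin s × Fin (n + 1) × Fin 1) ⊕ (Σ j, Fin (n + 1) × Fin (d j))

/-- The points of a configuration. -/
def configPoints (x : ConfigIndex s n d → K) (i : Fin s) : Matrix (Fin (n + 1)) (Fin 1) K :=
  of fun k l ↦ x (.inl (i, k, l))

/-- The linear subspaces of a configuration. -/
def configSpaces (x : ConfigIndex s n d → K) (j : J) : Matrix (Fin (n + 1)) (Fin (d j)) K :=
  of fun k a ↦ x (.inr ⟨j, k, a⟩)

/-- The points of a configuration, continued by the fixed points `q i` to an infinite sequence. -/
def extendedPoint (q : ℕ → Fin (n + 1) → K) (x : ConfigIndex s n d → K) (i : ℕ) :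
    Fin (n + 1) → K :=
  if h : i < s then (configPoints x ⟨i, h⟩).col 0 else q i

theorem extendedPoint_val (q : ℕ → Fin (n + 1) → K) (x : ConfigIndex s n d → K) (i : Fin s) :
    extendedPoint q x i = (configPoints x i).col 0 :=
  dif_pos i.is_lt

variable [Field K]

theorem extendedPoint_mem_regularAt {q : ℕ → Fin (n + 1) → K} {x₀ : ConfigIndex s n d → K} (i : ℕ)
    (k : Fin (n + 1)) : (fun x ↦ extendedPoint q x i k) ∈ regularAt x₀ := by
  by_cases hi : i < s
  · simp only [extendedPoint, dif_pos hi]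
    exact apply_mem_regularAt _
  · simpa only [extendedPoint, dif_neg hi] using const_mem_regularAt _

theorem frame_configSpaces_mem_regularAt {ε : Option (Σ j, Fin (d j)) ≃ Fin (n + 1)}
    {x₀ : ConfigIndex s n d → K} (k l : Fin (n + 1)) :
    (fun x ↦ frame ε (configSpaces x) k l) ∈ regularAt x₀ := by
  obtain ⟨_ | z, rfl⟩ := ε.surjective l
  · simpa [frame] using const_mem_regularAt _
  · simpa [frame, configSpaces] using apply_mem_regularAt _

theorem frameCoords_mem_regularAt {ε : Option (Σ j, Fin (d j)) ≃ Fin (n + 1)}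
    {x₀ : ConfigIndex s n d → K} (h₀ : (frame ε (configSpaces x₀)).det ≠ 0)
    (q : ℕ → Fin (n + 1) → K) (i : ℕ) (o : Option (Σ j, Fin (d j))) :
    (fun x ↦ frameCoords ε (configSpaces x) (extendedPoint q x i) o) ∈ regularAt x₀ :=
  mulVec_mem_regularAt (matrixInv_mem_regularAt frame_configSpaces_mem_regularAt h₀)
    (extendedPoint_mem_regularAt i) (ε o)

/-- The coordinate subspaces given by the blocks of `ε`, together with the points `q i`. -/
def coordinateConfig (ε : Option (Σ j, Fin (d j)) ≃ Fin (n + 1)) (q : ℕ → Fin (n + 1) → K) :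
    ConfigIndex s n d → K :=
  Sum.elim (fun z ↦ q z.1 z.2.1)
    fun z ↦ (1 : Matrix (Fin (n + 1)) (Fin (n + 1)) K) z.2.1 (ε (some ⟨z.1, z.2.2⟩))

theorem frame_coordinateConfig (ε : Option (Σ j, Fin (d j)) ≃ Fin (n + 1))
    (q : ℕ → Fin (n + 1) → K) :
    frame ε (configSpaces (coordinateConfig (s := s) ε q)) = 1 := by
  ext k l
  obtain ⟨_ | z, rfl⟩ := ε.surjective l
  · simp [frame, one_apply]
  · simp [frame, configSpaces, coordinateConfig]

theorem extendedPoint_coordinateConfig (ε : Option (Σ j, Fin (d j)) ≃ Fin (n + 1))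
    (q : ℕ → Fin (n + 1) → K) (i : ℕ) :
    extendedPoint q (coordinateConfig (s := s) ε q) i = q i := by
  ext k
  by_cases hi : i < s <;> simp [extendedPoint, hi, configPoints, coordinateConfig, col_apply]

theorem genHoldsPtsSpaces_of_eventually {r : ℕ} {nv : Fin r → ℕ} {x₀ : ConfigIndex s n nv → ℂ}
    {Q : (Fin s → Matrix (Fin (n + 1)) (Fin 1) ℂ) →
      (∀ j, Matrix (Fin (n + 1)) (Fin (nv j)) ℂ) → Prop}
    (h : ∀ᶠ x in zariskiNhds x₀, Q (configPoints x) (configSpaces x)) :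
    GenHoldsPtsSpaces n s r nv Q := by
  obtain ⟨F, hF, hQ⟩ := eventually_zariskiNhds_iff.1 h
  exact ⟨F, fun hzero ↦ hF (by rw [hzero, map_zero]), fun P B _ _ hne ↦ hQ _ hne⟩

end Configurations

section Genericity

theorem exists_injective_disjoint (ι K : Type*) [Countable ι] [AddMonoidWithOne K]
    [CharZero K] : ∃ (ρ : ι → K) (τ : ℕ → K),
      Function.Injective ρ ∧ Function.Injective τ ∧ ∀ i z, τ i ≠ ρ z := by
  obtain ⟨f, hf⟩ := exists_injective_nat (ι ⊕ ℕ)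
  have hinj : Function.Injective fun z ↦ (f z : K) := Nat.cast_injective.comp hf
  exact ⟨fun z ↦ f (.inl z), fun i ↦ f (.inr i), hinj.comp Sum.inl_injective,
    hinj.comp Sum.inr_injective, fun i z ↦ hinj.ne Sum.inr_ne_inl⟩

variable {J : Type*} [Fintype J] [DecidableEq J] {d : J → ℕ} {n s : ℕ}

theorem eventually_exists_isRNC (hn : 1 ≤ n) (ε : Option (Σ j, Fin (d j)) ≃ Fin (n + 1)) (j₀ : J)
    (h₀ : s ≤ d j₀ + 3 ∨ d j₀ = 1) (hs : ∀ j ≠ j₀, s ≤ d j + 2)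
    {ρ : (Σ j, Fin (d j)) → ℂ} {τ : ℕ → ℂ} (hρ : Function.Injective ρ)
    (hτ : Function.Injective τ) (hτρ : ∀ i z, τ i ≠ ρ z) :
    ∀ᶠ x : ConfigIndex s n d → ℂ in
      zariskiNhds (coordinateConfig ε fun i k ↦ (poleCurve ρ (ε.symm k)).eval (τ i)),
      ∃ C : Set (PP n), IsRNC n C ∧ (∀ i, projSet (configPoints x i) ⊆ C) ∧
        ∀ j, (C ∩ projSet (configSpaces x j)).ncard = d j := by
  set q : ℕ → Fin (n + 1) → ℂ := fun i k ↦ (poleCurve ρ (ε.symm k)).eval (τ i)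
  set x₀ : ConfigIndex s n d → ℂ := coordinateConfig ε q
  set p : ∀ j, (ConfigIndex s n d → ℂ) → ℕ → Option (Fin (d j)) → ℂ := fun j x i o ↦
    frameCoords ε (configSpaces x) (extendedPoint q x i) (o.map (Sigma.mk j))
  have hframe : (frame ε (configSpaces x₀)).det ≠ 0 := by
    simp [x₀, frame_coordinateConfig]
  have hp₀ (j : J) :
      p j x₀ = fun i o ↦ (poleCurve ρ (o.map (Sigma.mk j))).eval (τ i) := by
    ext i o
    simp [p, x₀, q, frameCoords, frame_coordinateConfig, extendedPoint_coordinateConfig]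
  obtain ⟨t, ht, ht₀, hV⟩ := exists_common_params_isInterpolatingFamily (p := p) j₀ h₀ hs
    (fun j ↦ hp₀ j ▸ isSample_poleCurve hρ hτ hτρ j)
    fun j i o ↦ frameCoords_mem_regularAt hframe q i _
  choose V hV using hV
  have hglue₀ : glue (fun j ↦ V j x₀) = poleCurve ρ := by
    simp only [(hV _).apply_base, glue_poleCurve]
  have hdet := eventually_ne_zero_of_mem_regularAt
    (det_mem_regularAt frame_configSpaces_mem_regularAt) hframe
  have hnondeg : ∀ᶠ x in zariskiNhds x₀, IsNondegenerate ε fun j ↦ V j x :=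
    eventually_isNondegenerate hn (fun j ↦ (hV j).regular) (fun x j ↦ (hV j).natDegree_le x)
      (by simpa only [(hV _).apply_base] using isNondegenerate_poleCurve ε hρ)
  have hfinite : ∀ᶠ x in zariskiNhds x₀,
      ∀ i : Fin s, (glue (fun j ↦ V j x) none).eval (t x i) ≠ 0 :=
    Filter.eventually_all.2 fun i ↦ eventually_ne_zero_of_mem_regularAt
      (eval_mem_regularAt (glue_mem_regularPolyAt (fun j ↦ (hV j).regular) none)
        (fun x ↦ natDegree_glue_le (fun j ↦ (hV j).natDegree_le x) none) (ht i))
      (by rw [hglue₀, ht₀]; exact eval_nodal_not_at_node fun z _ ↦ hτρ i z)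
  filter_upwards [hdet, hnondeg, hfinite, Filter.eventually_all.2 fun j ↦ (hV j).interpolates]
    with x hB hx hfin hinterp
  refine exists_isRNC_of_isNondegenerate hn hB hx hfin fun i j ↦ ?_
  simpa only [p, extendedPoint_val] using hinterp j i i.is_lt

end Genericity

theorem segre_feasibility_general {r : ℕ} {nv : Fin r → ℕ} {n s : ℕ} (hn₁ : 1 ≤ n)
    (hn : n = ∑ j, nv j) (j₀ : Fin r) (h₀ : s ≤ nv j₀ + 3 ∨ nv j₀ = 1)
    (hs : ∀ j ≠ j₀, s ≤ nv j + 2) :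
    GenHoldsPtsSpaces n s r nv fun P B =>
      ∃ C : Set (PP n), IsRNC n C ∧ (∀ i, projSet (P i) ⊆ C) ∧
        ∀ j, (C ∩ projSet (B j)).ncard = nv j := by
  have ε : Option (Σ j, Fin (nv j)) ≃ Fin (n + 1) := Fintype.equivFinOfCardEq (by simp [hn])
  obtain ⟨ρ, τ, hρ, hτ, hτρ⟩ := exists_injective_disjoint (Σ j, Fin (nv j)) ℂ
  exact genHoldsPtsSpaces_of_eventually (eventually_exists_isRNC hn₁ ε j₀ h₀ hs hρ hτ hτρ)

/-- Theorem (SEGREteo): under the numerical hypotheses, for a generic configuration of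
`s` points and `r` linear subspaces `Λ₁,…,Λ_r` of dimensions `n₁-1,…,n_r-1` in `ℙⁿ`,
`n = n₁+⋯+n_r`, there exists a rational normal curve through the points meeting each
`Λⱼ` in exactly `nⱼ` distinct points. -/
theorem segre_feasibility
    (r : ℕ) (hr : 2 ≤ r) (nv : Fin r → ℕ) (hnv : ∀ j, 1 ≤ nv j) (hmono : Monotone nv)
    (n : ℕ) (hn : n = ∑ j, nv j) (s : ℕ)
    (hcond :
      (s ≤ nv ⟨0, by omega⟩ + 3 ∧ 1 < nv ⟨0, by omega⟩ ∧ nv ⟨0, by omega⟩ < nv ⟨1, by omega⟩) ∨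
      (s ≤ nv ⟨1, by omega⟩ + 2 ∧ (nv ⟨0, by omega⟩ = 1 ∨ nv ⟨0, by omega⟩ = nv ⟨1, by omega⟩))) :
    GenHoldsPtsSpaces n s r nv fun P B =>
      ∃ C : Set (PP n), IsRNC n C ∧ (∀ i, projSet (P i) ⊆ C) ∧
        ∀ j, (C ∩ projSet (B j)).ncard = nv j := by
  have hn₁ : 1 ≤ n := by
    rw [hn]
    exact (hnv ⟨0, by omega⟩).trans (single_le_sum (fun j _ ↦ (nv j).zero_le) (mem_univ _))
  have hle (j : Fin r) (hj : j ≠ ⟨0, by omega⟩) : nv ⟨1, by omega⟩ ≤ nv j :=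
    hmono (Fin.le_def.2 (Nat.one_le_iff_ne_zero.2 fun h ↦ hj (Fin.ext h)))
  exact segre_feasibility_general hn₁ hn ⟨0, by omega⟩ (by omega)
    fun j hj ↦ by have := hle j hj; omega

end
end

section
/- Let n ≥ 3 and let L = (l₀,…,l_{n−2}) be a weight vector in ℙⁿ. If Σ_{i=0}^{n−2} (i+1)(n−1−i)·lᵢ > (n+3)(n−1), then L is non-feasible: for a generic configuration of linear subspaces of weight L, no rational normal curve maximally intersects it. -/
noncomputable section

/-- A configuration of weight `L = (l₀,…,l_{n-2})`: for each `i`, `lᵢ` matrices of size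
`(n+1) × (i+1)`, whose column spans give the `i`-dimensional components. -/
abbrev Config (n : ℕ) (L : Fin (n - 1) → ℕ) :=
  (i : Fin (n - 1)) → Fin (L i) → Matrix (Fin (n + 1)) (Fin (i.1 + 1)) ℂ

/-- All matrices of the configuration have full rank. -/
def FullRank {n : ℕ} {L : Fin (n - 1) → ℕ} (A : Config n L) : Prop :=
  ∀ i j, (A i j).rank = i.1 + 1

/-- A curve `C` maximally intersects the configuration `A`: it meets every `i`-dimensional
component in exactly `i+1` distinct points. -/
def MaxIntersects {n : ℕ} {L : Fin (n - 1) → ℕ} (C : Set (PP n)) (A : Config n L) : Prop :=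
  ∀ i j, (C ∩ projSet (A i j)).ncard = i.1 + 1

/-- A property `Q` holds for a generic configuration of weight `L`: there is a nonzero
polynomial in the matrix entries such that `Q` holds at every full-rank tuple of matrices
where the polynomial does not vanish. -/
def GenHolds (n : ℕ) (L : Fin (n - 1) → ℕ) (Q : Config n L → Prop) : Prop :=
  ∃ F : MvPolynomial ((i : Fin (n - 1)) × (Fin (L i) × Fin (n + 1) × Fin (i.1 + 1))) ℂ,
    F ≠ 0 ∧ ∀ A : Config n L, FullRank A →
      MvPolynomial.eval (fun p => A p.1 p.2.1 p.2.2.1 p.2.2.2) F ≠ 0 → Q A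

/-- `L` is feasible: a generic configuration of weight `L` is maximally intersected
by some rational normal curve. -/
def Feasible (n : ℕ) (L : Fin (n - 1) → ℕ) : Prop :=
  GenHolds n L fun A => ∃ C : Set (PP n), IsRNC n C ∧ MaxIntersects C A

/-- `L` is non-feasible: for a generic configuration of weight `L`, no rational normal
curve maximally intersects it. -/
def NonFeasible (n : ℕ) (L : Fin (n - 1) → ℕ) : Prop :=
  GenHolds n L fun A => ¬ ∃ C : Set (PP n), IsRNC n C ∧ MaxIntersects C A


open Matrix MvPolynomial

/-! A configuration maximally intersected by a rational normal curve is recovered from a frame of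
the curve, coordinate vectors on the line for the `N` points of intersection, and for every
component the matrix expressing its given basis in terms of its points. The fibres of this
parametrization have dimension at least `N + 4`: `GL₂` acts on the line, the `N` vectors can be
rescaled one by one (which absorbs the scalars of `GL₂`), and a scalar can be moved from the frame
to the basis changes. Three of the points can thus be moved to `[0:1]`, `[1:1]`, `[1:0]`, and all in
all `N + 4` coordinates fixed. The inequality says that fewer coordinates remain than there are
matrix entries, so some nonzero polynomial in the entries vanishes on the normalized data. It then
vanishes on all data, including those in which points of different components coincide, since the
data that can be normalized are dense. -/

lemma exists_eq_mul_of_col_mem_span {K m ι κ : Type*} [Field K] [Fintype ι] [Fintype κ]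
    (hcard : Fintype.card κ ≤ Fintype.card ι) {W : Matrix m ι K} {A : Matrix m κ K}
    (hW : LinearIndependent K W.col) (hWA : ∀ k, W.col k ∈ Submodule.span K (Set.range A.col)) :
    ∃ B : Matrix ι κ K, A = W * B := by
  have := FiniteDimensional.span_of_finite K (Set.finite_range A.col)
  have hspan : Submodule.span K (Set.range W.col) = Submodule.span K (Set.range A.col) := by
    refine Submodule.eq_of_le_of_finrank_le (Submodule.span_le.2 (Set.range_subset_iff.2 hWA)) ?_
    rw [finrank_span_eq_card hW]
    exact (finrank_range_le_card A.col).trans hcard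
  have hcol (k : κ) : ∃ b : ι → K, ∑ l, b l • W.col l = A.col k := by
    rw [← Submodule.mem_span_range_iff_exists_fun, hspan]
    exact Submodule.subset_span ⟨k, rfl⟩
  choose b hb using hcol
  refine ⟨of fun l k ↦ b k l, ext_col fun k ↦ ?_⟩
  rw [← hb]
  ext r
  simp [mul_apply, mul_comm]

section PolynomialMaps

lemma eval_aeval {R τ β : Type*} [CommRing R] (x : τ → R) (G : β → MvPolynomial τ R)
    (F : MvPolynomial β R) : eval x (aeval G F) = eval (fun b ↦ eval x (G b)) F := by
  simpa only [aeval_eq_eval] using comp_aeval_apply G (aeval x) F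

variable {R : Type*} [CommRing R] [IsDomain R] {σ τ β ι : Type*}

lemma exists_ne_zero_aeval_eq_zero_of_card_lt [Fintype σ] [Fintype β] (H : β → MvPolynomial σ R)
    (h : Fintype.card σ < Fintype.card β) :
    ∃ F : MvPolynomial β R, F ≠ 0 ∧ aeval H F = 0 := by
  by_contra! hF
  have hH : AlgebraicIndependent R H :=
    algebraicIndependent_iff.2 fun F h0 ↦ by_contra fun hne ↦ hF F hne h0
  have hcard := hH.lift_cardinalMk_le_trdeg
  rw [trdeg_of_isDomain] at hcard
  simp only [Cardinal.mk_fintype, Cardinal.lift_natCast, Nat.cast_le] at hcard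
  exact hcard.not_gt h

lemma exists_ne_zero_eval_eq_zero_of_comp_eq [Fintype τ] [Fintype β] [Fintype ι]
    (G : β → MvPolynomial τ R) {p : ι → τ} (hp : p.Injective) (c : ι → R)
    (hcard : Fintype.card τ < Fintype.card β + Fintype.card ι) :
    ∃ F : MvPolynomial β R, F ≠ 0 ∧
      ∀ y : τ → R, y ∘ p = c → eval (fun b ↦ eval y (G b)) F = 0 := by
  classical
  let φ : τ → MvPolynomial {a // a ∉ Set.range p} R := fun a ↦
    if h : a ∈ Set.range p then C (c h.choose) else X ⟨a, h⟩
  have hfree : Fintype.card {a // a ∉ Set.range p} < Fintype.card β := by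
    have hrange : Fintype.card {a // a ∈ Set.range p} = Fintype.card ι :=
      Set.card_range_of_injective hp
    have hle := Fintype.card_le_of_injective p hp
    rw [Fintype.card_subtype_compl]
    omega
  obtain ⟨F, hF, hF0⟩ := exists_ne_zero_aeval_eq_zero_of_card_lt (fun b ↦ aeval φ (G b)) hfree
  refine ⟨F, hF, fun y hy ↦ ?_⟩
  have hφ : (fun a ↦ eval (fun s : {a // a ∉ Set.range p} ↦ y s) (φ a)) = y := by
    funext a
    by_cases h : a ∈ Set.range p
    · simp only [φ, dif_pos h, eval_C, ← hy, Function.comp_apply, h.choose_spec]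
    · simp only [φ, dif_neg h, eval_X]
  have := congrArg (eval fun s : {a // a ∉ Set.range p} ↦ y s) hF0
  simpa only [eval_aeval, hφ, map_zero] using this

/-- A relation between the values of `G` at the normal forms `y ∘ p = c` holds on the dense open set
`D ≠ 0`, hence everywhere. -/
lemma exists_ne_zero_eval_eq_zero_of_normal_form [Infinite R] [Fintype τ] [Fintype β] [Fintype ι]
    (G : β → MvPolynomial τ R) {p : ι → τ} (hp : p.Injective) (c : ι → R)
    (hcard : Fintype.card τ < Fintype.card β + Fintype.card ι)
    {D : MvPolynomial τ R} (hD : D ≠ 0)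
    (hG : ∀ x : τ → R, eval x D ≠ 0 →
      ∃ y : τ → R, y ∘ p = c ∧ ∀ b, eval y (G b) = eval x (G b)) :
    ∃ F : MvPolynomial β R, F ≠ 0 ∧ ∀ x : τ → R, eval (fun b ↦ eval x (G b)) F = 0 := by
  obtain ⟨F, hF, hF0⟩ := exists_ne_zero_eval_eq_zero_of_comp_eq G hp c hcard
  have hzero : D * aeval G F = 0 := by
    refine MvPolynomial.funext fun x ↦ ?_
    rw [map_mul, map_zero, mul_eq_zero, or_iff_not_imp_left, eval_aeval]
    intro hx
    obtain ⟨y, hy, hxy⟩ := hG x hx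
    simpa only [hxy] using hF0 y hy
  refine ⟨F, hF, fun x ↦ ?_⟩
  rw [← eval_aeval, (mul_eq_zero.1 hzero).resolve_left hD, map_zero]

end PolynomialMaps

section BinaryVectors

/-- The bracket `[v w]` of two vectors of the plane: the determinant with rows `v` and `w`, which
vanishes when `v` and `w` represent the same point of the projective line. -/
def bracket {R : Type*} [CommRing R] (v w : Fin 2 → R) : R := v 0 * w 1 - v 1 * w 0

@[simp] lemma bracket_self {R : Type*} [CommRing R] (v : Fin 2 → R) : bracket v v = 0 := by
  simp only [bracket]
  ring

variable {K κ : Type*} [Field K]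

lemma exists_smul_eq_of_bracket_eq_zero {v w : Fin 2 → K} (hv : v ≠ 0) (h : bracket v w = 0) :
    ∃ c : K, c • v = w := by
  have hdet : det ![v, w] = bracket v w := by exact det_fin_two _
  have hdep : ¬ LinearIndependent K ![v, w] := fun hli ↦
    ((isUnit_iff_isUnit_det _).1 (linearIndependent_rows_iff_isUnit.1 hli)).ne_zero (hdet.trans h)
  simpa [LinearIndependent.pair_iff' hv] using hdep

/-- The projectivity of the line that sends `p`, `q`, `r` to `[0:1]`, `[1:1]`, `[1:0]`. -/
lemma exists_isUnit_mulVec_eq_bracket {p q r : Fin 2 → K} (hpq : bracket p q ≠ 0)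
    (hqr : bracket q r ≠ 0) (hpr : bracket p r ≠ 0) :
    ∃ g : Matrix (Fin 2) (Fin 2) K, IsUnit g ∧
      ∀ u, g *ᵥ u = ![bracket p u * bracket q r, bracket u r * bracket p q] := by
  refine ⟨!![-bracket q r * p 1, bracket q r * p 0; bracket p q * r 1, -bracket p q * r 0],
    ?_, fun u ↦ ?_⟩
  · rw [isUnit_iff_isUnit_det, isUnit_iff_ne_zero]
    convert neg_ne_zero.2 (mul_ne_zero (mul_ne_zero hpq hqr) hpr) using 1
    simp only [det_fin_two_of, bracket]
    ring
  · ext i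
    fin_cases i <;> simp only [mulVec, dotProduct, Fin.sum_univ_two, bracket, of_apply, cons_val',
      cons_val_zero, cons_val_one, cons_val_fin_one, Fin.zero_eta, Fin.mk_one] <;> ring

lemma exists_projective_normal_form [DecidableEq κ] (v : κ → Fin 2 → K)
    (hv : Pairwise fun j k ↦ bracket (v j) (v k) ≠ 0) (t : Fin 3 ↪ κ) :
    ∃ (g : Matrix (Fin 2) (Fin 2) K) (d : κ → K), IsUnit g ∧ (∀ k, d k ≠ 0) ∧
      (∀ k, (d k • g *ᵥ v k) 1 = if k = t 2 then 0 else 1) ∧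
      ∀ j, (d (t j) • g *ᵥ v (t j)) 0 = ![0, 1, 1] j := by
  have ht {i j : Fin 3} (hij : i ≠ j) : bracket (v (t i)) (v (t j)) ≠ 0 := hv (t.injective.ne hij)
  have h01 := ht (i := 0) (j := 1) (by decide)
  have h12 := ht (i := 1) (j := 2) (by decide)
  have h02 := ht (i := 0) (j := 2) (by decide)
  obtain ⟨g, hg, hgv⟩ := exists_isUnit_mulVec_eq_bracket h01 h12 h02
  let e (k : κ) : K := (g *ᵥ v k) (if k = t 2 then 0 else 1)
  have he (k : κ) : e k ≠ 0 := by
    by_cases hk : k = t 2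
    · simpa [e, hk, hgv] using ⟨h02, h12⟩
    · simpa [e, hk, hgv] using ⟨hv hk, h01⟩
  refine ⟨g, fun k ↦ (e k)⁻¹, hg, fun k ↦ inv_ne_zero (he k), fun k ↦ ?_, fun j ↦ ?_⟩
  · by_cases hk : k = t 2
    · simp [hk, hgv]
    · simpa [e, hk] using inv_mul_cancel₀ (he k)
  · fin_cases j
    · simp [hgv]
    · have he1 : e (t 1) = (g *ᵥ v (t 1)) 0 := by simp [e, hgv, mul_comm]
      change (e (t 1))⁻¹ * (g *ᵥ v (t 1)) 0 = 1
      rw [← he1, inv_mul_cancel₀ (he (t 1))]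
    · simpa [e] using inv_mul_cancel₀ (he (t 2))

end BinaryVectors

section RationalNormalCurve

variable {n : ℕ}

lemma veron_smul (c : ℂ) (v : Fin 2 → ℂ) : veron n (c • v) = c ^ n • veron n v := by
  funext k
  have hk : c ^ n = c ^ (k : ℕ) * c ^ (n - k : ℕ) := by rw [← pow_add, Nat.add_sub_of_le k.is_le]
  simp only [veron, Pi.smul_apply, smul_eq_mul, hk]
  ring

lemma exists_dual_veron_eq_eval {p : MvPolynomial (Fin 2) ℂ} (hp : p.IsHomogeneous n) :
    ∃ f : Module.Dual ℂ (Fin (n + 1) → ℂ), ∀ v, f (veron n v) = eval v p := by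
  refine ⟨∑ m ∈ p.support, p.coeff m • LinearMap.proj (Fin.ofNat (n + 1) (m 0)), fun v ↦ ?_⟩
  rw [eval_eq', LinearMap.sum_apply]
  refine Finset.sum_congr rfl fun m hm ↦ ?_
  have hdeg : m 0 + m 1 = n := by
    simpa [Finsupp.weight_apply, Finsupp.sum_fintype] using hp (mem_support_iff.1 hm)
  have h0 : m 0 % (n + 1) = m 0 := Nat.mod_eq_of_lt (by omega)
  have h1 : n - m 0 = m 1 := by omega
  simp [veron, Fin.prod_univ_two, h0, h1]

lemma isHomogeneous_linear {R : Type*} [CommSemiring R] (a b : R) :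
    (C a * X 0 + C b * X 1 : MvPolynomial (Fin 2) R).IsHomogeneous 1 :=
  (isHomogeneous_C_mul_X a 0).add (isHomogeneous_C_mul_X b 1)

/-- The matrix acting on binary forms is the `n`-th symmetric power of `g`. -/
lemma exists_veron_mulVec (n : ℕ) (g : Matrix (Fin 2) (Fin 2) ℂ) :
    ∃ S : Matrix (Fin (n + 1)) (Fin (n + 1)) ℂ, ∀ v, veron n (g *ᵥ v) = S *ᵥ veron n v := by
  have hrow (k : Fin (n + 1)) : ∃ f : Module.Dual ℂ (Fin (n + 1) → ℂ),
      ∀ v, f (veron n v) = veron n (g *ᵥ v) k := by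
    have hp := ((isHomogeneous_linear (g 0 0) (g 0 1)).pow k).mul
      ((isHomogeneous_linear (g 1 0) (g 1 1)).pow (n - k))
    rw [one_mul, one_mul, Nat.add_sub_of_le k.is_le] at hp
    obtain ⟨f, hf⟩ := exists_dual_veron_eq_eval hp
    exact ⟨f, fun v ↦ by simp [hf, veron, mulVec, dotProduct]⟩
  choose f hf using hrow
  refine ⟨LinearMap.toMatrix' (LinearMap.pi f), fun v ↦ ?_⟩
  rw [LinearMap.toMatrix'_mulVec]
  exact funext fun k ↦ (hf k v).symm

lemma exists_dual_veron_eq_prod_bracket {ι : Type*} (s : Finset ι) (hs : s.card ≤ n)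
    (v : ι → Fin 2 → ℂ) (c : Fin 2) :
    ∃ f : Module.Dual ℂ (Fin (n + 1) → ℂ),
      ∀ u, f (veron n u) = (∏ j ∈ s, bracket (v j) u) * u c ^ (n - s.card) := by
  have hp := (IsHomogeneous.prod s _ (fun _ ↦ 1) fun j _ ↦
    isHomogeneous_linear (-v j 1) (v j 0)).mul (isHomogeneous_X_pow (R := ℂ) c (n - s.card))
  rw [← Finset.card_eq_sum_ones, Nat.add_sub_of_le hs] at hp
  obtain ⟨f, hf⟩ := exists_dual_veron_eq_eval hp
  refine ⟨f, fun u ↦ ?_⟩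
  have hbracket (j : ι) : eval u (C (-v j 1) * X 0 + C (v j 0) * X 1) = bracket (v j) u := by
    simp only [bracket, map_add, map_mul, eval_C, eval_X]
    ring
  simp only [hf, map_mul, map_prod, map_pow, eval_X, hbracket]

lemma linearIndependent_veron {ι : Type*} [Fintype ι] (hι : Fintype.card ι ≤ n + 1)
    {v : ι → Fin 2 → ℂ} (hv0 : ∀ k, v k ≠ 0)
    (hv : Pairwise fun j k ↦ bracket (v j) (v k) ≠ 0) :
    LinearIndependent ℂ fun k ↦ veron n (v k) := by
  classical
  have hdual (k : ι) : ∃ f : Module.Dual ℂ (Fin (n + 1) → ℂ),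
      (∀ j, j ≠ k → f (veron n (v j)) = 0) ∧ f (veron n (v k)) ≠ 0 := by
    obtain ⟨c, hc⟩ : ∃ c, v k c ≠ 0 := Function.ne_iff.1 (hv0 k)
    have hcard : (Finset.univ.erase k).card ≤ n := by
      rw [Finset.card_erase_of_mem (Finset.mem_univ k), Finset.card_univ]
      omega
    obtain ⟨f, hf⟩ := exists_dual_veron_eq_prod_bracket _ hcard v c
    refine ⟨f, fun j hj ↦ ?_, ?_⟩
    · rw [hf, Finset.prod_eq_zero (Finset.mem_erase.2 ⟨hj, Finset.mem_univ j⟩) (bracket_self _),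
        zero_mul]
    · rw [hf]
      exact mul_ne_zero (Finset.prod_ne_zero_iff.2 fun j hj ↦ hv (Finset.ne_of_mem_erase hj))
        (pow_ne_zero _ hc)
  choose f hf0 hf using hdual
  refine LinearIndependent.of_pairwise_dual_eq_zero_one _
    (fun k ↦ (f k (veron n (v k)))⁻¹ • f k) (fun j k hjk ↦ ?_) fun k ↦ ?_
  · simp [hf0 j k hjk.symm]
  · exact inv_mul_cancel₀ (hf k)

/-- The matrix with columns the images under `veron` of a family of vectors of the plane. -/
def veronMatrix {ι : Type*} (n : ℕ) (v : ι → Fin 2 → ℂ) : Matrix (Fin (n + 1)) ι ℂ :=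
  of fun r k ↦ veron n (v k) r

lemma col_mul_veronMatrix {ι m : Type*} (M : Matrix m (Fin (n + 1)) ℂ) (v : ι → Fin 2 → ℂ)
    (k : ι) : (M * veronMatrix n v).col k = M *ᵥ veron n (v k) := rfl

lemma exists_mul_veronMatrix_smul_mulVec (n : ℕ) {g : Matrix (Fin 2) (Fin 2) ℂ} (hg : IsUnit g) :
    ∃ S : Matrix (Fin (n + 1)) (Fin (n + 1)) ℂ,
      ∀ {ι : Type*} [Fintype ι] [DecidableEq ι] (d : ι → ℂ) (v : ι → Fin 2 → ℂ),
        S * veronMatrix n (fun k ↦ d k • g *ᵥ v k) =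
          veronMatrix n v * diagonal fun k ↦ d k ^ n := by
  obtain ⟨S, hS⟩ := exists_veron_mulVec n g⁻¹
  refine ⟨S, fun d v ↦ ext_col fun k ↦ ?_⟩
  have hinv : g⁻¹ *ᵥ g *ᵥ v k = v k := by
    rw [mulVec_mulVec, nonsing_inv_mul g ((isUnit_iff_isUnit_det g).1 hg), one_mulVec]
  rw [col_mul_veronMatrix, ← hS, mulVec_smul, hinv, veron_smul]
  ext r
  simp [veronMatrix, mul_comm]

/-- The image of the standard rational normal curve under the matrix `M`. -/
def curveOfFrame (M : Matrix (Fin (n + 1)) (Fin (n + 1)) ℂ) : Set (PP n) :=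
  {P : PP n | ∃ v : Fin 2 → ℂ, v ≠ 0 ∧ ∃ c : ℂ, c ≠ 0 ∧ P.rep = c • M *ᵥ veron n v}

lemma pairwise_bracket_ne_zero_of_rep_eq {ι : Type*} {M : Matrix (Fin (n + 1)) (Fin (n + 1)) ℂ}
    {P : ι → PP n} (hP : P.Injective) {v : ι → Fin 2 → ℂ} (hv : ∀ k, v k ≠ 0) {c : ι → ℂ}
    (hrep : ∀ k, (P k).rep = c k • M *ᵥ veron n (v k)) :
    Pairwise fun j k ↦ bracket (v j) (v k) ≠ 0 := by
  intro j k hjk h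
  obtain ⟨a, ha⟩ := exists_smul_eq_of_bracket_eq_zero (hv j) h
  have hcj : c j ≠ 0 := fun h0 ↦ (P j).rep_nonzero (by rw [hrep, h0, zero_smul])
  refine hjk (hP (Eq.symm ?_))
  rw [← (P j).mk_rep, ← (P k).mk_rep, Projectivization.mk_eq_mk_iff']
  refine ⟨c k * a ^ n * (c j)⁻¹, ?_⟩
  rw [hrep j, hrep k, ← ha, veron_smul, mulVec_smul, smul_smul, smul_smul,
    inv_mul_cancel_right₀ hcj]

lemma exists_eq_mul_veronMatrix_mul {m : ℕ} (hm : m ≤ n + 1)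
    {M : Matrix (Fin (n + 1)) (Fin (n + 1)) ℂ} (hM : IsUnit M) {A : Matrix (Fin (n + 1)) (Fin m) ℂ}
    (P : Fin m ↪ ↥(curveOfFrame M ∩ projSet A)) :
    ∃ (v : Fin m → Fin 2 → ℂ) (B : Matrix (Fin m) (Fin m) ℂ), A = M * veronMatrix n v * B := by
  have hcurve (k : Fin m) : (P k).1 ∈ curveOfFrame M := (P k).2.1
  choose v hv c hc hrep using hcurve
  have hbracket :=
    pairwise_bracket_ne_zero_of_rep_eq (Subtype.val_injective.comp P.injective) hv hrep
  have hli : LinearIndependent ℂ (M * veronMatrix n v).col :=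
    (linearIndependent_veron (by simpa using hm) hv hbracket).map' M.mulVecLin
      (LinearMap.ker_eq_bot.2 (mulVec_injective_of_isUnit hM))
  obtain ⟨B, hB⟩ := exists_eq_mul_of_col_mem_span le_rfl hli (A := A) fun k ↦ by
    have hmem : (P k).1.rep ∈ Submodule.span ℂ (Set.range A.col) := (P k).2.2
    rw [hrep] at hmem
    exact (Submodule.smul_mem_iff _ (hc k)).1 hmem
  exact ⟨v, B, hB⟩

end RationalNormalCurve

section Parametrization

variable {n : ℕ} {L : Fin (n - 1) → ℕ}

/-- The labels `⟨i, j, k⟩` of the `k`-th point in which a curve meets the `j`-th `i`-dimensional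
component of a configuration of weight `L`. -/
abbrev IncidencePoint (L : Fin (n - 1) → ℕ) := (i : Fin (n - 1)) × Fin (L i) × Fin (i.1 + 1)

/-- The labels of the matrix entries of a configuration of weight `L`, as in `GenHolds`. -/
abbrev EntryIndex (L : Fin (n - 1) → ℕ) :=
  (i : Fin (n - 1)) × (Fin (L i) × Fin (n + 1) × Fin (i.1 + 1))

/-- The labels of the coordinates of `SecantData L`: the entries of the frame, of the points and
of the basis changes. -/
abbrev ParamIndex (L : Fin (n - 1) → ℕ) :=
  (Fin (n + 1) × Fin (n + 1)) ⊕ (IncidencePoint L × Fin 2) ⊕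
    ((i : Fin (n - 1)) × Fin (L i) × Fin (i.1 + 1) × Fin (i.1 + 1))

/-- A curve (through its frame, as in `curveOfFrame`), points on it (through homogeneous
coordinates on the line), and for every component of a configuration of weight `L` the matrix
expressing its given basis in terms of the corresponding points. No nondegeneracy is imposed, so
that these data form an affine space. -/
structure SecantData (L : Fin (n - 1) → ℕ) where
  frame : Matrix (Fin (n + 1)) (Fin (n + 1)) ℂ
  point : IncidencePoint L → Fin 2 → ℂ
  basisChange (i : Fin (n - 1)) : Fin (L i) → Matrix (Fin (i.1 + 1)) (Fin (i.1 + 1)) ℂ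

namespace SecantData

/-- The configuration of the linear spans of the points on the curve, given by the bases that the
basis changes produce from those points (spans only when the data are nondegenerate). -/
def config (P : SecantData L) : Config n L := fun i j ↦
  P.frame * veronMatrix n (fun k ↦ P.point ⟨i, j, k⟩) * P.basisChange i j

/-- The secant data as a point of affine space. -/
def coords (P : SecantData L) : ParamIndex L → ℂ :=
  Sum.elim (fun a ↦ P.frame a.1 a.2) <|
    Sum.elim (fun a ↦ P.point a.1 a.2) fun a ↦ P.basisChange a.1 a.2.1 a.2.2.1 a.2.2.2

lemma coords_surjective : (coords : SecantData L → ParamIndex L → ℂ).Surjective := fun x ↦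
  ⟨⟨of fun r q ↦ x (.inl (r, q)), fun k c ↦ x (.inr (.inl (k, c))),
    fun i j ↦ of fun k l ↦ x (.inr (.inr ⟨i, j, k, l⟩))⟩, by ext (_ | _ | _) <;> rfl⟩

/-- The entries of `config` as polynomials in `coords`. -/
def entryPolynomial (e : EntryIndex L) : MvPolynomial (ParamIndex L) ℂ :=
  ∑ k, (∑ q : Fin (n + 1), X (.inl (e.2.2.1, q)) *
    (X (.inr (.inl (⟨e.1, e.2.1, k⟩, 0))) ^ (q : ℕ) *
      X (.inr (.inl (⟨e.1, e.2.1, k⟩, 1))) ^ (n - q : ℕ))) *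
    X (.inr (.inr ⟨e.1, e.2.1, k, e.2.2.2⟩))

lemma eval_coords_entryPolynomial (P : SecantData L) (e : EntryIndex L) :
    eval P.coords (entryPolynomial e) = P.config e.1 e.2.1 e.2.2.1 e.2.2.2 := by
  simp [entryPolynomial, coords, config, veronMatrix, veron, mul_apply]

lemma exists_reparametrization (P : SecantData L) {g : Matrix (Fin 2) (Fin 2) ℂ} (hg : IsUnit g)
    {d : IncidencePoint L → ℂ} (hd : ∀ k, d k ≠ 0) {c : ℂ} (hc : c ≠ 0) :
    ∃ Q : SecantData L, Q.config = P.config ∧ (∀ k, Q.point k = d k • g *ᵥ P.point k) ∧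
      ∀ i j k l, Q.basisChange i j k l = c * (d ⟨i, j, k⟩ ^ n)⁻¹ * P.basisChange i j k l := by
  obtain ⟨S, hS⟩ := exists_mul_veronMatrix_smul_mulVec n hg
  refine ⟨⟨c⁻¹ • (P.frame * S), fun k ↦ d k • g *ᵥ P.point k,
    fun i j ↦ c • (diagonal (fun k ↦ (d ⟨i, j, k⟩ ^ n)⁻¹) * P.basisChange i j)⟩, ?_,
    fun k ↦ rfl, fun i j k l ↦ by simp [mul_assoc]⟩
  funext i j
  have hdiag : (diagonal fun k ↦ d ⟨i, j, k⟩ ^ n) * diagonal (fun k ↦ (d ⟨i, j, k⟩ ^ n)⁻¹) =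
      (1 : Matrix (Fin (i.1 + 1)) (Fin (i.1 + 1)) ℂ) := by
    simp [diagonal_mul_diagonal, hd]
  calc c⁻¹ • (P.frame * S) * veronMatrix n (fun k ↦ d ⟨i, j, k⟩ • g *ᵥ P.point ⟨i, j, k⟩) *
        c • (diagonal (fun k ↦ (d ⟨i, j, k⟩ ^ n)⁻¹) * P.basisChange i j)
      = P.frame * (veronMatrix n (fun k ↦ P.point ⟨i, j, k⟩) *
          diagonal fun k ↦ d ⟨i, j, k⟩ ^ n) *
        (diagonal (fun k ↦ (d ⟨i, j, k⟩ ^ n)⁻¹) * P.basisChange i j) := by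
        rw [← hS, Matrix.smul_mul, Matrix.smul_mul, Matrix.mul_smul, smul_smul, inv_mul_cancel₀ hc,
          one_smul, Matrix.mul_assoc P.frame]
    _ = P.frame * veronMatrix n (fun k ↦ P.point ⟨i, j, k⟩) *
        ((diagonal fun k ↦ d ⟨i, j, k⟩ ^ n) * diagonal (fun k ↦ (d ⟨i, j, k⟩ ^ n)⁻¹)) *
          P.basisChange i j := by simp only [Matrix.mul_assoc]
    _ = P.config i j := by rw [hdiag, Matrix.mul_one, config]

/-- The basis-change entry that is scaled to `1` in the normal form determined by three of the
points. -/
def pivot (t : Fin 3 ↪ IncidencePoint L) :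
    (i : Fin (n - 1)) × Fin (L i) × Fin (i.1 + 1) × Fin (i.1 + 1) :=
  ⟨(t 0).1, (t 0).2.1, (t 0).2.2, 0⟩

/-- The coordinates fixed by the normal form with respect to three of the points: the second
coordinates of all points, the first coordinates of the three, and the pivot. -/
def normalizedIndex (t : Fin 3 ↪ IncidencePoint L) : IncidencePoint L ⊕ Fin 3 ⊕ Unit → ParamIndex L
  | .inl k => .inr (.inl (k, 1))
  | .inr (.inl j) => .inr (.inl (t j, 0))
  | .inr (.inr ()) => .inr (.inr (pivot t))

/-- The values of the coordinates fixed by the normal form, which moves the three chosen points to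
`[0:1]`, `[1:1]` and `[1:0]`. -/
def normalizedValue (t : Fin 3 ↪ IncidencePoint L) : IncidencePoint L ⊕ Fin 3 ⊕ Unit → ℂ :=
  Sum.elim (fun k ↦ if k = t 2 then 0 else 1) (Sum.elim ![0, 1, 1] 1)

lemma normalizedIndex_injective (t : Fin 3 ↪ IncidencePoint L) :
    (normalizedIndex t).Injective := by
  rintro (k | j | _) (k' | j' | _) h <;> simp_all [normalizedIndex]

/-- The polynomial whose nonvanishing allows secant data to be normalized: the points are distinct
and the pivot is nonzero. -/
def normalizationPolynomial (t : Fin 3 ↪ IncidencePoint L) : MvPolynomial (ParamIndex L) ℂ :=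
  X (.inr (.inr (pivot t))) * ∏ p ∈ Finset.univ.offDiag,
    bracket (fun c ↦ X (.inr (.inl (p.1, c)))) fun c ↦ X (.inr (.inl (p.2, c)))

lemma eval_coords_normalizationPolynomial_ne_zero_iff (P : SecantData L)
    (t : Fin 3 ↪ IncidencePoint L) :
    eval P.coords (normalizationPolynomial t) ≠ 0 ↔
      P.coords (.inr (.inr (pivot t))) ≠ 0 ∧
        Pairwise fun j k ↦ bracket (P.point j) (P.point k) ≠ 0 := by
  rw [normalizationPolynomial, map_mul, map_prod, mul_ne_zero_iff, Finset.prod_ne_zero_iff, eval_X]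
  simp [bracket, coords, Pairwise]

lemma normalizationPolynomial_ne_zero (t : Fin 3 ↪ IncidencePoint L) :
    normalizationPolynomial t ≠ 0 := by
  let P : SecantData L := ⟨0, fun k ↦ ![(Encodable.encode k : ℂ), 1], fun _ _ ↦ of fun _ _ ↦ 1⟩
  have hP : eval P.coords (normalizationPolynomial t) ≠ 0 := by
    refine (P.eval_coords_normalizationPolynomial_ne_zero_iff t).2 ⟨one_ne_zero, fun j k hjk ↦ ?_⟩
    simpa [P, bracket, sub_eq_zero] using hjk
  exact fun h ↦ hP (by rw [h, map_zero])

lemma exists_normal_form (P : SecantData L) (t : Fin 3 ↪ IncidencePoint L)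
    (hP : eval P.coords (normalizationPolynomial t) ≠ 0) :
    ∃ Q : SecantData L, Q.config = P.config ∧ Q.coords ∘ normalizedIndex t = normalizedValue t := by
  obtain ⟨hpivot, hbracket⟩ := (P.eval_coords_normalizationPolynomial_ne_zero_iff t).1 hP
  obtain ⟨g, d, hg, hd, hchart, hthree⟩ := exists_projective_normal_form P.point hbracket t
  obtain ⟨Q, hQ, hpoint, hbasis⟩ := P.exists_reparametrization hg hd
    (mul_ne_zero (pow_ne_zero n (hd (t 0))) (inv_ne_zero hpivot))
  refine ⟨Q, hQ, funext ?_⟩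
  rintro (k | j | _)
  · exact (congrFun (hpoint k) 1).trans (hchart k)
  · exact (congrFun (hpoint (t j)) 0).trans (hthree j)
  · have hd0 := pow_ne_zero n (hd (t 0))
    calc Q.coords (.inr (.inr (pivot t)))
        = d (t 0) ^ n * (P.coords (.inr (.inr (pivot t))))⁻¹ * (d (t 0) ^ n)⁻¹ *
            P.coords (.inr (.inr (pivot t))) := hbasis _ _ _ _
      _ = 1 := by field_simp

lemma exists_config_eq_of_maxIntersects {C : Set (PP n)} (hC : IsRNC n C) {A : Config n L}
    (hA : MaxIntersects C A) : ∃ P : SecantData L, P.config = A := by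
  obtain ⟨M, hM, rfl⟩ := hC
  have hcomponent (i : Fin (n - 1)) (j : Fin (L i)) :
      ∃ (v : Fin (i.1 + 1) → Fin 2 → ℂ) (B : Matrix (Fin (i.1 + 1)) (Fin (i.1 + 1)) ℂ),
        A i j = M * veronMatrix n v * B := by
    have hcard : Nat.card ↥(curveOfFrame M ∩ projSet (A i j)) = i.1 + 1 := hA i j
    have : Finite ↥(curveOfFrame M ∩ projSet (A i j)) := Nat.finite_of_card_ne_zero (by omega)
    exact exists_eq_mul_veronMatrix_mul (by omega) ((isUnit_iff_isUnit_det M).2 hM)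
      (Finite.equivFinOfCardEq hcard).symm.toEmbedding
  choose v B hAvB using hcomponent
  exact ⟨⟨M, fun k ↦ v k.1 k.2.1 k.2.2, B⟩, funext fun i ↦ funext fun j ↦ (hAvB i j).symm⟩

end SecantData

end Parametrization

section DimensionCount

variable {n : ℕ} {L : Fin (n - 1) → ℕ}

lemma three_le_card_incidencePoint
    (h : (n + 3) * (n - 1) < ∑ i : Fin (n - 1), (i.1 + 1) * (n - 1 - i.1) * L i) :
    3 ≤ Fintype.card (IncidencePoint L) := by
  have hle : ∑ i : Fin (n - 1), (i.1 + 1) * (n - 1 - i.1) * L i ≤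
      Fintype.card (IncidencePoint L) * (n - 1) := by
    simp only [Fintype.card_sigma, Fintype.card_prod, Fintype.card_fin, Finset.sum_mul]
    refine Finset.sum_le_sum fun i _ ↦ ?_
    calc (i.1 + 1) * (n - 1 - i.1) * L i ≤ (i.1 + 1) * (n - 1) * L i :=
          Nat.mul_le_mul_right _ (Nat.mul_le_mul_left _ (Nat.sub_le _ _))
      _ = L i * (i.1 + 1) * (n - 1) := by ring
  have := Nat.lt_of_mul_lt_mul_right (h.trans_le hle)
  omega

lemma card_paramIndex_lt
    (h : (n + 3) * (n - 1) < ∑ i : Fin (n - 1), (i.1 + 1) * (n - 1 - i.1) * L i) :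
    Fintype.card (ParamIndex L) <
      Fintype.card (EntryIndex L) + Fintype.card (IncidencePoint L ⊕ Fin 3 ⊕ Unit) := by
  have hn : 1 < n := by
    by_contra! hn
    obtain rfl | rfl : n = 0 ∨ n = 1 := by omega
    all_goals simp at h
  have hentries : ∑ i : Fin (n - 1), L i * ((n + 1) * (i.1 + 1)) =
      ∑ i, L i * (i.1 + 1) + ∑ i, L i * ((i.1 + 1) * (i.1 + 1)) +
        ∑ i, (i.1 + 1) * (n - 1 - i.1) * L i := by
    rw [← Finset.sum_add_distrib, ← Finset.sum_add_distrib]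
    refine Finset.sum_congr rfl fun i _ ↦ ?_
    have hdim : n + 1 = 1 + (i.1 + 1) + (n - 1 - i.1) := by omega
    rw [hdim]
    ring
  have hframe : (n + 3) * (n - 1) + 4 = (n + 1) * (n + 1) := by
    obtain ⟨m, rfl⟩ : ∃ m, n = m + 1 := ⟨n - 1, by omega⟩
    rw [Nat.add_sub_cancel]
    ring
  simp only [Fintype.card_sum, Fintype.card_prod, Fintype.card_sigma, Fintype.card_fin,
    Fintype.card_unit]
  omega

end DimensionCount

theorem nonfeasibility_numerical_general (n : ℕ) (L : Fin (n - 1) → ℕ)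
    (h : (n + 3) * (n - 1) < ∑ i : Fin (n - 1), (i.1 + 1) * (n - 1 - i.1) * L i) :
    NonFeasible n L := by
  obtain ⟨t⟩ : Nonempty (Fin 3 ↪ IncidencePoint L) :=
    Function.Embedding.nonempty_of_card_le (by simpa using three_le_card_incidencePoint h)
  obtain ⟨F, hF, hzero⟩ := exists_ne_zero_eval_eq_zero_of_normal_form SecantData.entryPolynomial
    (SecantData.normalizedIndex_injective t) (SecantData.normalizedValue t) (card_paramIndex_lt h)
    (SecantData.normalizationPolynomial_ne_zero t) fun x hx ↦ by
      obtain ⟨P, rfl⟩ := SecantData.coords_surjective x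
      obtain ⟨Q, hQ, hcoords⟩ := P.exists_normal_form t hx
      exact ⟨Q.coords, hcoords, fun e ↦ by simp only [SecantData.eval_coords_entryPolynomial, hQ]⟩
  refine ⟨F, hF, fun A _ hFA ⟨C, hC, hA⟩ ↦ hFA ?_⟩
  obtain ⟨P, rfl⟩ := SecantData.exists_config_eq_of_maxIntersects hC hA
  simpa only [SecantData.eval_coords_entryPolynomial] using hzero P.coords

/-- If `Σ (i+1)(n-1-i)·lᵢ > (n+3)(n-1)` then `L` is non-feasible. -/
theorem nonfeasibility_numerical (n : ℕ) (hn : 3 ≤ n) (L : Fin (n - 1) → ℕ)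
    (h : (n + 3) * (n - 1) < ∑ i : Fin (n - 1), (i.1 + 1) * (n - 1 - i.1) * L i) :
    NonFeasible n L :=
  nonfeasibility_numerical_general n L h

end
end

section
/- Let n ≥ 3, let 0 ≤ k ≤ n−2 and d ≥ 1 be integers. Let Λ' ⊂ ℙⁿ(ℂ) be a configuration of linear subspaces, let Γ be a k-dimensional linear subspace, set Λ = Λ' ∪ Γ, and let L = (l₀,…,l_{n−2}) be the weight vector of Λ. Suppose that for generic such Λ' and Γ the Hilbert function satisfies H(Λ, d) = H(Λ', d) + C(d+k, k), and suppose moreover that Σ_{i=0}^{n−2} lᵢ(i+1) − 1 > d·n. Then L is non-feasible: for a generic configuration of weight L, no rational normal curve maximally intersects it. -/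
noncomputable section

/-- The union of all components of a configuration, as a subset of `ℙⁿ`. -/
def configSet {n : ℕ} {L : Fin (n - 1) → ℕ} (A : Config n L) : Set (PP n) :=
  ⋃ i, ⋃ j, projSet (A i j)

/-- The space of degree-`d` homogeneous polynomials in `n+1` variables. -/
def homogDeg (n d : ℕ) : Submodule ℂ (MvPolynomial (Fin (n + 1)) ℂ) :=
  MvPolynomial.homogeneousSubmodule (Fin (n + 1)) ℂ d

/-- The subspace of degree-`d` homogeneous polynomials vanishing identically on a subset
`X ⊆ ℙⁿ`. -/
def vanishOn (n d : ℕ) (X : Set (PP n)) : Submodule ℂ (MvPolynomial (Fin (n + 1)) ℂ) :=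
  homogDeg n d ⊓
    ⨅ P : X, LinearMap.ker (MvPolynomial.aeval (R := ℂ) (P : PP n).rep).toLinearMap

/-- The Hilbert function of `X ⊆ ℙⁿ` in degree `d`: the codimension, inside the space of
all degree-`d` homogeneous polynomials in `n+1` variables, of the subspace of those
vanishing identically on `X`. -/
def HilbF (n d : ℕ) (X : Set (PP n)) : ℕ :=
  Module.finrank ℂ (homogDeg n d) - Module.finrank ℂ (vanishOn n d X)

/-!
By hypothesis, adding `Γ` to a generic `Λ'` raises the Hilbert function by the full
`C(d+k,k) = dim H⁰(Γ, 𝒪(d))`, so every form of degree `d` on `Γ` extends to a form of degree `d`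
vanishing on `Λ'`. If a rational normal curve `C` maximally intersects `Λ' ∪ Γ`, its `k + 1` points
on `Γ` are linearly independent, so some `f` of degree `d` vanishes on `Λ'` and at `k` of these
points but not at the last one; in particular `C` is not contained in `{f = 0}`.

Several components of `Λ'` may pass through the same point of `C`. Generically any components that
have a common point are transverse, and then `f` vanishes at that point to order at least their
number. So `C` meets `{f = 0}` with multiplicity at least `Σ lᵢ(i+1) - 1`, which contradicts Bezout.
-/

section Generic

variable {K σ τ : Type*} [Field K]

/-- A property of points of the affine space `K^σ` holds generically if it holds on the
complement of a hypersurface. -/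
def HoldsGenerically (Q : (σ → K) → Prop) : Prop :=
  ∃ F : MvPolynomial σ K, F ≠ 0 ∧ ∀ x, MvPolynomial.eval x F ≠ 0 → Q x

namespace HoldsGenerically

theorem mono {Q R : (σ → K) → Prop} (hQ : HoldsGenerically Q) (h : ∀ x, Q x → R x) :
    HoldsGenerically R :=
  let ⟨F, hF, hFQ⟩ := hQ
  ⟨F, hF, fun x hx => h x (hFQ x hx)⟩

theorem forall_of_finite {ι : Type*} [Finite ι] {Q : ι → (σ → K) → Prop}
    (hQ : ∀ i, HoldsGenerically (Q i)) : HoldsGenerically fun x => ∀ i, Q i x := by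
  cases nonempty_fintype ι
  choose F hF hFQ using hQ
  refine ⟨∏ i, F i, Finset.prod_ne_zero_iff.2 fun i _ => hF i, fun x hx i => hFQ i x ?_⟩
  rw [map_prod, Finset.prod_ne_zero_iff] at hx
  exact hx i (Finset.mem_univ i)

theorem comp_injective {Q : (σ → K) → Prop} (hQ : HoldsGenerically Q) {φ : σ → τ}
    (hφ : Function.Injective φ) : HoldsGenerically fun x : τ → K => Q (x ∘ φ) := by
  obtain ⟨F, hF, hFQ⟩ := hQ
  refine ⟨MvPolynomial.rename φ F, ?_, fun x hx => hFQ _ ?_⟩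
  · rwa [Ne, MvPolynomial.rename_eq_zero_iff_of_injective _ hφ]
  · rwa [MvPolynomial.eval_rename] at hx

end HoldsGenerically

variable {a b : Type*} (B : Matrix a b (MvPolynomial σ K)) {x₀ : σ → K}

theorem holdsGenerically_det_ne_zero [Fintype a] [DecidableEq a]
    (B : Matrix a a (MvPolynomial σ K)) (h : (B.map (MvPolynomial.eval x₀)).det ≠ 0) :
    HoldsGenerically fun x => (B.map (MvPolynomial.eval x)).det ≠ 0 := by
  have eval_det (x : σ → K) :
      MvPolynomial.eval x B.det = (B.map (MvPolynomial.eval x)).det := by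
    rw [RingHom.map_det, RingHom.mapMatrix_apply]
  exact ⟨B.det, fun h0 => h (by rw [← eval_det, h0, map_zero]), fun x hx => by
    simpa only [← eval_det] using hx⟩

variable [Finite a] [Fintype b]

theorem holdsGenerically_mulVec_surjective
    (h : Function.Surjective (B.map (MvPolynomial.eval x₀)).mulVec) :
    HoldsGenerically fun x => Function.Surjective (B.map (MvPolynomial.eval x)).mulVec := by
  classical
  cases nonempty_fintype a
  obtain ⟨R, hR⟩ := Matrix.mulVec_surjective_iff_exists_right_inverse.1 h
  let R' : Matrix b a (MvPolynomial σ K) := R.map MvPolynomial.C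
  have map_mul_inverse (x : σ → K) : (B * R').map (MvPolynomial.eval x)
      = B.map (MvPolynomial.eval x) * R := by
    rw [Matrix.map_mul, Matrix.map_map]
    congr 1
    ext
    simp
  refine (holdsGenerically_det_ne_zero (x₀ := x₀) (B * R') ?_).mono fun x hx => ?_
  · simp [map_mul_inverse, hR]
  · rw [map_mul_inverse] at hx
    refine Matrix.mulVec_surjective_iff_exists_right_inverse.2
      ⟨R * (B.map (MvPolynomial.eval x) * R)⁻¹, ?_⟩
    rw [← Matrix.mul_assoc, Matrix.mul_nonsing_inv _ hx.isUnit]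

theorem holdsGenerically_mulVec_injective
    (h : Function.Injective (B.map (MvPolynomial.eval x₀)).mulVec) :
    HoldsGenerically fun x => Function.Injective (B.map (MvPolynomial.eval x)).mulVec := by
  classical
  cases nonempty_fintype a
  obtain ⟨g, hg⟩ := (B.map (MvPolynomial.eval x₀)).mulVecLin.exists_leftInverse_of_injective
    (LinearMap.ker_eq_bot.2 h)
  have left_inverse : LinearMap.toMatrix' g * B.map (MvPolynomial.eval x₀) = 1 := by
    simpa [LinearMap.toMatrix'_comp, ← Matrix.toLin'_apply'] using congrArg LinearMap.toMatrix' hg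
  let R' : Matrix b a (MvPolynomial σ K) := (LinearMap.toMatrix' g).map MvPolynomial.C
  have map_inverse_mul (x : σ → K) : (R' * B).map (MvPolynomial.eval x)
      = LinearMap.toMatrix' g * B.map (MvPolynomial.eval x) := by
    rw [Matrix.map_mul, Matrix.map_map]
    congr 1
    ext
    simp
  refine (holdsGenerically_det_ne_zero (x₀ := x₀) (R' * B) ?_).mono fun x hx => ?_
  · simp [map_inverse_mul, left_inverse]
  · rw [map_inverse_mul] at hx
    have := Matrix.mulVec_injective_of_det_ne_zero hx
    refine Function.Injective.of_comp (f := (LinearMap.toMatrix' g).mulVec) ?_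
    simpa [Function.comp_def] using this

end Generic

section Transversality

variable {K V ι : Type*} [Ring K] [AddCommGroup V] [Module K V]

/-- A family of subspaces `W j` of `V` is transverse if the canonical map `V → ∏ j, V ⧸ W j` is
surjective; for finite families this says that the codimension of `⨅ j, W j` is the sum of the
codimensions of the `W j`. -/
def IsTransverse (W : ι → Submodule K V) : Prop :=
  Function.Surjective (LinearMap.pi fun j => (W j).mkQ)

theorem isTransverse_iff {W : ι → Submodule K V} :
    IsTransverse W ↔ ∀ w : ι → V, ∃ v, ∀ j, v - w j ∈ W j := by
  constructor
  · intro h w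
    obtain ⟨v, hv⟩ := h fun j => (W j).mkQ (w j)
    exact ⟨v, fun j => (Submodule.Quotient.eq _).1 (congrFun hv j)⟩
  · intro h y
    choose w hw using fun j => (W j).mkQ_surjective (y j)
    obtain ⟨v, hv⟩ := h w
    exact ⟨v, funext fun j => ((Submodule.Quotient.eq _).2 (hv j)).trans (hw j)⟩

theorem IsTransverse.exists_forall_mkQ_eq_ite {K V ι : Type*} [Field K] [AddCommGroup V]
    [Module K V] [DecidableEq ι] {W : ι → Submodule K V} (hW : IsTransverse W) :
    ∃ p : ι → V →ₗ[K] V, ∀ i j v, (W j).mkQ (p i v) = if i = j then (W j).mkQ v else 0 := by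
  obtain ⟨s, hs⟩ := LinearMap.exists_rightInverse_of_surjective _ (LinearMap.range_eq_top.2 hW)
  refine ⟨fun i => s ∘ₗ LinearMap.single K (fun j => V ⧸ W j) i ∘ₗ (W i).mkQ, fun i j v => ?_⟩
  have := congrFun (LinearMap.congr_fun hs (Pi.single i ((W i).mkQ v))) j
  simp only [LinearMap.comp_apply, LinearMap.pi_apply, LinearMap.id_apply] at this
  simp only [LinearMap.comp_apply, LinearMap.single_apply, this]
  split_ifs with h
  · subst h
    exact Pi.single_eq_same _ _
  · exact Pi.single_eq_of_ne' h _

/-- A family of subspaces is in general position if every finite subfamily is transverse or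
intersects in zero, i.e. its intersection has the expected dimension. -/
def InGeneralPosition (W : ι → Submodule K V) : Prop :=
  ∀ S : Finset ι, ⨅ j : S, W j = ⊥ ∨ IsTransverse fun j : S => W j

end Transversality

section TransversalityMatrix

variable {J ρ : Type*} {κ : J → Type*}

/-- The family of matrices with a given collection of entries. -/
def matrixOfEntries {R : Type*} (x : (Σ j, ρ × κ j) → R) (j : J) : Matrix ρ (κ j) R :=
  Matrix.of fun r c => x ⟨j, r, c⟩

variable [DecidableEq J] [DecidableEq ρ]

/-- The matrix of the linear map `(v, (cⱼ)ⱼ) ↦ (v + Aⱼ cⱼ)ⱼ`. It expresses transversality of the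
column spans of the `Aⱼ` as a condition on the rank of a single matrix. -/
def transversalityMatrix {R : Type*} [Semiring R] (A : ∀ j, Matrix ρ (κ j) R) :
    Matrix (Σ _ : J, ρ) (ρ ⊕ Σ j, κ j) R :=
  Matrix.fromCols ((1 : Matrix ρ ρ R).submatrix Sigma.snd id) (Matrix.blockDiagonal' A)

theorem transversalityMatrix_map {R S : Type*} [Semiring R] [Semiring S] (φ : R →+* S)
    (A : ∀ j, Matrix ρ (κ j) R) :
    (transversalityMatrix A).map φ = transversalityMatrix fun j => (A j).map φ := by
  rw [transversalityMatrix, Matrix.fromCols_map, Matrix.blockDiagonal'_map _ _ (map_zero φ),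
    ← Matrix.submatrix_map, Matrix.map_one _ (map_zero φ) (map_one φ), transversalityMatrix]

variable {K : Type*} [CommRing K] [Fintype J] [Fintype ρ] [∀ j, Fintype (κ j)]
  (A : ∀ j, Matrix ρ (κ j) K)

theorem transversalityMatrix_mulVec_apply (u : (ρ ⊕ Σ j, κ j) → K) (j : J) (r : ρ) :
    (transversalityMatrix A).mulVec u ⟨j, r⟩
      = u (Sum.inl r) + (A j).mulVec (fun c => u (Sum.inr ⟨j, c⟩)) r := by
  rw [transversalityMatrix, Matrix.fromCols_mulVec, Pi.add_apply]
  congr 1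
  · simp [Matrix.mulVec, dotProduct, Matrix.one_apply]
  · rw [Matrix.mulVec, dotProduct, Fintype.sum_sigma, Fintype.sum_eq_single j]
    · simp [Matrix.mulVec, dotProduct]
    · intro i hij
      simp [Matrix.blockDiagonal'_apply_ne _ _ _ hij.symm]

theorem transversalityMatrix_mulVec_surjective_iff :
    Function.Surjective (transversalityMatrix A).mulVec ↔
      IsTransverse fun j => LinearMap.range (A j).mulVecLin := by
  rw [isTransverse_iff]
  constructor
  · intro h w
    obtain ⟨u, hu⟩ := h fun p => w p.1 p.2
    refine ⟨u ∘ Sum.inl, fun j => ⟨-fun c => u (Sum.inr ⟨j, c⟩), funext fun r => ?_⟩⟩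
    have := congrFun hu ⟨j, r⟩
    rw [transversalityMatrix_mulVec_apply] at this
    simp [Matrix.mulVec_neg, ← this]
  · intro h w
    obtain ⟨v, hv⟩ := h fun j r => w ⟨j, r⟩
    choose c hc using hv
    refine ⟨Sum.elim v fun p => -c p.1 p.2, funext fun ⟨j, r⟩ => ?_⟩
    have := congrFun (hc j) r
    simp only [Matrix.mulVecLin_apply, Pi.sub_apply] at this
    have neg_column : (fun x => -c j x) = -c j := rfl
    simp [transversalityMatrix_mulVec_apply, neg_column, Matrix.mulVec_neg, this]

theorem transversalityMatrix_mulVec_eq_zero_iff (u : (ρ ⊕ Σ j, κ j) → K) :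
    (transversalityMatrix A).mulVec u = 0 ↔
      ∀ j, (A j).mulVec (fun c => u (Sum.inr ⟨j, c⟩)) = -(u ∘ Sum.inl) := by
  simp [funext_iff, Sigma.forall, transversalityMatrix_mulVec_apply, eq_neg_iff_add_eq_zero,
    add_comm]

variable {A}

theorem transversalityMatrix_mulVec_injective (hA : ∀ j, Function.Injective (A j).mulVec)
    (hinf : ⨅ j, LinearMap.range (A j).mulVecLin = ⊥) :
    Function.Injective (transversalityMatrix A).mulVec := by
  refine (injective_iff_map_eq_zero (transversalityMatrix A).mulVecLin).2 fun u hu => ?_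
  rw [Matrix.mulVecLin_apply, transversalityMatrix_mulVec_eq_zero_iff] at hu
  have left_eq_zero : u ∘ Sum.inl = 0 := by
    rw [← neg_eq_zero, ← Submodule.mem_bot K, ← hinf, Submodule.mem_iInf]
    exact fun j => ⟨_, hu j⟩
  funext p
  obtain r | ⟨j, c⟩ := p
  · exact congrFun left_eq_zero r
  · have block_eq_zero : (fun c => u (Sum.inr ⟨j, c⟩)) = 0 :=
      hA j (by rw [hu, left_eq_zero, neg_zero, Matrix.mulVec_zero])
    exact congrFun block_eq_zero c

theorem iInf_range_mulVecLin_eq_bot (hA : Function.Injective (transversalityMatrix A).mulVec) :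
    ⨅ j, LinearMap.range (A j).mulVecLin = ⊥ := by
  refine (Submodule.eq_bot_iff _).2 fun v hv => ?_
  rw [Submodule.mem_iInf] at hv
  choose c hc using hv
  have hker : (transversalityMatrix A).mulVec (Sum.elim (-v) fun p => c p.1 p.2) = 0 :=
    (transversalityMatrix_mulVec_eq_zero_iff A _).2 fun j => by simpa using hc j
  have := hA (hker.trans (Matrix.mulVec_zero _).symm)
  simpa using congrArg (· ∘ Sum.inl) this

end TransversalityMatrix

section CoordinateSubspaces

theorem exists_pairwise_disjoint_card_eq {J α : Type*} [Fintype J] [Fintype α] {q : J → ℕ}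
    (hq : ∑ j, q j ≤ Fintype.card α) :
    ∃ B : J → Finset α, (∀ j, (B j).card = q j) ∧ Pairwise (Function.onFun Disjoint B) := by
  obtain ⟨f⟩ := Function.Embedding.nonempty_of_card_le (α := Σ j, Fin (q j)) (β := α) (by simpa)
  refine ⟨fun j => Finset.univ.map ((Function.Embedding.sigmaMk j).trans f), by simp,
    fun i j hij => Finset.disjoint_left.2 ?_⟩
  simp only [Finset.mem_map, Finset.mem_univ, true_and, Function.Embedding.trans_apply]
  rintro _ ⟨c, rfl⟩ ⟨c', hc⟩
  exact hij (congrArg Sigma.fst (f.injective hc)).symm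

theorem exists_cover_card_eq {J α : Type*} [Fintype J] [Fintype α] {q : J → ℕ}
    (hq : ∀ j, q j ≤ Fintype.card α) (hcard : Fintype.card α ≤ ∑ j, q j) :
    ∃ B : J → Finset α, (∀ j, (B j).card = q j) ∧ ∀ a, ∃ j, a ∈ B j := by
  classical
  obtain ⟨g⟩ := Function.Embedding.nonempty_of_card_le (α := α) (β := Σ j, Fin (q j)) (by simpa)
  have card_fiber_le (j : J) : (Finset.univ.filter fun a => (g a).1 = j).card ≤ q j := by
    calc (Finset.univ.filter fun a => (g a).1 = j).card
        = ((Finset.univ.filter fun a => (g a).1 = j).map g).card := (Finset.card_map g).symm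
      _ ≤ (Finset.univ.map (Function.Embedding.sigmaMk j)).card :=
        Finset.card_le_card fun p hp => by
          obtain ⟨a, ha, rfl⟩ := Finset.mem_map.1 hp
          obtain rfl := (Finset.mem_filter.1 ha).2
          exact Finset.mem_map.2 ⟨(g a).2, Finset.mem_univ _, rfl⟩
      _ = q j := by simp
  choose B hB hBcard using fun j =>
    Finset.exists_superset_card_eq (card_fiber_le j) (hq j)
  exact ⟨B, hBcard, fun a => ⟨(g a).1, hB _ (by simp)⟩⟩

variable {K ρ : Type*} [CommRing K]

theorem exists_matrix_range_iff_forall_eq_zero {κ : Type*} [Fintype ρ] [Fintype κ] (B : Finset ρ)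
    (hB : B.card + Fintype.card κ = Fintype.card ρ) :
    ∃ A : Matrix ρ κ K, Function.Injective A.mulVec ∧
      ∀ v, v ∈ LinearMap.range A.mulVecLin ↔ ∀ r ∈ B, v r = 0 := by
  classical
  have card_complement : Fintype.card κ = Fintype.card {r // r ∉ B} := by
    rw [Fintype.card_subtype_compl, Fintype.card_coe]
    omega
  let e := Fintype.equivOfCardEq card_complement
  let s (c : κ) : ρ := e c
  have hs : Function.Injective s := Subtype.val_injective.comp e.injective
  refine ⟨LinearMap.toMatrix' (Function.ExtendByZero.linearMap K s), ?_, fun v => ?_⟩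
  · rw [funext (LinearMap.toMatrix'_mulVec _)]
    exact Function.extend_injective hs (0 : ρ → K)
  · rw [← Matrix.toLin'_apply', Matrix.toLin'_toMatrix']
    constructor
    · rintro ⟨c, rfl⟩ r hr
      exact Function.extend_apply' _ _ _ fun ⟨i, hi⟩ => (e i).2 (by rwa [← hi] at hr)
    · refine fun hv => ⟨v ∘ s, funext fun r => ?_⟩
      by_cases hr : r ∈ B
      · rw [hv r hr]
        exact Function.extend_apply' _ _ _ fun ⟨i, hi⟩ => (e i).2 (by rwa [← hi] at hr)
      · obtain ⟨i, hi⟩ := e.surjective ⟨r, hr⟩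
        obtain rfl : s i = r := congrArg Subtype.val hi
        exact hs.extend_apply _ _ i

variable {J : Type*} {B : J → Finset ρ} {W : J → Submodule K (ρ → K)}

theorem isTransverse_of_pairwise_disjoint (hW : ∀ j v, (∀ r ∈ B j, v r = 0) → v ∈ W j)
    (hB : Pairwise (Function.onFun Disjoint B)) : IsTransverse W := by
  classical
  refine isTransverse_iff.2 fun w =>
    ⟨fun r => if h : ∃ j, r ∈ B j then w h.choose r else 0, fun j => hW j _ fun r hr => ?_⟩
  have h : ∃ j, r ∈ B j := ⟨j, hr⟩
  have : h.choose = j := by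
    by_contra hne
    exact Finset.disjoint_left.1 (hB hne) h.choose_spec hr
  simp [h, this]

theorem iInf_eq_bot_of_cover (hW : ∀ j, ∀ v ∈ W j, ∀ r ∈ B j, v r = 0)
    (hB : ∀ r, ∃ j, r ∈ B j) : ⨅ j, W j = ⊥ := by
  refine (Submodule.eq_bot_iff _).2 fun v hv => funext fun r => ?_
  obtain ⟨j, hj⟩ := hB r
  exact hW j v (Submodule.mem_iInf _ |>.1 hv j) r hj

end CoordinateSubspaces

section GenericTransversality

variable {K J ρ : Type*} [Field K] {κ : J → Type*} [Fintype ρ] [∀ j, Fintype (κ j)]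

theorem exists_matrices_iInf_range_eq_bot_or_isTransverse [Finite J]
    (hκ : ∀ j, Fintype.card (κ j) ≤ Fintype.card ρ) :
    ∃ A : ∀ j, Matrix ρ (κ j) K, (∀ j, Function.Injective (A j).mulVec) ∧
      (⨅ j, LinearMap.range (A j).mulVecLin = ⊥ ∨
        IsTransverse fun j => LinearMap.range (A j).mulVecLin) := by
  cases nonempty_fintype J
  have exists_coordinate (B : J → Finset ρ)
      (hB : ∀ j, (B j).card = Fintype.card ρ - Fintype.card (κ j)) (j : J) :=
    exists_matrix_range_iff_forall_eq_zero (K := K) (κ := κ j) (B j)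
      (by rw [hB, Nat.sub_add_cancel (hκ j)])
  obtain hle | hge := le_total (∑ j, (Fintype.card ρ - Fintype.card (κ j))) (Fintype.card ρ)
  · obtain ⟨B, hBcard, hB⟩ := exists_pairwise_disjoint_card_eq hle
    choose A hinj hrange using exists_coordinate B hBcard
    exact ⟨A, hinj, Or.inr (isTransverse_of_pairwise_disjoint (fun j v => (hrange j v).2) hB)⟩
  · obtain ⟨B, hBcard, hB⟩ := exists_cover_card_eq (fun j => Nat.sub_le _ _) hge
    choose A hinj hrange using exists_coordinate B hBcard
    exact ⟨A, hinj, Or.inl (iInf_eq_bot_of_cover (fun j v => (hrange j v).1) hB)⟩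

theorem holdsGenerically_iInf_range_eq_bot_or_isTransverse [Finite J]
    (hκ : ∀ j, Fintype.card (κ j) ≤ Fintype.card ρ) :
    HoldsGenerically fun x : (Σ j, ρ × κ j) → K =>
      ⨅ j, LinearMap.range (matrixOfEntries x j).mulVecLin = ⊥ ∨
        IsTransverse fun j => LinearMap.range (matrixOfEntries x j).mulVecLin := by
  classical
  cases nonempty_fintype J
  let U := transversalityMatrix
    (matrixOfEntries (MvPolynomial.X : (Σ j, ρ × κ j) → MvPolynomial (Σ j, ρ × κ j) K))
  have map_eval (x : (Σ j, ρ × κ j) → K) :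
      U.map (MvPolynomial.eval x) = transversalityMatrix (matrixOfEntries x) := by
    rw [transversalityMatrix_map]
    congr 1
    ext
    simp [matrixOfEntries]
  obtain ⟨A, hinj, hA⟩ := exists_matrices_iInf_range_eq_bot_or_isTransverse (K := K) hκ
  have hU : U.map (MvPolynomial.eval fun p => A p.1 p.2.1 p.2.2) = transversalityMatrix A :=
    map_eval _
  obtain hbot | htrans := hA
  · refine (holdsGenerically_mulVec_injective U (hU ▸ transversalityMatrix_mulVec_injective hinj
      hbot)).mono fun x hx => Or.inl (iInf_range_mulVecLin_eq_bot ?_)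
    rwa [← map_eval]
  · refine (holdsGenerically_mulVec_surjective U (hU ▸
      (transversalityMatrix_mulVec_surjective_iff A).2 htrans)).mono fun x hx => Or.inr ?_
    rwa [← transversalityMatrix_mulVec_surjective_iff, ← map_eval]

theorem holdsGenerically_inGeneralPosition [Finite J]
    (hκ : ∀ j, Fintype.card (κ j) ≤ Fintype.card ρ) :
    HoldsGenerically fun x : (Σ j, ρ × κ j) → K =>
      InGeneralPosition fun j => LinearMap.range (matrixOfEntries x j).mulVecLin := by
  refine HoldsGenerically.forall_of_finite fun S => ?_
  let φ : (Σ j : S, ρ × κ j) → Σ j, ρ × κ j := Sigma.map Subtype.val fun _ => id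
  have hφ : Function.Injective φ :=
    Subtype.val_injective.sigma_map fun _ => Function.injective_id
  exact ((holdsGenerically_iInf_range_eq_bot_or_isTransverse (κ := fun j : S => κ j)
    fun j => hκ j).comp_injective hφ).mono fun _ hx => hx

end GenericTransversality

section Multiplicity

theorem X_dvd_of_forall_eval_eq_zero {σ R : Type*} [CommRing R] [IsDomain R] [Infinite R]
    {g : MvPolynomial σ R} {i : σ} (hg : ∀ s : σ → R, s i = 0 → MvPolynomial.eval s g = 0) :
    MvPolynomial.X i ∣ g := by
  classical
  let π : MvPolynomial σ R →ₐ[R] MvPolynomial σ R :=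
    MvPolynomial.aeval (Function.update MvPolynomial.X i 0)
  have π_eq_zero : π g = 0 := by
    refine MvPolynomial.funext fun s => ?_
    have eval_π : MvPolynomial.eval s (π g) = MvPolynomial.eval (Function.update s i 0) g := by
      refine DFunLike.congr_fun (?_ : (MvPolynomial.aeval s).comp π =
        MvPolynomial.aeval (Function.update s i 0)) g
      ext j
      obtain rfl | hj := eq_or_ne j i <;> simp [π, *]
    rw [eval_π, hg _ (Function.update_self ..), map_zero]
  let q := Ideal.Quotient.mkₐ R (Ideal.span {(MvPolynomial.X i : MvPolynomial σ R)})
  have q_comp_π : q.comp π = q := by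
    ext j
    obtain rfl | hj := eq_or_ne j i <;> simp [q, π, *]
  rw [← Ideal.mem_span_singleton, ← Ideal.Quotient.eq_zero_iff_mem]
  simpa [π_eq_zero, q] using (DFunLike.congr_fun q_comp_π g).symm

theorem pow_card_dvd_eval_const {ι R : Type*} [Fintype ι] [CommRing R] [IsDomain R] [Infinite R]
    {g : MvPolynomial ι R} (hg : ∀ (s : ι → R) (i), s i = 0 → MvPolynomial.eval s g = 0) (t : R) :
    t ^ Fintype.card ι ∣ MvPolynomial.eval (fun _ => t) g := by
  classical
  have one_le_exponent (m : ι →₀ ℕ) (hm : m ∈ g.support) (i : ι) : 1 ≤ m i := by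
    obtain ⟨q, rfl⟩ := X_dvd_of_forall_eval_eq_zero fun s => hg s i
    rw [MvPolynomial.mem_support_iff, MvPolynomial.coeff_X_mul', ite_ne_right_iff] at hm
    exact Nat.one_le_iff_ne_zero.2 (Finsupp.mem_support_iff.1 hm.1)
  rw [MvPolynomial.eval_eq']
  refine Finset.dvd_sum fun m hm => Dvd.dvd.mul_left ?_ _
  rw [Finset.prod_pow_eq_pow_sum, ← Finset.card_univ, Finset.card_eq_sum_ones]
  exact pow_dvd_pow t (Finset.sum_le_sum fun i _ => one_le_exponent m hm i)

open Polynomial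

theorem pow_card_dvd_aeval_add_smul_sum {σ ι K R : Type*} [Fintype ι] [CommRing K] [CommRing R]
    [IsDomain R] [Infinite R] [Algebra K R] (f : MvPolynomial σ K) (u : σ → R) (v : ι → σ → R)
    (h : ∀ (s : ι → R) (i), s i = 0 → MvPolynomial.aeval (u + ∑ i, s i • v i) f = 0) (t : R) :
    t ^ Fintype.card ι ∣ MvPolynomial.aeval (u + t • ∑ i, v i) f := by
  let g : MvPolynomial ι R := MvPolynomial.aeval
    (fun a => MvPolynomial.C (u a) + ∑ i, MvPolynomial.X i * MvPolynomial.C (v i a)) f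
  have eval_g (s : ι → R) :
      MvPolynomial.eval s g = MvPolynomial.aeval (u + ∑ i, s i • v i) f := by
    rw [← MvPolynomial.coe_aeval_eq_eval]
    refine DFunLike.congr_fun
      (?_ : ((MvPolynomial.aeval s).restrictScalars K).comp (MvPolynomial.aeval _) = _) f
    ext a
    simp
  rw [Finset.smul_sum, ← eval_g]
  exact pow_card_dvd_eval_const (fun s i hs => (eval_g s).trans (h s i hs)) t

variable {K σ : Type*} [CommRing K]

/-- The point with parameter `t` on the curve in the affine space `K^σ` with polynomial
coordinates `γ`. -/
def curvePoint (γ : σ → K[X]) (t : K) : σ → K := fun a => (γ a).eval t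

theorem eval_aeval_eq_eval_curvePoint (γ : σ → K[X]) (f : MvPolynomial σ K) (t : K) :
    (MvPolynomial.aeval γ f).eval t = MvPolynomial.eval (curvePoint γ t) f := by
  rw [← Polynomial.coe_aeval_eq_eval, MvPolynomial.comp_aeval_apply]
  rfl

theorem aeval_eq_zero_of_curvePoint_mem [IsDomain K] [Infinite K] {f : MvPolynomial σ K}
    {W : Set (σ → K)} (hf : ∀ x ∈ W, MvPolynomial.eval x f = 0) {γ : σ → K[X]}
    (hγ : ∀ t, curvePoint γ t ∈ W) :
    MvPolynomial.aeval γ f = 0 :=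
  Polynomial.funext fun t => by
    rw [eval_aeval_eq_eval_curvePoint, hf _ (hγ t), eval_zero]

theorem pow_card_dvd_aeval {K σ ι : Type*} [Field K] [Infinite K] [Finite σ] [Fintype ι]
    {W : ι → Submodule K (σ → K)} (hW : IsTransverse W) {f : MvPolynomial σ K}
    (hf : ∀ i, ∀ x ∈ W i, MvPolynomial.eval x f = 0) {γ : σ → K[X]} {t : K}
    (ht : ∀ i, curvePoint γ t ∈ W i) :
    (X - C t) ^ Fintype.card ι ∣ MvPolynomial.aeval γ f := by
  classical
  cases nonempty_fintype σ
  obtain ⟨p, hp⟩ := hW.exists_forall_mkQ_eq_ite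
  choose δ hδ using fun a => X_sub_C_dvd_sub_C_eval (a := t) (p := γ a)
  let v (i : ι) : σ → K[X] := ((LinearMap.toMatrix' (p i)).map C).mulVec δ
  have curvePoint_v (i : ι) (τ : K) : curvePoint (v i) τ = p i (curvePoint δ τ) := by
    rw [← LinearMap.toMatrix'_mulVec]
    ext a
    simp [curvePoint, v, Matrix.mulVec, dotProduct, eval_finsetSum]
  have curvePoint_γ (τ : K) :
      curvePoint γ τ = curvePoint γ t + (τ - t) • curvePoint δ τ := by
    ext a
    have := congrArg (eval τ) (hδ a)
    simp only [eval_sub, eval_C, eval_mul, eval_X] at this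
    simp [curvePoint, ← this]
  have hγ : γ = (γ - (X - C t) • ∑ i, v i) + (X - C t) • ∑ i, v i := (sub_add_cancel _ _).symm
  rw [hγ]
  -- `v i` is `δ` modulo `W i` and zero modulo the other subspaces, so when `s j = 0` the curve
  -- `γ - (X - t) ∑ i, v i + ∑ i, s i • v i` stays inside `W j`.
  refine pow_card_dvd_aeval_add_smul_sum f _ v (fun s j hs => ?_) _
  refine aeval_eq_zero_of_curvePoint_mem (W := W j) (hf j) fun τ => ?_
  have point_eq : curvePoint (γ - (X - C t) • ∑ i, v i + ∑ i, s i • v i) τ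
      = curvePoint γ t + (τ - t) • (curvePoint δ τ - ∑ i, p i (curvePoint δ τ))
        + ∑ i, (s i).eval τ • p i (curvePoint δ τ) := by
    ext a
    have := congrFun (curvePoint_γ τ) a
    simp only [← curvePoint_v]
    simp only [curvePoint, Pi.add_apply, Pi.smul_apply] at this
    simp [curvePoint, eval_finsetSum, this]
    ring
  rw [SetLike.mem_coe, ← Submodule.Quotient.mk_eq_zero, ← Submodule.mkQ_apply, point_eq]
  have : (W j).mkQ (curvePoint γ t) = 0 := by simpa using ht j
  simp only [map_add, map_smul, map_sub, map_sum, hp, Finset.sum_ite_eq', Finset.mem_univ, this,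
    if_true, sub_self, smul_zero, add_zero, smul_ite, hs, eval_zero, zero_smul]

end Multiplicity

section IntersectionNumber

open Polynomial

variable {K J : Type*} [Fintype J]

theorem sum_card_add_card_le_natDegree [CommRing K] [IsDomain K] [DecidableEq K] {h : K[X]}
    (h0 : h ≠ 0) (T : J → Finset K) (R : Finset K)
    (hT : ∀ s, (X - C s) ^ (Finset.univ.filter fun j => s ∈ T j).card ∣ h)
    (hR : ∀ s ∈ R, h.IsRoot s) (hdisj : ∀ s ∈ R, ∀ j, s ∉ T j) :
    ∑ j, (T j).card + R.card ≤ h.natDegree := by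
  have le_roots : ∑ j, (T j).val + R.val ≤ h.roots := by
    refine Multiset.le_iff_count.2 fun s => ?_
    have count_T : (∑ j, (T j).val).count s = (Finset.univ.filter fun j => s ∈ T j).card := by
      simp [Multiset.count_sum', Multiset.count_eq_of_nodup (T _).nodup]
    rw [Multiset.count_add, count_T, count_roots]
    by_cases hs : s ∈ R
    · have rootMultiplicity_ge : 1 ≤ h.rootMultiplicity s := (rootMultiplicity_pos h0).2 (hR s hs)
      simp [hdisj s hs, Multiset.count_eq_of_nodup R.nodup, hs, rootMultiplicity_ge]
    · simpa [Multiset.count_eq_zero_of_notMem hs] using (le_rootMultiplicity_iff h0).2 (hT s)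
  calc ∑ j, (T j).card + R.card = (∑ j, (T j).val + R.val).card := by simp
    _ ≤ h.roots.card := Multiset.card_le_card le_roots
    _ ≤ h.natDegree := h.card_roots'

theorem sum_card_add_card_le_mul [Field K] [Infinite K] {σ : Type*} [Finite σ]
    {W : J → Submodule K (σ → K)}
    (hW : InGeneralPosition W) {f : MvPolynomial σ K} {d n : ℕ} (hfd : f.totalDegree ≤ d)
    (hfW : ∀ j, ∀ x ∈ W j, MvPolynomial.eval x f = 0) {γ : σ → K[X]}
    (hγn : ∀ a, (γ a).natDegree ≤ n) (hγ0 : ∀ t, curvePoint γ t ≠ 0)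
    (hfγ : MvPolynomial.aeval γ f ≠ 0) {T : J → Finset K}
    (hT : ∀ j, ∀ t ∈ T j, curvePoint γ t ∈ W j)
    {R : Finset K} (hR : ∀ t ∈ R, MvPolynomial.eval (curvePoint γ t) f = 0)
    (hdisj : ∀ t ∈ R, ∀ j, t ∉ T j) :
    ∑ j, (T j).card + R.card ≤ d * n := by
  classical
  have natDegree_le : (MvPolynomial.aeval γ f).natDegree ≤ d * n :=
    MvPolynomial.aeval_natDegree_le f hfd γ hγn
  refine (sum_card_add_card_le_natDegree hfγ T R (fun t => ?_) (fun t ht => ?_) hdisj).trans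
    natDegree_le
  · set S := Finset.univ.filter fun j => t ∈ T j
    have mem_W (j : S) : curvePoint γ t ∈ W j := hT j t (Finset.mem_filter.1 j.2).2
    obtain hbot | htrans := hW S
    · exact absurd ((Submodule.mem_bot K).1 (hbot ▸ (Submodule.mem_iInf _).2 mem_W)) (hγ0 t)
    · simpa using pow_card_dvd_aeval htrans (fun j => hfW j) mem_W
  · rw [IsRoot, eval_aeval_eq_eval_curvePoint, hR t ht]

end IntersectionNumber

section LinearForms

theorem exists_isHomogeneous_one_eval_eq {R σ : Type*} [CommRing R] [Finite σ]
    (φ : Module.Dual R (σ → R)) :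
    ∃ g : MvPolynomial σ R, g.IsHomogeneous 1 ∧ ∀ x, MvPolynomial.eval x g = φ x := by
  classical
  cases nonempty_fintype σ
  refine ⟨∑ a, MvPolynomial.C (φ (Pi.single a 1)) * MvPolynomial.X a,
    MvPolynomial.IsHomogeneous.sum _ _ _ fun a _ => MvPolynomial.isHomogeneous_C_mul_X _ a,
    fun x => ?_⟩
  conv_rhs => rw [pi_eq_sum_univ' x]
  simp [mul_comm]

theorem exists_isHomogeneous_eval_ne_zero_of_linearIndepOn {K σ ι : Type*} [Field K] [Finite σ]
    {v : ι → σ → K} {T : Set ι} {i : ι} (hv : LinearIndepOn K v (insert i T)) (hi : i ∉ T)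
    {d : ℕ} (hd : d ≠ 0) :
    ∃ g : MvPolynomial σ K, g.IsHomogeneous d ∧ MvPolynomial.eval (v i) g ≠ 0 ∧
      ∀ j ∈ T, MvPolynomial.eval (v j) g = 0 := by
  obtain ⟨φ, hφi, hφT⟩ := Submodule.exists_le_ker_of_notMem (hv.notMem_span_of_insert hi)
  obtain ⟨g, hg, eval_g⟩ := exists_isHomogeneous_one_eval_eq φ
  refine ⟨g ^ d, by simpa using hg.pow d, ?_, fun j hj => ?_⟩
  · rw [map_pow, eval_g]
    exact pow_ne_zero d hφi
  · have : φ (v j) = 0 := hφT (Submodule.subset_span (Set.mem_image_of_mem v hj))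
    rw [map_pow, eval_g, this, zero_pow hd]

end LinearForms

section RationalNormalCurve

open Polynomial

variable {n : ℕ} (M : Matrix (Fin (n + 1)) (Fin (n + 1)) ℂ) (z : ℂ)

/-- The affine chart `s ↦ [s : 1 + z s]` of the rational normal curve with coefficient matrix `M`.
It misses only the parameter `[1 : z]`, so every finite subset of the curve lies in the image of
such a chart. -/
def rncChart (a : Fin (n + 1)) : ℂ[X] :=
  ∑ b : Fin (n + 1), C (M a b) * (X ^ (b : ℕ) * (1 + C z * X) ^ (n - b))

theorem curvePoint_rncChart (s : ℂ) :
    curvePoint (rncChart M z) s = M.mulVec (veron n ![s, 1 + z * s]) := by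
  ext a
  simp [curvePoint, rncChart, Matrix.mulVec, dotProduct, eval_finsetSum, veron]

theorem natDegree_rncChart_le (a : Fin (n + 1)) : (rncChart M z a).natDegree ≤ n := by
  refine natDegree_sum_le_of_forall_le _ _ fun b _ => (natDegree_C_mul_le _ _).trans ?_
  have natDegree_le_one : (1 + C z * X : ℂ[X]).natDegree ≤ 1 := by compute_degree
  refine (natDegree_mul_le_of_le (natDegree_X_pow_le (b : ℕ))
    (natDegree_pow_le_of_le (n - b) natDegree_le_one)).trans ?_
  omega

variable {M}

theorem linearIndependent_curvePoint_rncChart (hM : IsUnit M.det) {e : Fin (n + 1) → ℂ}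
    (he : Function.Injective e) :
    LinearIndependent ℂ fun i => curvePoint (rncChart M z) (e i) := by
  let V : Matrix (Fin (n + 1)) (Fin (n + 1)) ℂ := Matrix.projVandermonde e fun i => 1 + z * e i
  have hV : V.det ≠ 0 := by
    rw [Matrix.det_projVandermonde]
    refine Finset.prod_ne_zero_iff.2 fun i _ => Finset.prod_ne_zero_iff.2 fun j hj h => ?_
    exact (Finset.mem_Ioi.1 hj).ne' (he (by linear_combination h))
  have rows_eq : (fun i => curvePoint (rncChart M z) (e i)) = (V * M.transpose).row := by
    ext i a
    simp only [curvePoint_rncChart, Matrix.mulVec, dotProduct, veron, Matrix.row, Matrix.mul_apply,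
      Matrix.transpose_apply, V, Matrix.projVandermonde_apply, Fin.val_rev]
    exact Finset.sum_congr rfl fun b _ => by simp [mul_comm]
  rw [rows_eq, Matrix.linearIndependent_rows_iff_isUnit, Matrix.isUnit_iff_isUnit_det,
    Matrix.det_mul, Matrix.det_transpose]
  exact hV.isUnit.mul hM

theorem linearIndepOn_curvePoint_rncChart (hM : IsUnit M.det) {T : Finset ℂ}
    (hT : T.card ≤ n + 1) : LinearIndepOn ℂ (curvePoint (rncChart M z)) (T : Set ℂ) := by
  obtain ⟨T', hTT', hT'⟩ := Infinite.exists_superset_card_eq T (n + 1) hT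
  let e := Finset.equivFinOfCardEq hT'
  refine LinearIndepOn.mono ?_ (Finset.coe_subset.2 hTT')
  exact (linearIndependent_equiv' e.symm rfl).1 (linearIndependent_curvePoint_rncChart z hM
    (Subtype.val_injective.comp e.symm.injective))

theorem curvePoint_rncChart_ne_zero (hM : IsUnit M.det) (s : ℂ) :
    curvePoint (rncChart M z) s ≠ 0 :=
  (linearIndepOn_curvePoint_rncChart z hM (T := {s}) (by simp)).ne_zero (by simp)

variable {z}

theorem exists_mulVec_veron_eq_smul_curvePoint {v : Fin 2 → ℂ} (hv : v 1 - z * v 0 ≠ 0) :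
    ∃ s c : ℂ, c ≠ 0 ∧ M.mulVec (veron n v) = c • curvePoint (rncChart M z) s := by
  set w := v 1 - z * v 0 with hw
  refine ⟨v 0 / w, w ^ n, pow_ne_zero n hv, ?_⟩
  rw [curvePoint_rncChart, ← Matrix.mulVec_smul]
  congr 1
  ext i
  have v_zero_eq : v 0 = w * (v 0 / w) := (mul_div_cancel₀ _ hv).symm
  have v_one_eq : v 1 = w * (1 + z * (v 0 / w)) := by
    field_simp
    rw [hw]
    ring
  calc v 0 ^ (i : ℕ) * v 1 ^ (n - i)
      = w ^ ((i : ℕ) + (n - i)) * ((v 0 / w) ^ (i : ℕ) * (1 + z * (v 0 / w)) ^ (n - i)) := by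
        conv_lhs => rw [v_zero_eq, v_one_eq, mul_pow, mul_pow]
        ring
    _ = _ := by
        rw [Nat.add_sub_cancel' (Nat.le_of_lt_succ i.2)]
        rfl

theorem IsRNC.exists_chart {C Z : Set (PP n)} (hC : IsRNC n C) (hZ : Z.Finite) (hZC : Z ⊆ C) :
    ∃ (M : Matrix (Fin (n + 1)) (Fin (n + 1)) ℂ) (z : ℂ), IsUnit M.det ∧
      ∀ P ∈ Z, ∃ s c : ℂ, c ≠ 0 ∧ P.rep = c • curvePoint (rncChart M z) s := by
  obtain ⟨M, hM, rfl⟩ := hC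
  have hZM : ∀ P ∈ Z, ∃ v : Fin 2 → ℂ, v ≠ 0 ∧ ∃ c : ℂ, c ≠ 0 ∧
      P.rep = c • M.mulVec (veron n v) := hZC
  choose! v hv0 c hc0 hc using hZM
  obtain ⟨z, hz⟩ := (hZ.image fun P => v P 1 / v P 0).exists_notMem
  refine ⟨M, z, hM, fun P hP => ?_⟩
  have hne : v P 1 - z * v P 0 ≠ 0 := by
    refine fun h => hz ⟨P, hP, ?_⟩
    have hv : v P 0 ≠ 0 := fun h0 => hv0 P hP (funext fun i => by
      fin_cases i
      · exact h0
      · simpa [h0] using h)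
    exact (div_eq_iff hv).2 (sub_eq_zero.1 h)
  obtain ⟨s, c', hc', hs⟩ := exists_mulVec_veron_eq_smul_curvePoint (M := M) hne
  exact ⟨s, c P * c', mul_ne_zero (hc0 P hP) hc', by rw [hc P hP, hs, smul_smul]⟩

theorem IsRNC.exists_parameters {C : Set (PP n)} (hC : IsRNC n C) {J : Type*} [Finite J]
    (W : J → Submodule ℂ (Fin (n + 1) → ℂ)) (hfin : ∀ j, {P ∈ C | P.rep ∈ W j}.Finite) :
    ∃ (M : Matrix (Fin (n + 1)) (Fin (n + 1)) ℂ) (z : ℂ), IsUnit M.det ∧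
      ∀ j, ∃ T : Finset ℂ, T.card = {P ∈ C | P.rep ∈ W j}.ncard ∧
        ∀ t ∈ T, curvePoint (rncChart M z) t ∈ W j := by
  classical
  obtain ⟨M, z, hM, hchart⟩ := hC.exists_chart (Set.finite_iUnion hfin)
    (Set.iUnion_subset fun j => Set.sep_subset _ _)
  choose! s c hc0 hc using hchart
  have s_injOn : Set.InjOn s (⋃ j, {P ∈ C | P.rep ∈ W j}) := fun P hP Q hQ hs => by
    rw [← P.mk_rep, ← Q.mk_rep, Projectivization.mk_eq_mk_iff']
    exact ⟨c P * (c Q)⁻¹, by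
      rw [hc P hP, hc Q hQ, hs, smul_smul, inv_mul_cancel_right₀ (hc0 Q hQ)]⟩
  refine ⟨M, z, hM, fun j => ⟨(hfin j).toFinset.image s, ?_, fun t ht => ?_⟩⟩
  · rw [Finset.card_image_of_injOn, Set.ncard_eq_toFinset_card _ (hfin j)]
    rw [Set.Finite.coe_toFinset]
    exact s_injOn.mono (Set.subset_iUnion (fun j => {P ∈ C | P.rep ∈ W j}) j)
  · obtain ⟨P, hP, rfl⟩ := Finset.mem_image.1 ht
    rw [Set.Finite.mem_toFinset] at hP
    have hPZ : P ∈ ⋃ j, {P ∈ C | P.rep ∈ W j} := Set.mem_iUnion.2 ⟨j, hP⟩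
    rw [← Submodule.smul_mem_iff _ (hc0 P hPZ), ← hc P hPZ]
    exact hP.2

end RationalNormalCurve

section HomogeneousPolynomials

variable {R σ τ : Type*} [CommRing R] {d : ℕ}

theorem eval_smul_of_isHomogeneous {f : MvPolynomial σ R} (hf : f.IsHomogeneous d) (c : R)
    (x : σ → R) : MvPolynomial.eval (c • x) f = c ^ d * MvPolynomial.eval x f := by
  rw [MvPolynomial.eval_eq, MvPolynomial.eval_eq, Finset.mul_sum]
  refine Finset.sum_congr rfl fun m hm => ?_
  simp only [Pi.smul_apply, smul_eq_mul, mul_pow, Finset.prod_mul_distrib,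
    Finset.prod_pow_eq_pow_sum, ← hf.degree_eq_sum_deg_support hm]
  ring

theorem finrank_homogeneousSubmodule [Nontrivial R] [Fintype σ] :
    Module.finrank R (MvPolynomial.homogeneousSubmodule σ R d)
      = (Fintype.card σ + d - 1).choose d := by
  classical
  have exponents_eq :
      {m : σ →₀ ℕ | m.degree = d} = ((Finset.univ : Finset σ).finsuppAntidiag d : Set _) := by
    ext m
    simp [Finsupp.degree_eq_sum]
  calc Module.finrank R (MvPolynomial.homogeneousSubmodule σ R d)
      = Module.finrank R (MvPolynomial.restrictSupport R {m : σ →₀ ℕ | m.degree = d}) := by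
        rw [MvPolynomial.homogeneousSubmodule_eq_finsupp_supported]
        rfl
    _ = (Finset.univ.finsuppAntidiag d).card := by
        rw [Module.finrank_eq_nat_card_basis (MvPolynomial.basisRestrictSupport R _),
          exponents_eq, Nat.card_coe_set_eq, Set.ncard_coe_finset]
    _ = (Fintype.card σ + d - 1).choose d := by
        rw [Finset.card_finsuppAntidiag_nat_eq_choose, Finset.card_univ]

variable [Fintype τ] (G : Matrix σ τ R)

/-- The pullback `f ↦ f ∘ G` of polynomials along a linear map, i.e. the restriction of `f` to the
column span of `G`, expressed in the coordinates given by the columns. -/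
def pullback : MvPolynomial σ R →ₐ[R] MvPolynomial τ R :=
  MvPolynomial.bind₁ G.toMvPolynomial

theorem eval_pullback (f : MvPolynomial σ R) (y : τ → R) :
    MvPolynomial.eval y (pullback G f) = MvPolynomial.eval (G.mulVec y) f := by
  rw [pullback, MvPolynomial.eval, MvPolynomial.eval₂Hom_bind₁]
  exact congrArg (MvPolynomial.eval · f) (funext fun a => G.toMvPolynomial_eval_eq_apply a y)

theorem isHomogeneous_pullback {f : MvPolynomial σ R} (hf : f.IsHomogeneous d) :
    (pullback G f).IsHomogeneous d := by
  simpa [pullback] using hf.aeval _ G.toMvPolynomial_isHomogeneous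

theorem pullback_eq_zero_iff [IsDomain R] [Infinite R] {f : MvPolynomial σ R} :
    pullback G f = 0 ↔ ∀ x ∈ LinearMap.range G.mulVecLin, MvPolynomial.eval x f = 0 := by
  constructor
  · rintro h _ ⟨y, rfl⟩
    rw [Matrix.mulVecLin_apply, ← eval_pullback, h, map_zero]
  · exact fun h => MvPolynomial.funext fun y => by
      rw [eval_pullback, map_zero, ← Matrix.mulVecLin_apply, h _ ⟨y, rfl⟩]

end HomogeneousPolynomials

section HilbertFunction

variable {n m k d : ℕ} {f : MvPolynomial (Fin (n + 1)) ℂ} {X : Set (PP n)}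

theorem mem_vanishOn_iff :
    f ∈ vanishOn n d X ↔ f.IsHomogeneous d ∧ ∀ P ∈ X, MvPolynomial.eval P.rep f = 0 := by
  simp [vanishOn, homogDeg, Submodule.mem_iInf]

theorem mem_projSet_iff {A : Matrix (Fin (n + 1)) (Fin m) ℂ} {P : PP n} :
    P ∈ projSet A ↔ P.rep ∈ LinearMap.range A.mulVecLin := by
  rw [Matrix.range_mulVecLin]
  rfl

theorem forall_mem_projSet_eval_rep_eq_zero_iff (hd : d ≠ 0) (hf : f.IsHomogeneous d)
    (A : Matrix (Fin (n + 1)) (Fin m) ℂ) :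
    (∀ P ∈ projSet A, MvPolynomial.eval P.rep f = 0) ↔
      ∀ x ∈ LinearMap.range A.mulVecLin, MvPolynomial.eval x f = 0 := by
  simp only [mem_projSet_iff]
  refine ⟨fun h x hx => ?_, fun h P hP => h _ hP⟩
  obtain rfl | hx0 := eq_or_ne x 0
  · simpa [hd] using eval_smul_of_isHomogeneous hf 0 0
  · obtain ⟨a, ha⟩ := Projectivization.exists_smul_eq_mk_rep ℂ x hx0
    have eval_rep := h (.mk ℂ x hx0) (ha ▸ Submodule.smul_mem _ (a : ℂ) hx)
    rw [← ha, Units.smul_def, eval_smul_of_isHomogeneous hf] at eval_rep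
    exact (mul_eq_zero.1 eval_rep).resolve_left (pow_ne_zero d a.ne_zero)

theorem eval_eq_zero_of_mem_vanishOn_configSet {L : Fin (n - 1) → ℕ} {A : Config n L}
    (hd : d ≠ 0) (hf : f ∈ vanishOn n d (configSet A)) (i : Fin (n - 1)) (j : Fin (L i)) :
    ∀ x ∈ LinearMap.range (A i j).mulVecLin, MvPolynomial.eval x f = 0 := by
  obtain ⟨hfd, hfA⟩ := mem_vanishOn_iff.1 hf
  exact (forall_mem_projSet_eval_rep_eq_zero_iff hd hfd _).1 fun P hP =>
    hfA P (Set.mem_iUnion₂.2 ⟨i, j, hP⟩)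

theorem vanishOn_union_projSet (hd : d ≠ 0) (X : Set (PP n))
    (G : Matrix (Fin (n + 1)) (Fin m) ℂ) :
    vanishOn n d (X ∪ projSet G) = vanishOn n d X ⊓ LinearMap.ker (pullback G).toLinearMap := by
  ext f
  simp only [Submodule.mem_inf, mem_vanishOn_iff, LinearMap.mem_ker, AlgHom.toLinearMap_apply,
    pullback_eq_zero_iff, and_assoc, Set.mem_union, or_imp, forall_and]
  exact and_congr_right fun hf =>
    and_congr_right fun _ => forall_mem_projSet_eval_rep_eq_zero_iff hd hf G

instance : FiniteDimensional ℂ (homogDeg n d) :=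
  Module.Finite.iff_fg.2 (MvPolynomial.homogeneousSubmodule_fg _ _ _)

theorem vanishOn_le_homogDeg (X : Set (PP n)) : vanishOn n d X ≤ homogDeg n d :=
  inf_le_left

instance : FiniteDimensional ℂ (vanishOn n d X) :=
  Submodule.finiteDimensional_of_le (vanishOn_le_homogDeg X)

theorem finrank_map_pullback_add_finrank_vanishOn (hd : d ≠ 0) (X : Set (PP n))
    (G : Matrix (Fin (n + 1)) (Fin m) ℂ) :
    Module.finrank ℂ ((vanishOn n d X).map (pullback G).toLinearMap)
      + Module.finrank ℂ (vanishOn n d (X ∪ projSet G)) = Module.finrank ℂ (vanishOn n d X) := by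
  have ker_eq : LinearMap.ker ((pullback G).toLinearMap.domRestrict (vanishOn n d X))
      = (vanishOn n d (X ∪ projSet G)).comap (vanishOn n d X).subtype := by
    rw [vanishOn_union_projSet hd, Submodule.comap_inf, Submodule.comap_subtype_self, top_inf_eq]
    rfl
  rw [← LinearMap.finrank_range_add_finrank_ker
    ((pullback G).toLinearMap.domRestrict (vanishOn n d X)), LinearMap.range_domRestrict, ker_eq,
    (Submodule.comapSubtypeEquivOfLe ?_).finrank_eq]
  rw [vanishOn_union_projSet hd]
  exact inf_le_left

theorem map_pullback_vanishOn_eq_homogDeg (hd : d ≠ 0) (G : Matrix (Fin (n + 1)) (Fin (k + 1)) ℂ)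
    (hH : HilbF n d (X ∪ projSet G) = HilbF n d X + (d + k).choose k) :
    (vanishOn n d X).map (pullback G).toLinearMap = homogDeg k d := by
  have map_le : (vanishOn n d X).map (pullback G).toLinearMap ≤ homogDeg k d := by
    rintro _ ⟨f, hf, rfl⟩
    exact isHomogeneous_pullback G (mem_vanishOn_iff.1 hf).1
  refine Submodule.eq_of_le_of_finrank_le map_le ?_
  have finrank_homogDeg : Module.finrank ℂ (homogDeg k d) = (d + k).choose k := by
    rw [homogDeg, finrank_homogeneousSubmodule, Fintype.card_fin, ← Nat.choose_symm_add]
    congr 1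
    omega
  have rank_nullity := finrank_map_pullback_add_finrank_vanishOn hd X G
  have finrank_X := Submodule.finrank_mono (vanishOn_le_homogDeg (d := d) X)
  rw [HilbF, HilbF] at hH
  omega

theorem exists_mem_vanishOn_forall_eval_eq (hd : d ≠ 0)
    (G : Matrix (Fin (n + 1)) (Fin (k + 1)) ℂ)
    (hH : HilbF n d (X ∪ projSet G) = HilbF n d X + (d + k).choose k)
    {g : MvPolynomial (Fin (n + 1)) ℂ} (hg : g.IsHomogeneous d) :
    ∃ f ∈ vanishOn n d X, ∀ x ∈ LinearMap.range G.mulVecLin,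
      MvPolynomial.eval x f = MvPolynomial.eval x g := by
  have hgG : pullback G g ∈ (vanishOn n d X).map (pullback G).toLinearMap := by
    rw [map_pullback_vanishOn_eq_homogDeg hd G hH]
    exact isHomogeneous_pullback G hg
  obtain ⟨f, hf, hfg⟩ := hgG
  refine ⟨f, hf, ?_⟩
  rintro _ ⟨y, rfl⟩
  rw [Matrix.mulVecLin_apply, ← eval_pullback, ← eval_pullback]
  exact congrArg _ hfg

end HilbertFunction

section BezoutBound

variable {n k d : ℕ} {L : Fin (n - 1) → ℕ} {A : Config n L}
  {G : Matrix (Fin (n + 1)) (Fin (k + 1)) ℂ}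

theorem disjoint_range_of_hilbF_eq (hd : d ≠ 0)
    (hH : HilbF n d (configSet A ∪ projSet G) = HilbF n d (configSet A) + (d + k).choose k)
    (i : Fin (n - 1)) (j : Fin (L i)) :
    Disjoint (LinearMap.range G.mulVecLin) (LinearMap.range (A i j).mulVecLin) := by
  refine Submodule.disjoint_def.2 fun x hxG hxA => by_contra fun hx => ?_
  obtain ⟨g, hg, hgx, -⟩ := exists_isHomogeneous_eval_ne_zero_of_linearIndepOn (i := x)
    (LinearIndepOn.singleton (v := id) hx |>.mono (by simp)) (Set.notMem_empty x) hd
  obtain ⟨f, hf, hfg⟩ := exists_mem_vanishOn_forall_eval_eq hd G hH hg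
  exact hgx ((hfg x hxG).symm.trans (eval_eq_zero_of_mem_vanishOn_configSet hd hf i j x hxA))

theorem sum_card_add_card_le_of_hilbF_eq (hd : d ≠ 0)
    (hH : HilbF n d (configSet A ∪ projSet G) = HilbF n d (configSet A) + (d + k).choose k)
    (hA : InGeneralPosition fun j : Σ i, Fin (L i) => LinearMap.range (A j.1 j.2).mulVecLin)
    {M : Matrix (Fin (n + 1)) (Fin (n + 1)) ℂ} (hM : IsUnit M.det) {z : ℂ}
    {T : (Σ i, Fin (L i)) → Finset ℂ}
    (hT : ∀ j, ∀ t ∈ T j, curvePoint (rncChart M z) t ∈ LinearMap.range (A j.1 j.2).mulVecLin)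
    {R : Finset ℂ} (hR : ∀ t ∈ R, curvePoint (rncChart M z) t ∈ LinearMap.range G.mulVecLin)
    {s : ℂ} (hs : curvePoint (rncChart M z) s ∈ LinearMap.range G.mulVecLin) (hsR : s ∉ R)
    (hRn : R.card ≤ n) :
    ∑ j, (T j).card + R.card ≤ d * n := by
  have hindep : LinearIndepOn ℂ (curvePoint (rncChart M z)) (insert s (R : Set ℂ)) := by
    rw [← Finset.coe_insert]
    exact linearIndepOn_curvePoint_rncChart z hM
      ((Finset.card_insert_le s R).trans (Nat.succ_le_succ hRn))
  obtain ⟨g, hg, hgs, hgR⟩ :=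
    exists_isHomogeneous_eval_ne_zero_of_linearIndepOn hindep hsR hd
  obtain ⟨f, hf, hfg⟩ := exists_mem_vanishOn_forall_eval_eq hd G hH hg
  refine sum_card_add_card_le_mul hA (f := f) (mem_vanishOn_iff.1 hf).1.totalDegree_le
    (fun j => eval_eq_zero_of_mem_vanishOn_configSet hd hf j.1 j.2) (natDegree_rncChart_le M z)
    (curvePoint_rncChart_ne_zero z hM) (fun hfγ => hgs ?_) hT
    (fun t ht => (hfg _ (hR t ht)).trans (hgR t ht)) fun t ht j htj => ?_
  · rw [← hfg _ hs, ← eval_aeval_eq_eval_curvePoint, hfγ, Polynomial.eval_zero]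
  · exact curvePoint_rncChart_ne_zero z hM t
      (Submodule.disjoint_def.1 (disjoint_range_of_hilbF_eq hd hH j.1 j.2) _ (hR t ht) (hT j t htj))

theorem IsRNC.sum_mul_add_le_of_maxIntersects (hd : d ≠ 0) (hk : k ≤ n)
    (hH : HilbF n d (configSet A ∪ projSet G) = HilbF n d (configSet A) + (d + k).choose k)
    (hA : InGeneralPosition fun j : Σ i, Fin (L i) => LinearMap.range (A j.1 j.2).mulVecLin)
    {C : Set (PP n)} (hC : IsRNC n C) (hCA : MaxIntersects C A)
    (hCG : (C ∩ projSet G).ncard = k + 1) :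
    ∑ i, L i * (i.1 + 1) + k ≤ d * n := by
  let W : Option (Σ i, Fin (L i)) → Submodule ℂ (Fin (n + 1) → ℂ) :=
    fun o => o.elim (LinearMap.range G.mulVecLin) fun j => LinearMap.range (A j.1 j.2).mulVecLin
  have sep_some (j : Σ i, Fin (L i)) : {P ∈ C | P.rep ∈ W (some j)} = C ∩ projSet (A j.1 j.2) :=
    Set.ext fun P => and_congr_right fun _ => mem_projSet_iff.symm
  have sep_none : {P ∈ C | P.rep ∈ W none} = C ∩ projSet G :=
    Set.ext fun P => and_congr_right fun _ => mem_projSet_iff.symm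
  have hfin (o) : {P ∈ C | P.rep ∈ W o}.Finite := Set.finite_of_ncard_ne_zero <| by
    cases o with
    | none => rw [sep_none, hCG]; exact k.succ_ne_zero
    | some j => rw [sep_some, hCA]; exact j.1.1.succ_ne_zero
  obtain ⟨M, z, hM, hparam⟩ := hC.exists_parameters W hfin
  choose T hTcard hT using hparam
  have card_none : (T none).card = k + 1 := by rw [hTcard, sep_none, hCG]
  have card_some (j : Σ i, Fin (L i)) : (T (some j)).card = j.1.1 + 1 := by
    rw [hTcard, sep_some, hCA]
  obtain ⟨s, hs⟩ : (T none).Nonempty := Finset.card_pos.1 (card_none ▸ k.succ_pos)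
  have card_erase : ((T none).erase s).card = k := by
    rw [Finset.card_erase_of_mem hs, card_none, Nat.add_sub_cancel]
  have bound := sum_card_add_card_le_of_hilbF_eq hd hH hA hM (fun j => hT (some j))
    (fun t ht => hT none t (Finset.mem_of_mem_erase ht)) (hT none s hs)
    (Finset.notMem_erase s _) (card_erase.trans_le hk)
  simpa [card_some, card_erase, Fintype.sum_sigma] using bound

end BezoutBound

section GenericConfiguration

variable {n k : ℕ} {L : Fin (n - 1) → ℕ}

theorem GenHolds.mono {Q R : Config n L → Prop} (hQ : GenHolds n L Q) (h : ∀ A, Q A → R A) :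
    GenHolds n L R :=
  let ⟨F, hF, hFQ⟩ := hQ
  ⟨F, hF, fun A hA hx => h A (hFQ A hA hx)⟩

theorem genHolds_inGeneralPosition :
    GenHolds n L fun A =>
      InGeneralPosition fun j : Σ i, Fin (L i) => LinearMap.range (A j.1 j.2).mulVecLin := by
  let φ (p : Σ j : (Σ i, Fin (L i)), Fin (n + 1) × Fin (j.1.1 + 1)) :
      (i : Fin (n - 1)) × (Fin (L i) × Fin (n + 1) × Fin (i.1 + 1)) :=
    ⟨p.1.1, p.1.2, p.2.1, p.2.2⟩
  have hφ : Function.Injective φ := Function.LeftInverse.injective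
    (g := fun q => ⟨⟨q.1, q.2.1⟩, q.2.2.1, q.2.2.2⟩) fun _ => rfl
  obtain ⟨F, hF, hpos⟩ := holdsGenerically_inGeneralPosition (K := ℂ) (ρ := Fin (n + 1))
    (κ := fun j : Σ i, Fin (L i) => Fin (j.1.1 + 1)) fun j => by
      simp only [Fintype.card_fin]
      omega
  refine ⟨MvPolynomial.rename φ F, ?_, fun A _ hx =>
    hpos (fun p => A p.1.1 p.1.2 p.2.1 p.2.2) ?_⟩
  · rwa [Ne, MvPolynomial.rename_eq_zero_iff_of_injective _ hφ]
  · rwa [MvPolynomial.eval_rename] at hx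

/-- A property of a configuration of weight `L` together with one more `k`-dimensional subspace
holds generically, in the sense of `GenHolds`. -/
def GenHoldsPair (n k : ℕ) (L : Fin (n - 1) → ℕ)
    (Q : Config n L → Matrix (Fin (n + 1)) (Fin (k + 1)) ℂ → Prop) : Prop :=
  ∃ F : MvPolynomial (((i : Fin (n - 1)) × (Fin (L i) × Fin (n + 1) × Fin (i.1 + 1))) ⊕
      (Fin (n + 1) × Fin (k + 1))) ℂ,
    F ≠ 0 ∧ ∀ A G, FullRank A → G.rank = k + 1 →
      MvPolynomial.eval
        (Sum.elim (fun p => A p.1 p.2.1 p.2.2.1 p.2.2.2) (fun q => G q.1 q.2)) F ≠ 0 → Q A G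

theorem GenHoldsPair.and_left {Q : Config n L → Matrix (Fin (n + 1)) (Fin (k + 1)) ℂ → Prop}
    {R : Config n L → Prop} (hQ : GenHoldsPair n k L Q) (hR : GenHolds n L R) :
    GenHoldsPair n k L fun A G => Q A G ∧ R A := by
  obtain ⟨F, hF, hFQ⟩ := hQ
  obtain ⟨F', hF', hFR⟩ := hR
  refine ⟨F * MvPolynomial.rename Sum.inl F', mul_ne_zero hF ?_, fun A G hA hG hx => ?_⟩
  · rwa [Ne, MvPolynomial.rename_eq_zero_iff_of_injective _ Sum.inl_injective]
  · rw [map_mul, MvPolynomial.eval_rename, Sum.elim_comp_inl] at hx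
    exact ⟨hFQ A G hA hG (left_ne_zero_of_mul hx), hFR A hA (right_ne_zero_of_mul hx)⟩

/-- The weight `L + e_k` of a configuration of weight `L` with one more `k`-dimensional
subspace. -/
def addWeight (L : Fin (n - 1) → ℕ) (k : ℕ) (i : Fin (n - 1)) : ℕ :=
  L i + if i.1 = k then 1 else 0

theorem sum_addWeight_mul (hk : k < n - 1) (f : ℕ → ℕ) :
    ∑ i, addWeight L k i * f i.1 = ∑ i, L i * f i.1 + f k := by
  have sum_indicator : ∑ i : Fin (n - 1), (if i.1 = k then 1 else 0) * f i.1 = f k := by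
    rw [Finset.sum_eq_single ⟨k, hk⟩ (fun i _ hi => by simp [Fin.ext_iff.not.1 hi]) (by simp)]
    simp
  simp only [addWeight, add_mul, Finset.sum_add_distrib, sum_indicator]

/-- The configuration of weight `L` left after removing the last `k`-dimensional component. -/
def Config.dropLast (B : Config n (addWeight L k)) : Config n L :=
  fun i j => B i (Fin.castAdd _ j)

/-- The index of the last `k`-dimensional component of a configuration of weight `L + e_k`. -/
def lastComponent (L : Fin (n - 1) → ℕ) (hk : k < n - 1) : Fin (addWeight L k ⟨k, hk⟩) :=
  ⟨L ⟨k, hk⟩, by simp [addWeight]⟩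

theorem GenHoldsPair.genHolds_addWeight
    {Q : Config n L → Matrix (Fin (n + 1)) (Fin (k + 1)) ℂ → Prop} (hQ : GenHoldsPair n k L Q)
    (hk : k < n - 1) :
    GenHolds n (addWeight L k) fun B => Q B.dropLast (B ⟨k, hk⟩ (lastComponent L hk)) := by
  obtain ⟨F, hF, hFQ⟩ := hQ
  let φ : ((i : Fin (n - 1)) × (Fin (L i) × Fin (n + 1) × Fin (i.1 + 1))) ⊕
      (Fin (n + 1) × Fin (k + 1)) →
      (i : Fin (n - 1)) × (Fin (addWeight L k i) × Fin (n + 1) × Fin (i.1 + 1)) :=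
    Sum.elim (Sigma.map id fun _ => Prod.map (Fin.castAdd _) id)
      fun q => ⟨⟨k, hk⟩, lastComponent L hk, q⟩
  have hφ : Function.Injective φ := by
    refine Function.Injective.sumElim ?_ ?_ ?_
    · exact Function.injective_id.sigma_map fun i =>
        (Fin.castAdd_injective _ _).prodMap Function.injective_id
    · exact sigma_mk_injective.comp (Prod.mk_right_injective _)
    · rintro ⟨i, j, r, c⟩ q h
      obtain ⟨rfl, h⟩ := Sigma.mk.inj_iff.1 h
      exact j.2.ne (congrArg (fun p => p.1.1) (eq_of_heq h))
  refine ⟨MvPolynomial.rename φ F, ?_, fun B hB hx => hFQ _ _ (fun i j => hB i _) (hB _ _) ?_⟩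
  · rwa [Ne, MvPolynomial.rename_eq_zero_iff_of_injective _ hφ]
  · rw [MvPolynomial.eval_rename] at hx
    convert hx using 3
    ext (p | q) <;> rfl

end GenericConfiguration

/-- Bezout-type non-feasibility criterion.  Let `Λ'` be a configuration of weight `L'`,
`Γ` a generic `k`-dimensional subspace, `Λ = Λ' ∪ Γ` of weight `L = L' + e_k`.  If for
generic `Λ', Γ` one has `H(Λ,d) = H(Λ',d) + C(d+k,k)` (expressed by a nonzero polynomial
in all the matrix entries) and `Σ lᵢ(i+1) - 1 > d·n`, then `L` is non-feasible. -/
theorem bezout_nonfeasibility (n k d : ℕ) (hn : 3 ≤ n) (hk : k ≤ n - 2) (hd : 1 ≤ d)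
    (L' : Fin (n - 1) → ℕ) (L : Fin (n - 1) → ℕ)
    (hL : L = fun i => L' i + if i.1 = k then 1 else 0)
    (hHF : ∃ F : MvPolynomial
        (((i : Fin (n - 1)) × (Fin (L' i) × Fin (n + 1) × Fin (i.1 + 1))) ⊕
          (Fin (n + 1) × Fin (k + 1))) ℂ,
      F ≠ 0 ∧ ∀ (A : Config n L') (G : Matrix (Fin (n + 1)) (Fin (k + 1)) ℂ),
        FullRank A → G.rank = k + 1 →
        MvPolynomial.eval
          (Sum.elim (fun p => A p.1 p.2.1 p.2.2.1 p.2.2.2) (fun q => G q.1 q.2)) F ≠ 0 →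
        HilbF n d (configSet A ∪ projSet G) =
          HilbF n d (configSet A) + (d + k).choose k)
    (hnum : d * n + 1 < ∑ i : Fin (n - 1), L i * (i.1 + 1)) :
    NonFeasible n L := by
  obtain rfl : L = addWeight L' k := hL
  have hk' : k < n - 1 := by omega
  have hilb_add : GenHoldsPair n k L' fun A G =>
      HilbF n d (configSet A ∪ projSet G) = HilbF n d (configSet A) + (d + k).choose k := hHF
  refine ((hilb_add.and_left genHolds_inGeneralPosition).genHolds_addWeight hk').mono ?_
  rintro B ⟨hH, hpos⟩ ⟨C, hC, hmax⟩
  have bezout : ∑ i, L' i * (i.1 + 1) + k ≤ d * n :=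
    hC.sum_mul_add_le_of_maxIntersects (by omega) (by omega) hH hpos (fun i j => hmax i _)
      (hmax _ _)
  rw [sum_addWeight_mul hk' (· + 1)] at hnum
  omega

end
end
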